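/- arXiv:1302.3961 — 3 statements merged into one kernel-verified Lean document; each statement's English description precedes it below -/
import Mathlib

section
/- Let n ≥ 1 and p > n. There exists a constant C = C(n,p) > 0 such that for every domain Ω ⊂ ℝⁿ containing the origin and having finite Lebesgue measure Lⁿ(Ω), and for every u ∈ C_c^∞(Ω \ {0}), one has sup_{x ∈ Ω} |u(x)| ≤ C · (Lⁿ(Ω))^{1/n − 1/p} · ( ∫_Ω |∇u|^p dx − ((p−n)/p)^p ∫_Ω |u(x)|^p / |x|^p dx )^{1/p}. -/
open MeasureTheory Metric Set

noncomputable def hsR {E : Type*} [NormedAddCommGroup E] [InnerProductSpace ℝ E] (p : ℝ) (A X : E) : ℝ :=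
  ‖X‖ ^ p + (p - 1) * ‖A‖ ^ p - p * ‖A‖ ^ (p - 2) * inner ℝ A X

section ptwise
variable {E : Type*} [NormedAddCommGroup E] [InnerProductSpace ℝ E]

lemma hs_scalar {p : ℝ} (hp : 1 < p) {s t : ℝ} (hs : 0 < s) (ht : 0 ≤ t) (hst : t ≠ s) :
    0 < t ^ p + (p - 1) * s ^ p - p * s ^ (p - 2) * (s * t) := by
  have h := one_add_mul_self_lt_rpow_one_add (s := t / s - 1) (by
    have : 0 ≤ t / s := by positivity
    linarith) (by
      intro h
      apply hst
      have : t / s = 1 := by linarith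
      rwa [div_eq_one_iff_eq hs.ne'] at this) hp
  have e1 : (1 + (t / s - 1)) = t / s := by ring
  rw [e1, Real.div_rpow ht hs.le, lt_div_iff₀ (by positivity)] at h
  have e2 : s ^ (p - 2) = s ^ p / s ^ 2 := by
    rw [Real.rpow_sub hs]; norm_num
  rw [e2]
  have e3 : p * (s ^ p / s ^ 2) * (s * t) = p * (t / s) * s ^ p := by field_simp
  rw [e3]
  nlinarith

lemma hsR_self {p : ℝ} (hp : 1 < p) (A : E) : hsR p A A = 0 := by
  unfold hsR
  by_cases hA : A = 0
  · subst hA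
    simp [Real.zero_rpow (by linarith : p ≠ 0)]
  · have h : 0 < ‖A‖ := norm_pos_iff.mpr hA
    rw [real_inner_self_eq_norm_sq, mul_assoc]
    have e2 : ‖A‖ ^ (p - 2) * ‖A‖ ^ 2 = ‖A‖ ^ p := by
      rw [← Real.rpow_natCast, ← Real.rpow_add h]; norm_num
    rw [e2]; ring

lemma hsR_pos {p : ℝ} (hp : 1 < p) {A X : E} (h : X ≠ A) : 0 < hsR p A X := by
  unfold hsR
  by_cases hA : A = 0
  · subst hA
    have : 0 < ‖X‖ := norm_pos_iff.mpr h
    simp only [norm_zero, Real.zero_rpow (by linarith : p ≠ 0), inner_zero_left]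
    simp
    positivity
  have hA' : 0 < ‖A‖ := norm_pos_iff.mpr hA
  have hp2 : 0 < ‖A‖ ^ (p - 2) := by positivity
  by_cases hn : ‖X‖ = ‖A‖
  · have h1 : 0 < ‖X - A‖ ^ 2 := by
      have : 0 < ‖X - A‖ := norm_pos_iff.mpr (sub_ne_zero.mpr h)
      positivity
    rw [norm_sub_sq_real, hn, real_inner_comm] at h1
    have e2 : ‖A‖ ^ (p - 2) * ‖A‖ ^ 2 = ‖A‖ ^ p := by
      rw [← Real.rpow_natCast, ← Real.rpow_add hA']; norm_num
    rw [hn, ← e2]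
    have : 0 < p * ‖A‖ ^ (p - 2) * (‖A‖ ^ 2 - inner ℝ A X) := by
      apply mul_pos (by positivity); linarith
    linarith
  · have h1 := hs_scalar hp hA' (norm_nonneg X) hn
    have h2 := real_inner_le_norm A X
    have : p * ‖A‖ ^ (p - 2) * inner ℝ A X ≤ p * ‖A‖ ^ (p - 2) * (‖A‖ * ‖X‖) := by gcongr
    linarith

lemma hsR_nonneg {p : ℝ} (hp : 1 < p) (A X : E) : 0 ≤ hsR p A X := by
  by_cases h : X = A
  · rw [h, hsR_self hp]
  · exact (hsR_pos hp h).le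

lemma hsR_cont {p : ℝ} (hp : 1 < p) : Continuous (fun z : E × E => hsR p z.1 z.2) := by
  have h1 : Continuous (fun x : E => fderiv ℝ (fun x : E => ‖x‖ ^ p) x) :=
    (contDiff_norm_rpow hp).continuous_fderiv one_ne_zero
  have h2 : Continuous (fun z : E × E => fderiv ℝ (fun x : E => ‖x‖ ^ p) z.1 z.2) :=
    (h1.comp continuous_fst).clm_apply continuous_snd
  have h3 : Continuous (fun x : E => ‖x‖ ^ p) :=
    continuous_norm.rpow_const (fun _ => Or.inr (by linarith))
  have h4 : (fun z : E × E => hsR p z.1 z.2) = fun z => ‖z.2‖ ^ p + (p - 1) * ‖z.1‖ ^ p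
      - fderiv ℝ (fun x : E => ‖x‖ ^ p) z.1 z.2 := by
    ext z
    rw [fderiv_norm_rpow _ hp]
    simp [hsR]
  rw [h4]
  exact ((h3.comp continuous_snd).add (continuous_const.mul (h3.comp continuous_fst))).sub h2

lemma hsR_smul {p : ℝ} (A X : E) {t : ℝ} (ht : 0 < t) :
    hsR p (t • A) (t • X) = t ^ p * hsR p A X := by
  unfold hsR
  simp only [norm_smul, Real.norm_eq_abs, abs_of_pos ht, inner_smul_left, inner_smul_right,
    Real.mul_rpow ht.le (norm_nonneg _)]
  have e2 : t ^ (p - 2) * (t * t) = t ^ p := by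
    rw [← sq, ← Real.rpow_natCast, ← Real.rpow_add ht]; norm_num
  rw [← e2]
  simp
  ring

lemma hsR_lower [FiniteDimensional ℝ E] {p : ℝ} (hp : 1 < p) {D : ℝ} :
    ∃ c : ℝ, 0 < c ∧ ∀ A X : E, ‖A‖ ≤ D * ‖X - A‖ → c * ‖X - A‖ ^ p ≤ hsR p A X := by
  let K : Set (E × E) := closedBall 0 D ×ˢ sphere 0 1
  have hK : IsCompact K := (isCompact_closedBall 0 D).prod (isCompact_sphere 0 1)
  have hc : Continuous (fun z : E × E => hsR p z.1 (z.1 + z.2)) :=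
    (hsR_cont hp).comp (continuous_fst.prodMk (continuous_fst.add continuous_snd))
  obtain ⟨c, hc0, hcK⟩ : ∃ c : ℝ, 0 < c ∧ ∀ z ∈ K, c ≤ hsR p z.1 (z.1 + z.2) := by
    rcases K.eq_empty_or_nonempty with h | h
    · exact ⟨1, one_pos, by simp [h]⟩
    · obtain ⟨z, hz, hm⟩ := hK.exists_isMinOn h hc.continuousOn
      refine ⟨_, ?_, fun w hw => hm hw⟩
      apply hsR_pos hp
      intro h
      have h2 : z.2 = 0 := by simpa using h
      have := hz.2
      simp [h2] at this
  refine ⟨c, hc0, fun A X h => ?_⟩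
  by_cases hX : X = A
  · simp [hX, hsR_self hp, Real.zero_rpow (by linarith : p ≠ 0)]
  have ht : 0 < ‖X - A‖ := norm_pos_iff.mpr (sub_ne_zero.mpr hX)
  have := hcK (‖X - A‖⁻¹ • A, ‖X - A‖⁻¹ • (X - A)) (by
    refine ⟨?_, ?_⟩
    · simp [norm_smul]
      rw [inv_mul_le_iff₀ ht]; linarith
    · simp [norm_smul]
      field_simp)
  simp only [← smul_add, add_sub_cancel] at this
  rw [hsR_smul _ _ (inv_pos.mpr ht), Real.inv_rpow ht.le, le_inv_mul_iff₀ (by positivity)] at this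
  linarith
end ptwise

lemma hs_euler {n : ℕ} {g : EuclideanSpace ℝ (Fin n) → ℝ} (hg : ContDiff ℝ 1 g)
    (hc : HasCompactSupport g) : ∫ y, fderiv ℝ g y y = -(n : ℝ) * ∫ y, g y := by
  have hgc := hg.continuous
  have hg' : Continuous (fderiv ℝ g) := hg.continuous_fderiv one_ne_zero
  have key : ∀ i : Fin n, Integrable (fun y : EuclideanSpace ℝ (Fin n) =>
      y i * fderiv ℝ g y (EuclideanSpace.single i 1)) := fun i => by
    apply Continuous.integrable_of_hasCompactSupport
    · fun_prop
    · exact (hc.fderiv_apply (𝕜 := ℝ) _).mul_left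
  have e : ∀ y : EuclideanSpace ℝ (Fin n), fderiv ℝ g y y =
      ∑ i, y i * fderiv ℝ g y (EuclideanSpace.single i 1) := fun y => by
    have : y = ∑ i, y i • EuclideanSpace.single i (1 : ℝ) := by
      ext j
      simp [Pi.single_apply]
    have h2 := congrArg (fderiv ℝ g y) this
    rw [map_sum] at h2
    rw [h2]
    simp
  simp_rw [e]
  rw [integral_finsetSum _ (fun i _ => key i)]
  have : ∀ i : Fin n, ∫ y : EuclideanSpace ℝ (Fin n),
      y i * fderiv ℝ g y (EuclideanSpace.single i 1) = - ∫ y, g y := fun i => by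
    have hfd : ∀ y : EuclideanSpace ℝ (Fin n),
      HasFDerivAt (fun y : EuclideanSpace ℝ (Fin n) => y i) (EuclideanSpace.proj i : _ →L[ℝ] ℝ) y :=
        fun y => (EuclideanSpace.proj (𝕜 := ℝ) i).hasFDerivAt
    have hfd' : ∀ y : EuclideanSpace ℝ (Fin n),
      fderiv ℝ (fun y : EuclideanSpace ℝ (Fin n) => y i) y (EuclideanSpace.single i 1) = 1 :=
        fun y => by rw [(hfd y).fderiv]; simp
    rw [integral_mul_fderiv_eq_neg_fderiv_mul_of_integrable]
    · simp_rw [hfd', one_mul]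
    · simp_rw [hfd', one_mul]
      exact hgc.integrable_of_hasCompactSupport hc
    · exact key i
    · apply Continuous.integrable_of_hasCompactSupport
      · fun_prop
      · exact hc.mul_left
    · intro y _; exact (hfd y).differentiableAt
    · intro y _; exact hg.differentiable one_ne_zero y
  simp [this]


section gs
variable {n : ℕ} {u : EuclideanSpace ℝ (Fin n) → ℝ}

lemma hs_cont {F : Type*} [NormedAddCommGroup F] (h0 : (0 : EuclideanSpace ℝ (Fin n)) ∉ tsupport u)
    {f : EuclideanSpace ℝ (Fin n) → F}
    (hf : ∀ y ∉ tsupport u, f y = 0) (h : ∀ y, y ≠ 0 → ContinuousAt f y) : Continuous f := by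
  rw [continuous_iff_continuousAt]
  intro y
  by_cases hy : y = 0
  · subst hy
    have : f =ᶠ[nhds 0] fun _ => 0 := by
      filter_upwards [(isClosed_tsupport u).isOpen_compl.mem_nhds h0] with z hz using hf z hz
    exact continuousAt_const.congr this.symm
  · exact h y hy

/-- the Hardy density -/
noncomputable def hsg (u : EuclideanSpace ℝ (Fin n) → ℝ) (q : ℝ) (y : EuclideanSpace ℝ (Fin n)) : ℝ :=
  |u y| ^ q / ‖y‖ ^ q

noncomputable def hsA (u : EuclideanSpace ℝ (Fin n) → ℝ) (a : ℝ) (y : EuclideanSpace ℝ (Fin n)) :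
    EuclideanSpace ℝ (Fin n) := (a * u y / ‖y‖ ^ 2) • y

lemma hsg_zero {q : ℝ} (hq : 1 < q) {y : EuclideanSpace ℝ (Fin n)} (hy : u y = 0) :
    hsg u q y = 0 := by
  simp [hsg, hy, Real.zero_rpow (by linarith : q ≠ 0)]

lemma hsg_hasFDerivAt (hu : ContDiff ℝ 1 u) {q : ℝ} (hq : 1 < q) {y : EuclideanSpace ℝ (Fin n)}
    (hy : y ≠ 0) : fderiv ℝ (hsg u q) y y =
      q * |u y| ^ (q - 2) * u y * fderiv ℝ u y y / ‖y‖ ^ q - q * hsg u q y := by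
  have hy' : 0 < ‖y‖ := norm_pos_iff.mpr hy
  have h1 := (hasDerivAt_abs_rpow (u y) hq).comp_hasFDerivAt y
    (hu.differentiable one_ne_zero y).hasFDerivAt
  have h2 := hasFDerivAt_norm_rpow y hq
  have h3 := (hasDerivAt_inv (x := ‖y‖ ^ q) (by positivity)).comp_hasFDerivAt y h2
  have h4 := h1.mul h3
  have h5 : hsg u q = ((fun x => |x| ^ q) ∘ u) * (Inv.inv ∘ fun x => ‖x‖ ^ q) := by
    ext z; simp [hsg, div_eq_mul_inv]
  rw [h5, h4.fderiv]
  have e2 : ‖y‖ ^ (q - 2) * ‖y‖ ^ 2 = ‖y‖ ^ q := by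
    rw [← Real.rpow_natCast, ← Real.rpow_add hy']; norm_num
  simp
  rw [mul_assoc q (‖y‖ ^ (q - 2)), e2]
  field_simp
  ring

lemma hsg_contDiff (hu : ContDiff ℝ 1 u) (h0 : (0 : EuclideanSpace ℝ (Fin n)) ∉ tsupport u)
    {q : ℝ} (hq : 1 < q) : ContDiff ℝ 1 (hsg u q) := by
  rw [contDiff_iff_contDiffAt]
  intro y
  by_cases hy : y = 0
  · subst hy
    have : hsg u q =ᶠ[nhds 0] fun _ => 0 := by
      filter_upwards [(isClosed_tsupport u).isOpen_compl.mem_nhds h0] with z hz using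
        hsg_zero hq (image_eq_zero_of_notMem_tsupport hz)
    exact contDiffAt_const.congr_of_eventuallyEq this
  · have h1 : ContDiff ℝ 1 (fun y => |u y| ^ q) := by
      simpa using hu.norm_rpow hq
    exact h1.contDiffAt.div (contDiff_norm_rpow hq).contDiffAt
      (by have := norm_pos_iff.mpr hy; positivity)

lemma hsg_compact (hc : HasCompactSupport u) {q : ℝ} (hq : 1 < q) :
    HasCompactSupport (hsg u q) :=
  hc.mono' (fun y hy => subset_closure (fun h => hy (hsg_zero hq h)))

lemma hsA_zero {a : ℝ} {y : EuclideanSpace ℝ (Fin n)} (hy : u y = 0) :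
    hsA u a y = 0 := by
  simp [hsA, hy]

lemma hsA_cont (hu : ContDiff ℝ 1 u) (h0 : (0 : EuclideanSpace ℝ (Fin n)) ∉ tsupport u)
    (a : ℝ) : Continuous (hsA u a) := by
  apply hs_cont h0
  · intro y hy; exact hsA_zero (image_eq_zero_of_notMem_tsupport hy)
  · intro y hy
    have := norm_pos_iff.mpr hy
    have := hu.continuous
    unfold hsA
    have h2 : ContinuousAt (fun y => a * u y / ‖y‖ ^ 2) y := by
      apply ContinuousAt.div <;> first | fun_prop | positivity
    exact h2.smul continuousAt_id

lemma hsA_norm {a : ℝ} (ha : 0 ≤ a) (y : EuclideanSpace ℝ (Fin n)) :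
    ‖hsA u a y‖ = a * (|u y| / ‖y‖) := by
  by_cases hy : y = 0
  · simp [hy, hsA]
  · have := norm_pos_iff.mpr hy
    simp [hsA, norm_smul, abs_of_nonneg ha]
    field_simp

lemma hsA_norm_rpow {a q : ℝ} (ha : 0 ≤ a) (y : EuclideanSpace ℝ (Fin n)) :
    ‖hsA u a y‖ ^ q = a ^ q * hsg u q y := by
  rw [hsA_norm ha, Real.mul_rpow ha (by positivity), Real.div_rpow (by positivity) (by positivity),
    hsg]

lemma hs_gs_id (hu : ContDiff ℝ 1 u) (hu0 : u 0 = 0) {p : ℝ} (hp : 1 < p) {a : ℝ}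
    (ha : 0 < a) (hpa : p * a = p - n)
    (y : EuclideanSpace ℝ (Fin n)) :
    hsR p (hsA u a y) (gradient u y) =
      ‖fderiv ℝ u y‖ ^ p - a ^ p * hsg u p y
       - a ^ (p - 1) * (fderiv ℝ (hsg u p) y y + n * hsg u p y) := by
  have hG : ‖gradient u y‖ = ‖fderiv ℝ u y‖ := by simp [gradient]
  unfold hsR
  rw [hG, hsA_norm_rpow ha.le]
  by_cases huy : u y = 0
  · rw [hsA_zero huy, hsg_zero hp huy]
    by_cases hy : y = 0
    · subst hy; simp
    · rw [hsg_hasFDerivAt hu hp hy, hsg_zero hp huy, huy]; simp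
  have hy : y ≠ 0 := by rintro rfl; exact huy hu0
  have hy' := norm_pos_iff.mpr hy
  have hu' := abs_pos.mpr huy
  rw [hsg_hasFDerivAt hu hp hy, hsA_norm ha.le, Real.mul_rpow ha.le (by positivity),
    Real.div_rpow (by positivity) (by positivity), hsA, inner_smul_left, real_inner_comm,
    inner_gradient_left]
  have e2 : ‖y‖ ^ p = ‖y‖ ^ (p - 2) * ‖y‖ ^ 2 := by
    rw [← Real.rpow_natCast, ← Real.rpow_add hy']; norm_num
  have e3 : a ^ (p - 1) = a ^ (p - 2) * a := by
    rw [← Real.rpow_add_one ha.ne']; ring_nf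
  have e4 : a ^ p = a ^ (p - 1) * a := by
    rw [← Real.rpow_add_one ha.ne']; ring_nf
  have e5 : (n : ℝ) = p - p * a := by linarith
  rw [e5, e4]
  have e6 : p * (a ^ (p - 2) * (|u y| ^ (p - 2) / ‖y‖ ^ (p - 2))) *
     ((starRingEnd ℝ) (a * u y / ‖y‖ ^ 2) * (fderiv ℝ u y) y) =
      a ^ (p - 1) * (p * |u y| ^ (p - 2) * u y * fderiv ℝ u y y / ‖y‖ ^ p) := by
    rw [e2, e3]
    simp
    field_simp
  rw [e6]
  ring

lemma hs_young {q κ : ℝ} (hq : 1 < q) (hκ : 0 < κ) {s b : ℝ} (hs : 0 ≤ s) (hb : 0 ≤ b) :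
    q * s ^ (q - 1) * b ≤ κ / 2 * s ^ q + q * (2 * q / κ) ^ (q - 1) * b ^ q := by
  have key : ∀ x : ℝ, 0 ≤ x → x ^ q = x ^ (q - 1) * x := fun x hx => by
    rw [← Real.rpow_add_one' hx (by linarith)]; ring_nf
  rw [key s hs, key b hb]
  by_cases h : q * b ≤ κ / 2 * s
  · have h1 : s ^ (q - 1) * (q * b) ≤ s ^ (q - 1) * (κ / 2 * s) := by gcongr
    have : 0 ≤ q * (2 * q / κ) ^ (q - 1) * (b ^ (q - 1) * b) := by positivity
    linarith
  · push Not at h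
    have h1 : s ≤ (2 * q / κ) * b := by
      rw [div_mul_eq_mul_div, le_div_iff₀ hκ]; linarith
    have h2 : s ^ (q - 1) ≤ (2 * q / κ) ^ (q - 1) * b ^ (q - 1) := by
      rw [← Real.mul_rpow (by positivity) hb]
      exact Real.rpow_le_rpow hs h1 (by linarith)
    have h3 : s ^ (q - 1) * (q * b) ≤ ((2 * q / κ) ^ (q - 1) * b ^ (q - 1)) * (q * b) := by gcongr
    have : 0 ≤ κ / 2 * (s ^ (q - 1) * s) := by positivity
    linarith

lemma hs_hardy_ptwise (hu : ContDiff ℝ 1 u) (hu0 : u 0 = 0) {q : ℝ} (hq : 1 < q) {a κ : ℝ}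
    (hκ : 0 < κ) (hqa : κ = q * a - q + n)
    (y : EuclideanSpace ℝ (Fin n)) :
    κ / 2 * hsg u q y ≤ (fderiv ℝ (hsg u q) y y + n * hsg u q y) +
      q * (2 * q / κ) ^ (q - 1) * ‖gradient u y - hsA u a y‖ ^ q := by
  by_cases huy : u y = 0
  · have : fderiv ℝ (hsg u q) y y = 0 := by
      by_cases hy : y = 0
      · subst hy; simp
      · rw [hsg_hasFDerivAt hu hq hy, hsg_zero hq huy, huy]; simp
    rw [this, hsg_zero hq huy]
    simp only [mul_zero, add_zero, zero_add]
    positivity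
  have hy : y ≠ 0 := by rintro rfl; exact huy hu0
  have hy' := norm_pos_iff.mpr hy
  have hu' := abs_pos.mpr huy
  have h1 := hs_young hq hκ (s := |u y| / ‖y‖) (b := ‖gradient u y - hsA u a y‖)
    (by positivity) (by positivity)
  have h2 : fderiv ℝ u y y = inner ℝ (gradient u y - hsA u a y) y + a * u y := by
    rw [inner_sub_left, inner_gradient_left, hsA, inner_smul_left, real_inner_self_eq_norm_sq]
    simp
    field_simp
    ring
  have h3 : |inner ℝ (gradient u y - hsA u a y) y| ≤ ‖gradient u y - hsA u a y‖ * ‖y‖ :=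
    abs_real_inner_le_norm _ _
  set b := ‖gradient u y - hsA u a y‖
  set w := inner ℝ (gradient u y - hsA u a y) y
  rw [Real.div_rpow (by positivity) (by positivity) (z := q)] at h1
  have e2 : ‖y‖ ^ q = ‖y‖ ^ (q - 1) * ‖y‖ := by
    rw [← Real.rpow_add_one hy'.ne']; ring_nf
  have e3 : |u y| ^ (q - 1) = |u y| ^ (q - 2) * |u y| := by
    rw [← Real.rpow_add_one hu'.ne']; ring_nf
  have e4 : |u y| ^ q = |u y| ^ (q - 2) * (u y * u y) := by
    rw [← sq, ← sq_abs, ← Real.rpow_natCast, ← Real.rpow_add hu']; norm_num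
  have h4 : q * |u y| ^ (q - 2) * u y * fderiv ℝ u y y / ‖y‖ ^ q =
     q * (|u y| ^ (q - 2) / ‖y‖ ^ q) * (u y * w) + q * a * hsg u q y := by
    rw [h2, hsg, e4]; ring
  have h5 : -(|u y| * (b * ‖y‖)) ≤ u y * w := by
    have : |u y * w| ≤ |u y| * (b * ‖y‖) := by rw [abs_mul]; gcongr
    exact (abs_le.mp this).1
  have h6 : q * (|u y| ^ (q - 2) / ‖y‖ ^ q) * -(|u y| * (b * ‖y‖)) ≤
     q * (|u y| ^ (q - 2) / ‖y‖ ^ q) * (u y * w) := by gcongr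
  have h7 : q * (|u y| ^ (q - 2) / ‖y‖ ^ q) * -(|u y| * (b * ‖y‖)) =
     - (q * (|u y| / ‖y‖) ^ (q - 1) * b) := by
    rw [Real.div_rpow (by positivity) (by positivity), e3, e2]
    field_simp
  rw [hsg_hasFDerivAt hu hq hy, h4]
  rw [h7] at h6
  have h8 : |u y| ^ q / ‖y‖ ^ q = hsg u q y := rfl
  rw [h8] at h1
  subst hqa
  linarith
end gs


lemma hs_grad (n : ℕ) (hn : 1 ≤ n) (p q : ℝ) (hnq : (n : ℝ) < q) (hqp : q < p) :
    ∃ C : ℝ, 0 < C ∧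
      ∀ Ω : Set (EuclideanSpace ℝ (Fin n)), IsOpen Ω → volume Ω ≠ ⊤ →
        ∀ u : EuclideanSpace ℝ (Fin n) → ℝ, ContDiff ℝ 1 u →
          HasCompactSupport u → tsupport u ⊆ Ω \ {0} →
          0 ≤ ((∫ y in Ω, ‖fderiv ℝ u y‖ ^ p)
                - ((p - n) / p) ^ p * ∫ y in Ω, |u y| ^ p / ‖y‖ ^ p) ∧
          ∫ y, ‖fderiv ℝ u y‖ ^ q ≤ C * (volume Ω).toReal ^ (1 - q / p) *
              ((∫ y in Ω, ‖fderiv ℝ u y‖ ^ p)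
                - ((p - n) / p) ^ p * ∫ y in Ω, |u y| ^ p / ‖y‖ ^ p) ^ (q / p) := by
  have hn1 : (1 : ℝ) ≤ n := by exact_mod_cast hn
  have hq1 : 1 < q := by linarith
  have hp1 : 1 < p := by linarith
  have hp0 : 0 < p := by linarith
  have hq0 : 0 < q := by linarith
  obtain ⟨a, ha_def⟩ : ∃ a : ℝ, a = (p - n) / p := ⟨_, rfl⟩
  have ha : 0 < a := by rw [ha_def]; apply div_pos <;> linarith
  have hpa : p * a = p - n := by rw [ha_def]; field_simp
  obtain ⟨κ, hκ_def⟩ : ∃ κ : ℝ, κ = q * a - q + n := ⟨_, rfl⟩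
  have hκ : 0 < κ := by
    have : p * κ = n * (p - q) := by rw [hκ_def]; linear_combination q * hpa
    have h2 : 0 < p * κ := by rw [this]; apply mul_pos <;> linarith
    exact (mul_pos_iff_of_pos_left hp0).mp h2
  obtain ⟨K, hK_def⟩ : ∃ K : ℝ, K = a ^ q * (2 / κ * (q * (2 * q / κ) ^ (q - 1))) := ⟨_, rfl⟩
  have hK : 0 < K := by rw [hK_def]; positivity
  obtain ⟨D, hD_def⟩ : ∃ D : ℝ, D = (2 * K) ^ (1 / q) := ⟨_, rfl⟩
  have hD : 0 < D := by rw [hD_def]; positivity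
  have hDq : D ^ q = 2 * K := by
    rw [hD_def, ← Real.rpow_mul (by positivity)]; simp [hq0.ne']
  obtain ⟨c, hc, hcR⟩ := hsR_lower (E := EuclideanSpace ℝ (Fin n)) hp1 (D := D)
  refine ⟨2 ^ q * (K + 1) * (2 * (c⁻¹) ^ (q / p)), by positivity, ?_⟩
  intro Ω hΩ hfin u hu hcs hsup
  have h0 : (0 : EuclideanSpace ℝ (Fin n)) ∉ tsupport u := fun h => (hsup h).2 rfl
  have hu0 : u 0 = 0 := image_eq_zero_of_notMem_tsupport h0
  have hout : ∀ y, y ∉ Ω → y ∉ tsupport u := fun y hy h => hy (hsup h).1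
  have hDz : ∀ y, y ∉ tsupport u → fderiv ℝ u y = 0 := fun y hy =>
    image_eq_zero_of_notMem_tsupport (fun h => hy (tsupport_fderiv_subset ℝ h))
  have huz : ∀ y, y ∉ tsupport u → u y = 0 := fun y hy => image_eq_zero_of_notMem_tsupport hy
  -- helper: integrability
  have hint : ∀ f : EuclideanSpace ℝ (Fin n) → ℝ, Continuous f → (∀ y, y ∉ tsupport u → f y = 0) →
      Integrable f := fun f hf hz => hf.integrable_of_hasCompactSupport
        (HasCompactSupport.intro hcs hz)
  have hset : ∀ f : EuclideanSpace ℝ (Fin n) → ℝ, (∀ y, y ∉ tsupport u → f y = 0) →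
      ∫ y in Ω, f y = ∫ y, f y := fun f hz =>
        setIntegral_eq_integral_of_forall_compl_eq_zero (fun y hy => hz y (hout y hy))
  have hDc : Continuous (fderiv ℝ u) := hu.continuous_fderiv one_ne_zero
  have hGc : Continuous (gradient u) := by
    unfold gradient
    exact (LinearIsometryEquiv.continuous _).comp hDc
  have hGz : ∀ y, y ∉ tsupport u → gradient u y = 0 := fun y hy => by simp [gradient, hDz y hy]
  have hGn : ∀ y, ‖fderiv ℝ u y‖ = ‖gradient u y‖ := fun y => by simp [gradient]
  have hAc := hsA_cont hu h0 a
  have hAz : ∀ y, y ∉ tsupport u → hsA u a y = 0 := fun y hy => hsA_zero (huz y hy)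
  -- continuity & integrability
  have hgi : ∀ s, 1 < s → Integrable (hsg u s) := fun s hs =>
    hint _ (hsg_contDiff hu h0 hs).continuous (fun y hy => hsg_zero hs (huz y hy))
  have hgE : ∀ s, 1 < s → Integrable (fun y => fderiv ℝ (hsg u s) y y + n * hsg u s y) ∧
      ∫ y, (fderiv ℝ (hsg u s) y y + n * hsg u s y) = 0 := fun s hs => by
    have hi : Integrable (fun y => fderiv ℝ (hsg u s) y y) := by
      apply Continuous.integrable_of_hasCompactSupport
      · exact ((hsg_contDiff hu h0 hs).continuous_fderiv one_ne_zero).clm_apply continuous_id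
      · have := (hsg_compact hcs hs).fderiv (𝕜 := ℝ)
        exact this.mono' (fun y hy => subset_closure (fun h => hy (by simp [h])))
    refine ⟨hi.add ((hgi s hs).const_mul _), ?_⟩
    rw [integral_add hi ((hgi s hs).const_mul _), hs_euler (hsg_contDiff hu h0 hs)
      (hsg_compact hcs hs), integral_const_mul]
    ring
  have hni : ∀ (F : EuclideanSpace ℝ (Fin n) → EuclideanSpace ℝ (Fin n)) (s : ℝ), 1 < s →
      Continuous F → (∀ y, y ∉ tsupport u → F y = 0) → Integrable (fun y => ‖F y‖ ^ s) :=
    fun F s hs hF hz => hint _ (hF.norm.rpow_const (fun _ => Or.inr (by linarith)))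
      (fun y hy => by simp [hz y hy, Real.zero_rpow (by linarith : s ≠ 0)])
  set R : EuclideanSpace ℝ (Fin n) → ℝ := fun y => hsR p (hsA u a y) (gradient u y) with hR
  have hRc : Continuous R := (hsR_cont hp1).comp (hAc.prodMk hGc)
  have hRz : ∀ y, y ∉ tsupport u → R y = 0 := fun y hy => by
    simp only [hR, hAz y hy, hGz y hy]; exact hsR_self hp1 _
  have hRn : ∀ y, 0 ≤ R y := fun y => hsR_nonneg hp1 _ _
  have hI : ((∫ y in Ω, ‖fderiv ℝ u y‖ ^ p)
                - ((p - n) / p) ^ p * ∫ y in Ω, |u y| ^ p / ‖y‖ ^ p) = ∫ y, R y := by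
    rw [← ha_def]
    change _ - a ^ p * ∫ y in Ω, hsg u p y = _
    rw [hset _ (fun y hy => hsg_zero hp1 (huz y hy)), hset _ (fun y hy => by
      simp [hDz y hy, Real.zero_rpow hp0.ne'])]
    simp_rw [hR, hs_gs_id hu hu0 hp1 ha hpa]
    simp_rw [hGn]
    rw [integral_sub, integral_sub, integral_const_mul, integral_const_mul, (hgE p hp1).2]
    · ring
    · exact hni _ p hp1 hGc hGz
    · exact (hgi p hp1).const_mul _
    · exact (hni _ p hp1 hGc hGz).sub ((hgi p hp1).const_mul _)
    · exact (hgE p hp1).1.const_mul _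
  rw [hI]
  refine ⟨integral_nonneg hRn, ?_⟩
  simp_rw [hGn]
  have hBc : Continuous (fun y => gradient u y - hsA u a y) := hGc.sub hAc
  have hBi : Integrable (fun y => ‖gradient u y - hsA u a y‖ ^ q) :=
    hni _ q hq1 hBc (fun y hy => by simp [hAz y hy, hGz y hy])
  have hAi : Integrable (fun y => ‖hsA u a y‖ ^ q) := hni _ q hq1 hAc hAz
  have hGi : Integrable (fun y => ‖gradient u y‖ ^ q) := hni _ q hq1 hGc hGz
  have hRq : Continuous (fun y => R y ^ (q / p)) :=
    hRc.rpow_const (fun _ => Or.inr (by positivity))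
  have hRqz : ∀ y, y ∉ tsupport u → R y ^ (q / p) = 0 := fun y hy => by
    rw [hRz y hy, Real.zero_rpow (by positivity)]
  have hRi : Integrable (fun y => R y ^ (q / p)) := hint _ hRq hRqz
  -- step iii
  have h3 : ∫ y, ‖hsA u a y‖ ^ q ≤ K * ∫ y, ‖gradient u y - hsA u a y‖ ^ q := by
    have h := integral_mono ((hgi q hq1).const_mul (κ / 2))
      ((hgE q hq1).1.add (hBi.const_mul (q * (2 * q / κ) ^ (q - 1))))
      (fun y => hs_hardy_ptwise hu hu0 hq1 hκ hκ_def y)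
    simp only [Pi.add_apply] at h
    rw [integral_const_mul, integral_add (hgE q hq1).1 (hBi.const_mul _), (hgE q hq1).2,
      integral_const_mul, zero_add] at h
    simp_rw [hsA_norm_rpow ha.le]
    rw [integral_const_mul, hK_def, mul_assoc, mul_assoc]
    gcongr
    rw [div_mul_eq_mul_div, le_div_iff₀ hκ]
    linarith
  -- step iv
  have h4 : ∀ y, ‖gradient u y - hsA u a y‖ ^ q ≤
      (2 * K)⁻¹ * ‖hsA u a y‖ ^ q + (c⁻¹) ^ (q / p) * R y ^ (q / p) := by
    intro y
    by_cases h : ‖hsA u a y‖ ≤ D * ‖gradient u y - hsA u a y‖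
    · have h1 := hcR _ _ h
      have h2 : ‖gradient u y - hsA u a y‖ ^ p ≤ c⁻¹ * R y := by
        rw [le_inv_mul_iff₀ hc]; exact h1
      have h3 := Real.rpow_le_rpow (by positivity) h2 (by positivity : 0 ≤ q / p)
      rw [← Real.rpow_mul (norm_nonneg _), mul_div_cancel₀ _ hp0.ne',
        Real.mul_rpow (by positivity) (hRn y)] at h3
      have : 0 ≤ (2 * K)⁻¹ * ‖hsA u a y‖ ^ q := by positivity
      linarith
    · push Not at h
      have h1 := Real.rpow_le_rpow (by positivity) h.le hq0.le
      rw [Real.mul_rpow hD.le (norm_nonneg _), hDq] at h1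
      have h2 : ‖gradient u y - hsA u a y‖ ^ q ≤ (2 * K)⁻¹ * ‖hsA u a y‖ ^ q := by
        rw [le_inv_mul_iff₀ (by positivity)]; exact h1
      have : 0 ≤ (c⁻¹) ^ (q / p) * R y ^ (q / p) :=
        mul_nonneg (by positivity) (Real.rpow_nonneg (hRn y) _)
      linarith
  have h5 : ∫ y, ‖gradient u y - hsA u a y‖ ^ q ≤ 2 * (c⁻¹) ^ (q / p) * ∫ y, R y ^ (q / p) := by
    have h := integral_mono hBi ((hAi.const_mul (2 * K)⁻¹).add (hRi.const_mul ((c⁻¹) ^ (q / p)))) h4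
    simp only [Pi.add_apply] at h
    rw [integral_add (hAi.const_mul _) (hRi.const_mul _), integral_const_mul,
      integral_const_mul] at h
    have h' : (2 * K)⁻¹ * ∫ y, ‖hsA u a y‖ ^ q ≤
      (2 * K)⁻¹ * (K * ∫ y, ‖gradient u y - hsA u a y‖ ^ q) := by gcongr
    have e : (2 * K)⁻¹ * (K * ∫ y, ‖gradient u y - hsA u a y‖ ^ q) =
      (1 / 2) * ∫ y, ‖gradient u y - hsA u a y‖ ^ q := by field_simp
    linarith
  -- step v, Hölder
  have h6 : ∫ y, R y ^ (q / p) ≤ (volume Ω).toReal ^ (1 - q / p) * (∫ y, R y) ^ (q / p) := by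
    have hconj : (p / q).HolderConjugate (p / q).conjExponent :=
      Real.HolderConjugate.conjExponent ((one_lt_div hq0).mpr hqp)
    have : IsFiniteMeasure (volume.restrict Ω) := ⟨by simpa using hfin.lt_top⟩
    have h := integral_mul_le_Lp_mul_Lq_of_nonneg (μ := volume.restrict Ω) hconj
      (f := fun y => R y ^ (q / p)) (g := fun _ => 1)
      (Filter.Eventually.of_forall (fun y => Real.rpow_nonneg (hRn y) _))
      (Filter.Eventually.of_forall (fun y => zero_le_one))
      ((hRq.memLp_of_hasCompactSupport (HasCompactSupport.intro hcs hRqz)).restrict Ω)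
      (memLp_const 1)
    simp only [mul_one, Real.one_rpow] at h
    have e1 : ∀ y, (R y ^ (q / p)) ^ (p / q) = R y := fun y => by
      rw [← Real.rpow_mul (hRn y)]
      have : q / p * (p / q) = 1 := by field_simp
      rw [this, Real.rpow_one]
    simp_rw [e1] at h
    rw [hset _ hRqz, hset _ hRz] at h
    have e2 : 1 / (p / q) = q / p := by field_simp
    have e3 : 1 / (p / q).conjExponent = 1 - q / p := by
      have := hconj.one_sub_inv
      rw [one_div, ← this, inv_div]
    rw [e2, e3] at h
    simp [Measure.real] at h
    linarith
  -- step vi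
  have h7 : ∀ y, ‖gradient u y‖ ^ q ≤ 2 ^ q * (‖hsA u a y‖ ^ q + ‖gradient u y - hsA u a y‖ ^ q) := by
    intro y
    have h1 : ‖gradient u y‖ ≤ 2 * max ‖hsA u a y‖ ‖gradient u y - hsA u a y‖ := by
      have h := norm_add_le (hsA u a y) (gradient u y - hsA u a y)
      rw [add_sub_cancel] at h
      have := le_max_left ‖hsA u a y‖ ‖gradient u y - hsA u a y‖
      have := le_max_right ‖hsA u a y‖ ‖gradient u y - hsA u a y‖
      linarith
    have h2 := Real.rpow_le_rpow (norm_nonneg _) h1 hq0.le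
    rw [Real.mul_rpow (by norm_num) (by positivity)] at h2
    refine h2.trans ?_
    gcongr
    have := Real.rpow_nonneg (norm_nonneg (hsA u a y)) q
    have := Real.rpow_nonneg (norm_nonneg (gradient u y - hsA u a y)) q
    rcases max_choice ‖hsA u a y‖ ‖gradient u y - hsA u a y‖ with h | h <;> rw [h] <;> linarith
  have h8 := integral_mono hGi ((hAi.add hBi).const_mul (2 ^ q)) h7
  simp only [Pi.add_apply] at h8
  rw [integral_const_mul, integral_add hAi hBi] at h8
  calc _ ≤ _ := h8
    _ ≤ 2 ^ q * (K * (∫ y, ‖gradient u y - hsA u a y‖ ^ q) + ∫ y, ‖gradient u y - hsA u a y‖ ^ q) := by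
        gcongr
    _ = 2 ^ q * (K + 1) * ∫ y, ‖gradient u y - hsA u a y‖ ^ q := by ring
    _ ≤ 2 ^ q * (K + 1) * (2 * (c⁻¹) ^ (q / p) *
        ((volume Ω).toReal ^ (1 - q / p) * (∫ y, R y) ^ (q / p))) := by
        gcongr
        exact h5.trans (by gcongr)
    _ = _ := by ring


lemma hs_ftc {n : ℕ} {u : EuclideanSpace ℝ (Fin n) → ℝ} (hu : ContDiff ℝ 1 u)
    (x y : EuclideanSpace ℝ (Fin n)) {r : ℝ} (hy : ‖y‖ ≤ r) :
    ‖u x‖ₑ ≤ ‖u (x + y)‖ₑ + ENNReal.ofReal r * ∫⁻ t in Ioc (0 : ℝ) 1, ‖fderiv ℝ u (x + t • y)‖ₑ := by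
  have hDc : Continuous (fderiv ℝ u) := hu.continuous_fderiv one_ne_zero
  have h1 : ∀ t : ℝ, HasDerivAt (fun t : ℝ => u (x + t • y)) (fderiv ℝ u (x + t • y) y) t := by
    intro t
    have := (hu.differentiable one_ne_zero (x + t • y)).hasFDerivAt.comp_hasDerivAt t
      (((hasDerivAt_id t).smul_const y).const_add x)
    simp only [id, one_smul] at this
    exact this
  have hc : Continuous (fun t : ℝ => fderiv ℝ u (x + t • y) y) := by fun_prop
  have h2 := intervalIntegral.integral_eq_sub_of_hasDerivAt (a := 0) (b := 1) (fun t _ => h1 t)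
    (hc.intervalIntegrable 0 1)
  rw [intervalIntegral.integral_of_le zero_le_one] at h2
  simp only [one_smul, zero_smul, add_zero] at h2
  have h3 : u x = u (x + y) - (u (x + y) - u x) := by ring
  have h4 : ‖u (x + y) - u x‖ₑ ≤
      ENNReal.ofReal r * ∫⁻ t in Ioc (0 : ℝ) 1, ‖fderiv ℝ u (x + t • y)‖ₑ := by
    rw [← h2, ← lintegral_const_mul' _ _ ENNReal.ofReal_ne_top]
    refine (enorm_integral_le_lintegral_enorm _).trans (lintegral_mono fun t => ?_)
    refine (ContinuousLinearMap.le_opENorm _ _).trans ?_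
    rw [mul_comm]
    gcongr
    rw [← ofReal_norm]
    exact ENNReal.ofReal_le_ofReal hy
  calc ‖u x‖ₑ = ‖u (x + y) - (u (x + y) - u x)‖ₑ := by rw [← h3]
    _ ≤ _ := enorm_sub_le
    _ ≤ _ := by gcongr

lemma hs_scale {n : ℕ} {f : EuclideanSpace ℝ (Fin n) → ENNReal} (hf : Measurable f)
    (x : EuclideanSpace ℝ (Fin n)) {t : ℝ} (ht : 0 < t) :
    ∫⁻ y, f (x + t • y) = ENNReal.ofReal ((t ^ n)⁻¹) * ∫⁻ y, f y := by
  have h1 : ∫⁻ y, f (x + t • y) = ∫⁻ z, f (x + z) ∂(Measure.map (t • ·) volume) := by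
    rw [lintegral_map (by fun_prop) (by fun_prop)]
  rw [h1, Measure.map_addHaar_smul _ ht.ne', lintegral_smul_measure,
    lintegral_add_left_eq_self (fun z => f z) x]
  simp [abs_of_pos ht]

lemma hs_inner {n : ℕ} {q : ℝ} (hq : 1 < q) {u : EuclideanSpace ℝ (Fin n) → ℝ} (hu : ContDiff ℝ 1 u)
    (x : EuclideanSpace ℝ (Fin n)) (r : ℝ) {t : ℝ} (ht : 0 < t) :
    ∫⁻ y in ball 0 r, ‖fderiv ℝ u (x + t • y)‖ₑ ≤
      ENNReal.ofReal (t ^ (-(n / q))) * ((∫⁻ y, ‖fderiv ℝ u y‖ₑ ^ q) ^ (1 / q) *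
        volume (ball (0 : EuclideanSpace ℝ (Fin n)) r) ^ (1 - 1 / q)) := by
  have hDc : Continuous (fderiv ℝ u) := hu.continuous_fderiv one_ne_zero
  have hconj : q.HolderConjugate q.conjExponent := Real.HolderConjugate.conjExponent hq
  have h := ENNReal.lintegral_mul_le_Lp_mul_Lq
    (volume.restrict (ball (0 : EuclideanSpace ℝ (Fin n)) r)) hconj
    (f := fun y => ‖fderiv ℝ u (x + t • y)‖ₑ) (g := fun _ => 1)
    (by
      have : Continuous (fun y => fderiv ℝ u (x + t • y)) := by fun_prop
      exact this.enorm.measurable.aemeasurable) aemeasurable_const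
  have e3 : 1 / q.conjExponent = 1 - 1 / q := by
    have := hconj.one_sub_inv
    rw [one_div, ← this, one_div]
  simp only [Pi.mul_apply, mul_one, ENNReal.one_rpow, lintegral_const, one_mul,
    Measure.restrict_apply_univ, e3] at h
  refine h.trans ?_
  rw [← mul_assoc]
  gcongr
  have h2 : ∫⁻ y in ball 0 r, ‖fderiv ℝ u (x + t • y)‖ₑ ^ q ≤
      ENNReal.ofReal ((t ^ n)⁻¹) * ∫⁻ y, ‖fderiv ℝ u y‖ₑ ^ q := by
    refine (setLIntegral_le_lintegral _ _).trans ?_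
    rw [← hs_scale (f := fun y => ‖fderiv ℝ u y‖ₑ ^ q) _ x ht]
    exact (hDc.enorm.measurable).pow_const q
  refine (ENNReal.rpow_le_rpow h2 (by positivity)).trans ?_
  rw [ENNReal.mul_rpow_of_nonneg _ _ (by positivity)]
  gcongr
  rw [ENNReal.ofReal_rpow_of_pos (by positivity)]
  apply le_of_eq
  congr 1
  rw [← Real.rpow_natCast, ← Real.rpow_neg ht.le, ← Real.rpow_mul ht.le]
  congr 1
  ring

lemma hs_tint {n : ℕ} {q : ℝ} (hnq : (n : ℝ) < q) :
    ∫⁻ t in Ioc (0 : ℝ) 1, ENNReal.ofReal (t ^ (-(n / q))) = ENNReal.ofReal (1 / (1 - n / q)) := by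
  have hq : 0 < q := lt_of_le_of_lt (Nat.cast_nonneg n) hnq
  have h1 : -1 < -(n / q) := by
    have : n / q < 1 := (div_lt_one hq).mpr hnq
    linarith
  have hi := (intervalIntegral.intervalIntegrable_rpow' (a := 0) (b := 1) h1)
  rw [intervalIntegrable_iff_integrableOn_Ioc_of_le zero_le_one] at hi
  rw [← ofReal_integral_eq_lintegral_ofReal hi]
  · rw [← intervalIntegral.integral_of_le zero_le_one, integral_rpow (Or.inl h1),
      Real.one_rpow, Real.zero_rpow (by linarith)]
    congr 1
    ring
  · filter_upwards [ae_restrict_mem measurableSet_Ioc] with t ht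
    exact Real.rpow_nonneg ht.1.le _

lemma hs_morrey_aux {n : ℕ} {q : ℝ} (hq : 1 < q) (hnq : (n : ℝ) < q)
    {Ω : Set (EuclideanSpace ℝ (Fin n))} (hΩ : IsOpen Ω) (hfin : volume Ω ≠ ⊤)
    {u : EuclideanSpace ℝ (Fin n) → ℝ} (hu : ContDiff ℝ 1 u) (hcs : HasCompactSupport u)
    (hsup : tsupport u ⊆ Ω) (x : EuclideanSpace ℝ (Fin n)) (hx : ∀ y, |u y| ≤ |u x|)
    {r : ℝ} (hr : 0 < r) :
    (volume (ball (0 : EuclideanSpace ℝ (Fin n)) r)).toReal * |u x| ≤ |u x| * (volume Ω).toReal +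
      r * (1 / (1 - n / q) * ((∫ y, ‖fderiv ℝ u y‖ ^ q) ^ (1 / q) *
        (volume (ball (0 : EuclideanSpace ℝ (Fin n)) r)).toReal ^ (1 - 1 / q))) := by
  have hDc : Continuous (fderiv ℝ u) := hu.continuous_fderiv one_ne_zero
  have hq0 : 0 < q := by linarith
  set B := ball (0 : EuclideanSpace ℝ (Fin n)) r
  have hB : volume B ≠ ⊤ := measure_ball_lt_top.ne
  have hH : ∫⁻ y, ‖fderiv ℝ u y‖ₑ ^ q = ENNReal.ofReal (∫ y, ‖fderiv ℝ u y‖ ^ q) := by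
    rw [ofReal_integral_eq_lintegral_ofReal]
    · congr 1; ext y
      rw [← ofReal_norm, ENNReal.ofReal_rpow_of_nonneg (norm_nonneg _) hq0.le]
    · apply Continuous.integrable_of_hasCompactSupport
      · exact hDc.norm.rpow_const (fun _ => Or.inr hq0.le)
      · exact (hcs.fderiv (𝕜 := ℝ)).comp_left (g := fun z => ‖z‖ ^ q)
          (by simp [Real.zero_rpow hq0.ne'])
    · exact Filter.Eventually.of_forall fun y => by positivity
  have hH0 : 0 ≤ ∫ y, ‖fderiv ℝ u y‖ ^ q := integral_nonneg fun y => by positivity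
  have h1 : volume B * ‖u x‖ₑ ≤ ‖u x‖ₑ * volume Ω + ENNReal.ofReal r *
      (ENNReal.ofReal (1 / (1 - n / q)) * ((∫⁻ y, ‖fderiv ℝ u y‖ₑ ^ q) ^ (1 / q) *
        volume B ^ (1 - 1 / q))) := by
    calc volume B * ‖u x‖ₑ = ∫⁻ y in B, ‖u x‖ₑ := by
          rw [lintegral_const, Measure.restrict_apply_univ, mul_comm]
      _ ≤ ∫⁻ y in B, (‖u (x + y)‖ₑ + ENNReal.ofReal r *
            ∫⁻ t in Ioc (0 : ℝ) 1, ‖fderiv ℝ u (x + t • y)‖ₑ) := by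
          apply setLIntegral_mono' measurableSet_ball
          intro y hy
          exact hs_ftc hu x y (mem_ball_zero_iff.mp hy).le
      _ = (∫⁻ y in B, ‖u (x + y)‖ₑ) + ENNReal.ofReal r *
            ∫⁻ y in B, ∫⁻ t in Ioc (0 : ℝ) 1, ‖fderiv ℝ u (x + t • y)‖ₑ := by
          rw [lintegral_add_left, lintegral_const_mul' _ _ ENNReal.ofReal_ne_top]
          exact (hu.continuous.comp (continuous_const.add continuous_id)).enorm.measurable
      _ = (∫⁻ y in B, ‖u (x + y)‖ₑ) + ENNReal.ofReal r *
            ∫⁻ t in Ioc (0 : ℝ) 1, ∫⁻ y in B, ‖fderiv ℝ u (x + t • y)‖ₑ := by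
          rw [lintegral_lintegral_swap]
          have : Continuous (fun z : EuclideanSpace ℝ (Fin n) × ℝ => fderiv ℝ u (x + z.2 • z.1)) := by
            fun_prop
          exact this.enorm.measurable.aemeasurable
      _ ≤ _ := by
          gcongr
          · calc ∫⁻ y in B, ‖u (x + y)‖ₑ ≤ ∫⁻ y, ‖u (x + y)‖ₑ := setLIntegral_le_lintegral _ _
              _ = ∫⁻ y, ‖u y‖ₑ := lintegral_add_left_eq_self (fun y => ‖u y‖ₑ) x
              _ ≤ ∫⁻ y, Ω.indicator (fun _ => ‖u x‖ₑ) y := by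
                  apply lintegral_mono
                  intro y
                  by_cases hy : y ∈ Ω
                  · simp only [hy, indicator_of_mem]
                    rw [← ofReal_norm, ← ofReal_norm]
                    exact ENNReal.ofReal_le_ofReal (hx y)
                  · have : u y = 0 := image_eq_zero_of_notMem_tsupport (fun h => hy (hsup h))
                    simp [this]
              _ = ‖u x‖ₑ * volume Ω := lintegral_indicator_const hΩ.measurableSet _
          · rw [← hs_tint hnq, ← lintegral_mul_const _ (by fun_prop)]
            apply setLIntegral_mono' measurableSet_Ioc
            intro t ht
            exact hs_inner hq hu x r ht.1
  have hnq1 : 0 < 1 - n / q := by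
    have : n / q < 1 := (div_lt_one hq0).mpr hnq
    linarith
  have hq1 : 0 ≤ 1 - 1 / q := by
    have : 1 / q < 1 := (div_lt_one hq0).mpr hq
    linarith
  rw [hH, ← ENNReal.ofReal_toReal hB, ← ENNReal.ofReal_toReal hfin, ← ofReal_norm,
    ENNReal.ofReal_rpow_of_nonneg hH0 (by positivity),
    ENNReal.ofReal_rpow_of_nonneg ENNReal.toReal_nonneg hq1,
    ← ENNReal.ofReal_mul (by positivity), ← ENNReal.ofReal_mul (by positivity),
    ← ENNReal.ofReal_mul (by positivity), ← ENNReal.ofReal_mul (by positivity),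
    ← ENNReal.ofReal_mul (by positivity), ← ENNReal.ofReal_add (by positivity) (by positivity),
    ENNReal.ofReal_le_ofReal_iff (by positivity)] at h1
  exact h1

lemma hs_morrey (n : ℕ) (hn : 1 ≤ n) (q : ℝ) (hnq : (n : ℝ) < q) :
    ∃ C : ℝ, 0 < C ∧
      ∀ Ω : Set (EuclideanSpace ℝ (Fin n)), IsOpen Ω → Ω.Nonempty → volume Ω ≠ ⊤ →
        ∀ u : EuclideanSpace ℝ (Fin n) → ℝ, ContDiff ℝ 1 u →
          HasCompactSupport u → tsupport u ⊆ Ω → ∀ x, |u x| ≤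
            C * (volume Ω).toReal ^ (1 / (n : ℝ) - 1 / q) * (∫ y, ‖fderiv ℝ u y‖ ^ q) ^ (1 / q) := by
  have hn1 : (1 : ℝ) ≤ n := by exact_mod_cast hn
  have hq : 1 < q := by linarith
  have hq0 : 0 < q := by linarith
  have hnq1 : 0 < 1 - n / q := by
    have : n / q < 1 := (div_lt_one hq0).mpr hnq
    linarith
  set ω := (volume (ball (0 : EuclideanSpace ℝ (Fin n)) 1)).toReal with hω
  have hω0 : 0 < ω := ENNReal.toReal_pos (measure_ball_pos _ _ one_pos).ne' measure_ball_lt_top.ne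
  refine ⟨(2 / ω) ^ (1 / (n : ℝ)) * (1 / (1 - n / q)) * 2 ^ (1 - 1 / q), by positivity, ?_⟩
  intro Ω hΩ hne hfin u hu hcs hsup x
  obtain ⟨x0, hx0⟩ := (hu.continuous.abs).exists_forall_ge_of_hasCompactSupport
    (hcs.comp_left (g := fun z : ℝ => |z|) abs_zero)
  refine (hx0 x).trans ?_
  set w := (volume Ω).toReal with hw
  have hw0 : 0 < w := ENNReal.toReal_pos (hΩ.measure_pos _ hne).ne' hfin
  set r := (2 * w / ω) ^ (1 / (n : ℝ)) with hr
  have hr0 : 0 < r := by positivity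
  have hV : (volume (ball (0 : EuclideanSpace ℝ (Fin n)) r)).toReal = 2 * w := by
    rw [Measure.addHaar_ball_of_pos _ _ hr0, ENNReal.toReal_mul, ENNReal.toReal_ofReal (by positivity),
      ← hω, finrank_euclideanSpace_fin, hr, ← Real.rpow_natCast, ← Real.rpow_mul (by positivity)]
    rw [one_div_mul_cancel (by positivity), Real.rpow_one]
    field_simp
  have h := hs_morrey_aux hq hnq hΩ hfin hu hcs hsup x0 hx0 hr0
  rw [hV, ← hw] at h
  set h' := (∫ y, ‖fderiv ℝ u y‖ ^ q) ^ (1 / q)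
  have e1 : r = (2 / ω) ^ (1 / (n : ℝ)) * w ^ (1 / (n : ℝ)) := by
    rw [hr, ← Real.mul_rpow (by positivity) (by positivity)]; congr 1; ring
  have e2 : (2 * w) ^ (1 - 1 / q) = 2 ^ (1 - 1 / q) * (w * w ^ (- (1 / q))) := by
    rw [Real.mul_rpow (by norm_num) hw0.le, sub_eq_add_neg, Real.rpow_add hw0, Real.rpow_one]
  have e3 : w ^ (1 / (n : ℝ) - 1 / q) = w ^ (1 / (n : ℝ)) * w ^ (- (1 / q)) := by
    rw [sub_eq_add_neg, Real.rpow_add hw0]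
  rw [e2, e1] at h
  rw [e3]
  have h2 : w * |u x0| ≤ w * ((2 / ω) ^ (1 / (n : ℝ)) * (1 / (1 - n / q)) * 2 ^ (1 - 1 / q) *
     (w ^ (1 / (n : ℝ)) * w ^ (- (1 / q))) * h') := by
    linarith
  exact le_of_mul_le_mul_left h2 hw0

/-- Hardy–Sobolev inequality for `p > n`, distance to the origin. -/
theorem hardy_sobolev_origin (n : ℕ) (hn : 1 ≤ n) (p : ℝ) (hp : (n : ℝ) < p) :
    ∃ C : ℝ, 0 < C ∧
      ∀ Ω : Set (EuclideanSpace ℝ (Fin n)), IsOpen Ω → IsConnected Ω →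
        (0 : EuclideanSpace ℝ (Fin n)) ∈ Ω → volume Ω ≠ ⊤ →
        ∀ u : EuclideanSpace ℝ (Fin n) → ℝ, ContDiff ℝ (⊤ : ℕ∞) u →
          HasCompactSupport u → tsupport u ⊆ Ω \ {0} →
          ∀ x ∈ Ω, |u x| ≤
            C * (volume Ω).toReal ^ (1 / (n : ℝ) - 1 / p) *
              ((∫ y in Ω, ‖fderiv ℝ u y‖ ^ p)
                - ((p - n) / p) ^ p * ∫ y in Ω, |u y| ^ p / ‖y‖ ^ p) ^ (1 / p) := by
  have hn1 : (1 : ℝ) ≤ n := by exact_mod_cast hn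
  obtain ⟨q, hnq, hqp⟩ := exists_between hp
  have hq0 : 0 < q := by linarith
  have hp0 : 0 < p := by linarith
  obtain ⟨C1, hC1, H1⟩ := hs_morrey n hn q hnq
  obtain ⟨C2, hC2, H2⟩ := hs_grad n hn p q hnq hqp
  refine ⟨C1 * C2 ^ (1 / q), by positivity, ?_⟩
  intro Ω hΩ _ h0 hfin u hu hcs hsup x _
  have hu1 : ContDiff ℝ 1 u := hu.of_le (by exact_mod_cast le_top)
  have h1 := H1 Ω hΩ ⟨0, h0⟩ hfin u hu1 hcs (hsup.trans sdiff_subset) x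
  obtain ⟨hI, h2⟩ := H2 Ω hΩ hfin u hu1 hcs hsup
  set I := (∫ y in Ω, ‖fderiv ℝ u y‖ ^ p) - ((p - n) / p) ^ p * ∫ y in Ω, |u y| ^ p / ‖y‖ ^ p
  set w := (volume Ω).toReal with hw
  have hw0 : 0 < w := ENNReal.toReal_pos (hΩ.measure_pos _ ⟨0, h0⟩).ne' hfin
  have h3 := Real.rpow_le_rpow (integral_nonneg fun y => by positivity) h2
    (by positivity : 0 ≤ 1 / q)
  rw [Real.mul_rpow (by positivity) (by positivity), Real.mul_rpow (by positivity) (by positivity),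
    ← Real.rpow_mul hw0.le, ← Real.rpow_mul hI] at h3
  have e1 : (1 - q / p) * (1 / q) = 1 / q - 1 / p := by field_simp
  have e2 : q / p * (1 / q) = 1 / p := by field_simp
  rw [e1, e2] at h3
  have e3 : w ^ (1 / (n : ℝ) - 1 / p) = w ^ (1 / (n : ℝ) - 1 / q) * w ^ (1 / q - 1 / p) := by
    rw [← Real.rpow_add hw0]; congr 1; ring
  calc |u x| ≤ _ := h1
    _ ≤ C1 * w ^ (1 / (n : ℝ) - 1 / q) * (C2 ^ (1 / q) * w ^ (1 / q - 1 / p) * I ^ (1 / p)) := by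
        gcongr
    _ = _ := by rw [e3]; ring
end

section
/- Let n ≥ 1 and p > n. There exist constants B = B(n,p) ≥ 1 and C = C(n,p) > 0 such that for every bounded domain Ω ⊂ ℝⁿ containing the origin, with D := B·diam(Ω), and for every u ∈ C_c^∞(Ω \ {0}) and all x, y ∈ Ω with x ≠ y, one has |u(x) − u(y)| · X^{1/p}(|x−y|/D) ≤ C · |x−y|^{1−n/p} · ( ∫_Ω |∇u|^p dz − ((p−n)/p)^p ∫_Ω |u(z)|^p / |z|^p dz )^{1/p}. -/
open MeasureTheory Metric Set

lemma hm_num1 (p α : ℝ) (hp : 1 < p) (hα : 0 < α) : ∃ K > 0, ∀ g, α / 2 ≤ g → g ≤ α →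
    α ^ p - p * α * g ^ (p - 1) + (p - 1) * g ^ p ≤ K * (α - g) ^ 2 := by
  set M := p * (p - 1) * (α ^ (p - 2) + (α / 2) ^ (p - 2)) with hM
  have hMpos : 0 < M := by
    have : 0 < p - 1 := by linarith
    positivity
  refine ⟨M, hMpos, ?_⟩
  have hb : ∀ g, α / 2 ≤ g → g ≤ α → p * (p - 1) * g ^ (p - 2) ≤ M := by
    intro g h1 h2
    have h0 : 0 < p * (p - 1) := mul_pos (by linarith) (by linarith)
    apply mul_le_mul_of_nonneg_left _ h0.le
    have hg : 0 < g := by linarith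
    have e1 : 0 < α ^ (p - 2) := by positivity
    have e2 : 0 < (α / 2) ^ (p - 2) := by positivity
    rcases le_total 0 (p - 2) with h | h
    · have := Real.rpow_le_rpow hg.le h2 h
      linarith
    · have := Real.rpow_le_rpow_of_nonpos (by linarith : 0 < α / 2) h1 h
      linarith
  have hd : ∀ g, 0 < g → HasDerivAt (fun g : ℝ => M * (α - g) ^ 2 -
      (α ^ p - p * α * g ^ (p - 1) + (p - 1) * g ^ p))
      ((α - g) * (p * (p - 1) * g ^ (p - 2) - 2 * M)) g := by
    intro g hg
    have h1 := (Real.hasDerivAt_rpow_const (x := g) (p := p - 1) (Or.inl hg.ne'))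
    have h2 := (Real.hasDerivAt_rpow_const (x := g) (p := p) (Or.inl hg.ne'))
    have h3 := (((hasDerivAt_id g).const_sub α).pow 2).const_mul M
    have h4 := h3.sub (((h1.const_mul (p * α)).const_sub (α ^ p)).add (h2.const_mul (p - 1)))
    refine h4.congr_deriv ?_
    have e : g ^ (p - 1) = g * g ^ (p - 2) := by
      rw [show p - 1 = 1 + (p - 2) by ring, Real.rpow_add hg, Real.rpow_one]
    rw [show p - 1 - 1 = p - 2 by ring, e]
    simp
    ring
  intro g h1 h2
  have hanti : AntitoneOn (fun g : ℝ => M * (α - g) ^ 2 -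
      (α ^ p - p * α * g ^ (p - 1) + (p - 1) * g ^ p)) (Icc (α / 2) α) := by
    apply antitoneOn_of_deriv_nonpos (convex_Icc _ _)
    · intro x hx
      exact (hd x (by linarith [hx.1])).continuousAt.continuousWithinAt
    · intro x hx
      rw [interior_Icc] at hx
      exact (hd x (by linarith [hx.1])).differentiableAt.differentiableWithinAt
    · intro x hx
      rw [interior_Icc] at hx
      rw [(hd x (by linarith [hx.1])).deriv]
      apply mul_nonpos_of_nonneg_of_nonpos (by linarith [hx.2])
      linarith [hb x hx.1.le hx.2.le]
  have := hanti ⟨h1, h2⟩ (⟨by linarith, le_rfl⟩ : α ∈ Icc (α / 2) α) h2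
  have e : α ^ p = α * α ^ (p - 1) := by
    nth_rw 1 [show p = 1 + (p - 1) by ring]
    rw [Real.rpow_add hα, Real.rpow_one]
  simp only [sub_self] at this
  rw [e] at this ⊢
  nlinarith

lemma hm_num2 (p α : ℝ) (hp : 1 < p) (hα : 0 < α) (hα1 : α ≤ 1) :
    ∃ δ κ : ℝ, 0 < δ ∧ 0 < κ ∧ κ ≤ 1 ∧ 4 * δ ≤ α ∧ ∀ t T y : ℝ, 1 ≤ t → 1 ≤ T → 0 < y → y < 1 →
      (t ≤ T ∨ y ≤ 1 / 2) → ∀ g, g = α - δ * (1 / t + y / T) →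
      α / 2 ≤ g ∧ g ≤ α ∧
      α ^ p + κ * (y * (1 - y) / T) ≤ p * α * g ^ (p - 1) +
        (p - 1) * g ^ (p - 2) * (δ * (1 / t ^ 2 + y * (1 - y) / T)) -
        (p - 1) * (1 + κ * (y * (1 - y) / T)) * g ^ p := by
  obtain ⟨K, hK, hKb⟩ := hm_num1 p α hp hα
  set m := min (α ^ (p - 2)) ((α / 2) ^ (p - 2)) with hm
  have hmpos : 0 < m := by
    apply lt_min <;> positivity
  have hmb : ∀ g, α / 2 ≤ g → g ≤ α → m ≤ g ^ (p - 2) := by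
    intro g h1 h2
    have hg : 0 < g := by linarith
    rcases le_total 0 (p - 2) with h | h
    · exact (min_le_right _ _).trans (Real.rpow_le_rpow (by positivity) h1 h)
    · exact (min_le_left _ _).trans (Real.rpow_le_rpow_of_nonpos hg h2 h)
  have hp1 : 0 < p - 1 := by linarith
  set δ := min (α / 4) ((p - 1) * m / (8 * K)) with hδ
  have hδpos : 0 < δ := by apply lt_min <;> positivity
  have hδ1 : 4 * δ ≤ α := by linarith [min_le_left (α / 4) ((p - 1) * m / (8 * K))]
  have hδ2 : 8 * K * δ ≤ (p - 1) * m := by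
    have := min_le_right (α / 4) ((p - 1) * m / (8 * K))
    rw [← hδ, le_div_iff₀ (by positivity)] at this
    linarith
  set κ := min 1 ((p - 1) * m * δ / (2 * p)) with hκ
  have hκpos : 0 < κ := by apply lt_min <;> positivity
  have hκ2 : 2 * p * κ ≤ (p - 1) * m * δ := by
    have := min_le_right 1 ((p - 1) * m * δ / (2 * p))
    rw [← hκ, le_div_iff₀ (by positivity)] at this
    linarith
  refine ⟨δ, κ, hδpos, hκpos, min_le_left _ _, hδ1, ?_⟩
  intro t T y ht hT hy0 hy1 hor g hg
  have a1 : 0 < 1 / t := by positivity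
  have a2 : 1 / t ≤ 1 := by rw [div_le_one (by positivity)]; exact ht
  have b1 : 0 < y / T := by positivity
  have b2 : y / T ≤ 1 := by rw [div_le_one (by positivity)]; linarith
  have hg1 : α / 2 ≤ g := by nlinarith
  have hg2 : g ≤ α := by nlinarith
  refine ⟨hg1, hg2, ?_⟩
  have hgpos : 0 < g := by linarith
  have hgp : g ^ p ≤ 1 := Real.rpow_le_one hgpos.le (by linarith) (by linarith)
  have hz : 0 ≤ y * (1 - y) / T := div_nonneg (mul_nonneg hy0.le (by linarith)) (by linarith)
  set z := y * (1 - y) / T with hzdef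
  have hyT : (y / T) ^ 2 ≤ (1 / t) ^ 2 + z := by
    rcases hor with h | h
    · have : y / T ≤ 1 / t := by
        apply div_le_div₀ <;> linarith
      have := pow_le_pow_left₀ b1.le this 2
      linarith
    · have : (y / T) ^ 2 ≤ z := by
        rw [div_pow, hzdef]
        apply div_le_div₀
        · exact mul_nonneg hy0.le (by linarith)
        · nlinarith
        · linarith
        · nlinarith
      have : 0 ≤ (1 / t) ^ 2 := by positivity
      linarith
  have hw2 : (α - g) ^ 2 ≤ 4 * δ * (δ * ((1 / t) ^ 2 + z)) := by
    have : α - g = δ * (1 / t + y / T) := by rw [hg]; ring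
    rw [this]
    have h0 : (1 / t + y / T) ^ 2 ≤ 4 * ((1 / t) ^ 2 + z) := by
      linarith [sq_nonneg (1 / t - y / T), add_sq (1 / t) (y / T), sub_sq (1 / t) (y / T)]
    calc (δ * (1 / t + y / T)) ^ 2 = δ ^ 2 * (1 / t + y / T) ^ 2 := by ring
      _ ≤ δ ^ 2 * (4 * ((1 / t) ^ 2 + z)) := mul_le_mul_of_nonneg_left h0 (by positivity)
      _ = _ := by ring
  have h1 := hKb g hg1 hg2
  have h2 := hmb g hg1 hg2
  have e : (1 : ℝ) / t ^ 2 = (1 / t) ^ 2 := by rw [div_pow, one_pow]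
  rw [e]
  set q := (1 / t) ^ 2 + z with hq
  have hqz : z ≤ q := by rw [hq]; nlinarith
  have h3 : (p - 1) * m * (δ * q) ≤ (p - 1) * g ^ (p - 2) * (δ * q) := by
    apply mul_le_mul_of_nonneg_right _ (by positivity)
    exact mul_le_mul_of_nonneg_left h2 hp1.le
  have h4 : K * (α - g) ^ 2 ≤ (p - 1) * m / 2 * (δ * q) := by
    calc _ ≤ K * (4 * δ * (δ * q)) := mul_le_mul_of_nonneg_left hw2 hK.le
      _ = (8 * K * δ) / 2 * (δ * q) := by ring
      _ ≤ _ := by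
        apply mul_le_mul_of_nonneg_right _ (by positivity)
        linarith
  have h5 : (p - 1) * (κ * z) * g ^ p ≤ (p - 1) * (κ * z) := by
    have : 0 ≤ (p - 1) * (κ * z) := by positivity
    nlinarith
  have h6 : p * κ * z ≤ (p - 1) * m / 2 * (δ * q) := by
    calc p * κ * z ≤ (p - 1) * m * δ / 2 * z := by
          apply mul_le_mul_of_nonneg_right _ hz
          linarith
      _ ≤ (p - 1) * m * δ / 2 * q := by
          apply mul_le_mul_of_nonneg_left hqz (by positivity)
      _ = _ := by ring
  have e9 : (p - 1) * (1 + κ * z) * g ^ p = (p - 1) * g ^ p + (p - 1) * (κ * z) * g ^ p := by ring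
  rw [e9]
  linarith

lemma hm_young (p : ℝ) (hp : 1 < p) : ∃ c > 0, ∀ A b η : ℝ, 0 ≤ A → 0 ≤ b → 0 ≤ η → η ≤ 1 →
    p * b ^ (p - 1) * A ≤ (1 - c * η) * A ^ p + (p - 1) * (1 + η) * b ^ p := by
  have hp1 : 0 < p - 1 := by linarith
  set d := (p - 1) / 2 with hd
  have hdpos : 0 < d := by positivity
  refine ⟨d / (1 + d), by positivity, ?_⟩
  intro A b η hA hb hη hη1
  have hq : p.HolderConjugate (p / (p - 1)) := Real.HolderConjugate.conjExponent hp
  have hs : 0 < 1 + η := by linarith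
  have hy := Real.young_inequality_of_nonneg hA (b := ((1 + η) * b) ^ (p - 1)) (by positivity) hq
  rw [← Real.rpow_mul (by positivity), show (p - 1) * (p / (p - 1)) = p by field_simp] at hy
  have e1 : ((1 + η) * b) ^ (p - 1) = (1 + η) ^ (p - 1) * b ^ (p - 1) := Real.mul_rpow hs.le hb
  have e2 : ((1 + η) * b) ^ p = (1 + η) ^ (p - 1) * ((1 + η) * b ^ p) := by
    rw [Real.mul_rpow hs.le hb, ← mul_assoc]
    congr 1
    nth_rw 3 [← Real.rpow_one (1 + η)]
    rw [← Real.rpow_add hs]; congr 1; ring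
  set S := (1 + η) ^ (p - 1) with hS
  have hSpos : 0 < S := by positivity
  have hAp : 0 ≤ A ^ p := by positivity
  have key : 1 ≤ (1 - d / (1 + d) * η) * S := by
    have l1 : η / 2 ≤ Real.log (1 + η) := by
      have := Real.one_sub_inv_le_log_of_pos hs
      have h2 : η / 2 ≤ 1 - (1 + η)⁻¹ := by
        rw [show 1 - (1 + η)⁻¹ = η / (1 + η) by field_simp; ring]
        apply div_le_div_of_nonneg_left hη hs (by linarith)
      linarith
    have l2 : 1 + d * η ≤ S := by
      rw [hS, Real.rpow_def_of_pos hs]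
      have := Real.add_one_le_exp (Real.log (1 + η) * (p - 1))
      nlinarith
    have l3 : 0 ≤ 1 - d / (1 + d) * η := by
      have : d / (1 + d) ≤ 1 := by rw [div_le_one (by positivity)]; linarith
      nlinarith
    have l4 : 1 ≤ (1 - d / (1 + d) * η) * (1 + d * η) := by
      have : (1 - d / (1 + d) * η) * (1 + d * η) = 1 + d * d * η * (1 - η) / (1 + d) := by
        field_simp; ring
      rw [this]
      have : 0 ≤ d * d * η * (1 - η) / (1 + d) := by
        apply div_nonneg _ (by positivity)
        apply mul_nonneg (by positivity) (by linarith)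
      linarith
    exact l4.trans (mul_le_mul_of_nonneg_left l2 l3)
  have hy2 : p * b ^ (p - 1) * A * S ≤ A ^ p + (p - 1) * ((1 + η) * b ^ p) * S := by
    rw [e1, e2] at hy
    have := mul_le_mul_of_nonneg_left hy (by linarith : 0 ≤ p)
    have e3 : p * (A ^ p / p + S * ((1 + η) * b ^ p) / (p / (p - 1))) =
      A ^ p + (p - 1) * ((1 + η) * b ^ p) * S := by field_simp
    rw [e3] at this
    linarith
  have : p * b ^ (p - 1) * A * S ≤ ((1 - d / (1 + d) * η) * A ^ p + (p - 1) * (1 + η) * b ^ p) * S := by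
    nlinarith
  exact le_of_mul_le_mul_right this hSpos

lemma hm_div (n : ℕ) (φ : EuclideanSpace ℝ (Fin n) → ℝ) (hφ : ContDiff ℝ 1 φ)
    (hc : HasCompactSupport φ) :
    Integrable (fun z => n * φ z + fderiv ℝ φ z z) ∧
    ∫ z, (n * φ z + fderiv ℝ φ z z) = 0 := by
  have hφc := hφ.continuous
  have hdc : Continuous (fderiv ℝ φ) := hφ.continuous_fderiv (by norm_num)
  have hdcs : HasCompactSupport (fderiv ℝ φ) := hc.fderiv ℝ
  have hcs : ∀ (g : EuclideanSpace ℝ (Fin n) → EuclideanSpace ℝ (Fin n)),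
      HasCompactSupport (fun z => fderiv ℝ φ z (g z)) := by
    intro g
    apply hdcs.mono'
    intro z hz
    apply subset_tsupport
    intro h
    apply hz
    simp [h]
  let e := EuclideanSpace.basisFun (Fin n) ℝ
  have i1 : Integrable φ := hφc.integrable_of_hasCompactSupport hc
  have hsum : ∀ z : EuclideanSpace ℝ (Fin n),
      fderiv ℝ φ z z = ∑ i, z i * fderiv ℝ φ z (e i) := by
    intro z
    have : z = ∑ i, z i • e i := by
      have := e.sum_repr z
      simpa [e] using this.symm
    conv_lhs => rw [this]
    rw [map_sum]
    conv_lhs => rw [← this]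
    simp
  have i2 : ∀ i, Integrable (fun z : EuclideanSpace ℝ (Fin n) => z i * fderiv ℝ φ z (e i)) := by
    intro i
    apply Continuous.integrable_of_hasCompactSupport
    · fun_prop
    · exact (hcs fun _ => e i).mul_left
  have h3 : ∀ i, ∫ z : EuclideanSpace ℝ (Fin n), z i * fderiv ℝ φ z (e i) = - ∫ z, φ z := by
    intro i
    have hcoord : ∀ z : EuclideanSpace ℝ (Fin n), HasFDerivAt
        (fun z : EuclideanSpace ℝ (Fin n) => z i) (EuclideanSpace.proj i : _ →L[ℝ] ℝ) z :=
      fun z => (EuclideanSpace.proj i : EuclideanSpace ℝ (Fin n) →L[ℝ] ℝ).hasFDerivAt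
    have hone : ∀ z, fderiv ℝ (fun z : EuclideanSpace ℝ (Fin n) => z i) z (e i) = 1 := by
      intro z
      rw [(hcoord z).fderiv]
      simp [e]
    rw [integral_mul_fderiv_eq_neg_fderiv_mul_of_integrable]
    · simp only [hone, one_mul]
    · simpa only [hone, one_mul] using i1
    · exact i2 i
    · apply Continuous.integrable_of_hasCompactSupport
      · fun_prop
      · exact hc.mul_left
    · intro z _
      exact (hcoord z).differentiableAt
    · intro z _
      exact (hφ.differentiable (by norm_num)).differentiableAt
  have i3 : Integrable (fun z => fderiv ℝ φ z z) := by
    simp only [hsum]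
    exact integrable_finsetSum _ (fun i _ => i2 i)
  refine ⟨(i1.const_mul _).add i3, ?_⟩
  rw [integral_add (i1.const_mul _) i3]
  simp only [hsum]
  rw [integral_finsetSum _ (fun i _ => i2 i)]
  simp only [h3]
  rw [integral_const_mul]
  simp

lemma hm_holder {E : Type*} [MeasurableSpace E] (μ : Measure E) [IsFiniteMeasure μ]
    (p : ℝ) (hp : 1 < p) (f : E → ℝ) (hf : AEStronglyMeasurable f μ) (h0 : ∀ z, 0 ≤ f z)
    (hfp : Integrable (fun z => f z ^ p) μ) :
    ∫ z, f z ∂μ ≤ (μ.real univ) ^ (1 - 1 / p) * (∫ z, f z ^ p ∂μ) ^ (1 / p) := by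
  have hq : p.HolderConjugate (p / (p - 1)) := Real.HolderConjugate.conjExponent hp
  have hp0 : 0 < p := by linarith
  have := integral_mul_le_Lp_mul_Lq_of_nonneg hq (μ := μ) (f := f) (g := fun _ => 1)
    (Filter.Eventually.of_forall h0) (Filter.Eventually.of_forall fun _ => zero_le_one) ?_ ?_
  · simp only [mul_one, Real.one_rpow, integral_const, smul_eq_mul] at this
    rw [mul_comm] at this
    convert this using 3
    field_simp
  · rw [← integrable_norm_rpow_iff hf (by simpa using hp0) (by simp)]
    rw [ENNReal.toReal_ofReal hp0.le]
    refine hfp.congr (Filter.Eventually.of_forall fun z => ?_)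
    simp [abs_of_nonneg (h0 z)]
  · exact memLp_const 1

lemma hm_scale (n : ℕ) (W : Set (EuclideanSpace ℝ (Fin n)))
    (hW : IsCompact W) (hconv : Convex ℝ W) (x : EuclideanSpace ℝ (Fin n)) (hx : x ∈ W)
    (f : EuclideanSpace ℝ (Fin n) → ℝ) (hf : Continuous f) (h0 : ∀ z, 0 ≤ f z)
    (t : ℝ) (ht : 0 < t) (ht1 : t ≤ 1) :
    ∫ z in W, f (x + t • (z - x)) ≤ (t ^ n)⁻¹ * ∫ z in W, f z := by
  have hWm : MeasurableSet W := hW.measurableSet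
  set F := W.indicator f with hF
  have hFi : Integrable F := (integrable_indicator_iff hWm).2 (hf.continuousOn.integrableOn_compact hW)
  have hFi2 : Integrable (fun z => F ((x - t • x) + t • z)) :=
    (hFi.comp_add_left (x - t • x)).comp_smul ht.ne'
  have e : ∫ z, F ((x - t • x) + t • z) = (t ^ n)⁻¹ * ∫ z in W, f z := by
    rw [Measure.integral_comp_smul volume (fun z => F ((x - t • x) + z)) t,
      integral_add_left_eq_self F, hF, integral_indicator hWm]
    simp [abs_of_pos ht]
  rw [← e]
  calc ∫ z in W, f (x + t • (z - x)) = ∫ z in W, F ((x - t • x) + t • z) := by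
        apply setIntegral_congr_fun hWm
        intro z hz
        have h1 : x + t • (z - x) = (x - t • x) + t • z := by
          rw [smul_sub]; abel
        have h2 : x + t • (z - x) ∈ W := hconv.add_smul_sub_mem hx hz ⟨ht.le, ht1⟩
        simp only [hF]
        rw [← h1, indicator_of_mem h2]
    _ ≤ _ := setIntegral_le_integral hFi2 (Filter.Eventually.of_forall fun z =>
        indicator_nonneg (fun _ _ => h0 _) _)

lemma hm_morrey (n : ℕ) (p : ℝ) (hp1 : 1 < p) (hp : (n : ℝ) < p)
    (W : Set (EuclideanSpace ℝ (Fin n)))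
    (hW : IsCompact W) (hconv : Convex ℝ W) (x : EuclideanSpace ℝ (Fin n)) (hx : x ∈ W)
    (d : ℝ) (hd0 : 0 ≤ d) (hd : ∀ z ∈ W, ‖z - x‖ ≤ d)
    (u : EuclideanSpace ℝ (Fin n) → ℝ) (hu : ContDiff ℝ 1 u) :
    ∫ z in W, |u z - u x| ≤ d / (1 - n / p) * (volume.real W ^ (1 - 1 / p) *
      (∫ z in W, ‖fderiv ℝ u z‖ ^ p) ^ (1 / p)) := by
  have hp0 : 0 < p := by linarith
  have hWm : MeasurableSet W := hW.measurableSet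
  have hdc : Continuous (fderiv ℝ u) := hu.continuous_fderiv (by norm_num)
  set Q := volume.real W ^ (1 - 1 / p) * (∫ z in W, ‖fderiv ℝ u z‖ ^ p) ^ (1 / p) with hQ
  have hfin : IsFiniteMeasure (volume.restrict W) :=
    ⟨by rw [Measure.restrict_apply_univ]; exact hW.measure_lt_top⟩
  have hcont2 : Continuous (fun q : EuclideanSpace ℝ (Fin n) × ℝ =>
      ‖fderiv ℝ u (x + q.2 • (q.1 - x))‖) := by fun_prop
  have hint2 : Integrable (fun q : EuclideanSpace ℝ (Fin n) × ℝ =>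
      ‖fderiv ℝ u (x + q.2 • (q.1 - x))‖)
      ((volume.restrict W).prod (volume.restrict (Ioc (0:ℝ) 1))) := by
    rw [Measure.prod_restrict]
    have : IntegrableOn (fun q : EuclideanSpace ℝ (Fin n) × ℝ =>
      ‖fderiv ℝ u (x + q.2 • (q.1 - x))‖) (W ×ˢ Icc (0:ℝ) 1) (volume.prod volume) :=
      hcont2.continuousOn.integrableOn_compact (hW.prod isCompact_Icc)
    exact this.mono_set (prod_mono le_rfl Ioc_subset_Icc_self)
  have step1 : ∀ z ∈ W, |u z - u x| ≤
      d * ∫ t in Ioc (0:ℝ) 1, ‖fderiv ℝ u (x + t • (z - x))‖ := by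
    intro z hz
    have hder : ∀ t ∈ uIcc (0:ℝ) 1, HasDerivAt (fun t : ℝ => u (x + t • (z - x)))
        (fderiv ℝ u (x + t • (z - x)) (z - x)) t := by
      intro t _
      have h1 : HasDerivAt (fun t : ℝ => x + t • (z - x)) (z - x) t := by
        simpa using ((hasDerivAt_id t).smul_const (z - x)).const_add x
      exact ((hu.differentiable (by norm_num)) _).hasFDerivAt.comp_hasDerivAt t h1
    have hci : Continuous (fun t : ℝ => fderiv ℝ u (x + t • (z - x)) (z - x)) := by fun_prop
    have hFTC := intervalIntegral.integral_eq_sub_of_hasDerivAt hder (hci.intervalIntegrable _ _)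
    simp only [one_smul, zero_smul, add_zero, add_sub_cancel] at hFTC
    rw [← hFTC, ← Real.norm_eq_abs, intervalIntegral.integral_of_le zero_le_one,
      ← integral_const_mul]
    refine norm_integral_le_of_norm_le ?_ (Filter.Eventually.of_forall fun t => ?_)
    · apply IntegrableOn.mono_set (t := Icc (0:ℝ) 1) _ Ioc_subset_Icc_self
      apply Continuous.integrableOn_Icc
      fun_prop
    · calc _ ≤ ‖fderiv ℝ u (x + t • (z - x))‖ * ‖z - x‖ := ContinuousLinearMap.le_opNorm _ _
        _ ≤ _ := by rw [mul_comm]; exact mul_le_mul_of_nonneg_right (hd z hz) (norm_nonneg _)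
  have step2 : ∀ t ∈ Ioc (0:ℝ) 1, ∫ z in W, ‖fderiv ℝ u (x + t • (z - x))‖ ≤
      t ^ (-(n / p : ℝ)) * Q := by
    intro t ht
    have hfc : Continuous (fun z => ‖fderiv ℝ u (x + t • (z - x))‖) := by fun_prop
    have h1 := hm_holder (volume.restrict W) p hp1 (fun z => ‖fderiv ℝ u (x + t • (z - x))‖)
      hfc.aestronglyMeasurable (fun _ => norm_nonneg _)
      ((hfc.rpow_const (fun _ => Or.inr hp0.le)).continuousOn.integrableOn_compact hW)
    have h2 := hm_scale n W hW hconv x hx (fun z => ‖fderiv ℝ u z‖ ^ p)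
      (hdc.norm.rpow_const (fun _ => Or.inr hp0.le)) (fun _ => by positivity) t ht.1 ht.2
    have hI0 : 0 ≤ ∫ z in W, ‖fderiv ℝ u z‖ ^ p := integral_nonneg fun _ => by positivity
    have h3 := Real.rpow_le_rpow (integral_nonneg fun _ => by positivity) h2
      (by positivity : 0 ≤ 1 / p)
    rw [Real.mul_rpow (by have := ht.1; positivity) hI0] at h3
    have e : ((t ^ n)⁻¹ : ℝ) ^ (1 / p) = t ^ (-(n / p : ℝ)) := by
      rw [← Real.rpow_natCast, ← Real.rpow_neg ht.1.le, ← Real.rpow_mul ht.1.le]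
      congr 1; ring
    rw [e] at h3
    have hmr : (volume.restrict W).real univ = volume.real W := by
      simp [Measure.real]
    rw [hmr] at h1
    calc _ ≤ _ := h1
      _ ≤ volume.real W ^ (1 - 1 / p) * (t ^ (-(n / p : ℝ)) *
            (∫ z in W, ‖fderiv ℝ u z‖ ^ p) ^ (1 / p)) :=
          mul_le_mul_of_nonneg_left h3 (by positivity)
      _ = _ := by rw [hQ]; ring
  have hnp : (n : ℝ) / p < 1 := by rw [div_lt_one hp0]; exact hp
  calc ∫ z in W, |u z - u x|
      ≤ ∫ z in W, d * ∫ t in Ioc (0:ℝ) 1, ‖fderiv ℝ u (x + t • (z - x))‖ := by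
        apply setIntegral_mono_on _ _ hWm step1
        · have : Continuous (fun z => |u z - u x|) := by
            have := hu.continuous
            fun_prop
          exact this.continuousOn.integrableOn_compact hW
        · exact hint2.integral_prod_left.const_mul d
    _ = d * ∫ t in Ioc (0:ℝ) 1, ∫ z in W, ‖fderiv ℝ u (x + t • (z - x))‖ := by
        rw [integral_const_mul, integral_integral_swap]
        exact hint2
    _ ≤ d * ∫ t in Ioc (0:ℝ) 1, t ^ (-(n / p : ℝ)) * Q := by
        apply mul_le_mul_of_nonneg_left _ hd0
        apply setIntegral_mono_on _ _ measurableSet_Ioc step2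
        · exact hint2.integral_prod_right
        · apply Integrable.mul_const
          have := (intervalIntegral.intervalIntegrable_rpow' (a := 0) (b := 1)
            (r := -(n / p : ℝ)) (by linarith))
          rwa [intervalIntegrable_iff_integrableOn_Ioc_of_le zero_le_one] at this
    _ = d / (1 - n / p) * Q := by
        rw [integral_mul_const, ← intervalIntegral.integral_of_le zero_le_one,
          integral_rpow (Or.inl (by linarith))]
        rw [Real.one_rpow, Real.zero_rpow (by linarith)]
        rw [show -((n:ℝ) / p) + 1 = 1 - n / p by ring]
        ring

noncomputable def hmγ (α δ T : ℝ) (t : ℝ) : ℝ := α - δ * (1 / t + Real.sigmoid (T - t) / T)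

lemma hmγ_deriv (α δ T t : ℝ) (ht : t ≠ 0) : HasDerivAt (hmγ α δ T)
    (δ * (1 / t ^ 2 + Real.sigmoid (T - t) * (1 - Real.sigmoid (T - t)) / T)) t := by
  have h1 := hasDerivAt_inv ht
  have h2 := (Real.hasDerivAt_sigmoid (T - t)).comp t ((hasDerivAt_id t).const_sub T)
  have h3 := ((h1.add (h2.div_const T)).const_mul δ).const_sub α
  have e : hmγ α δ T = fun t => α - δ * (t⁻¹ + Real.sigmoid (T - t) / T) := by
    funext s
    simp [hmγ]
  rw [e]
  refine h3.congr_deriv ?_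
  simp
  ring

lemma hmγ_contDiffAt (α δ T t : ℝ) (ht : t ≠ 0) : ContDiffAt ℝ 1 (hmγ α δ T) t := by
  have h2 : ContDiffAt ℝ 1 (fun t => Real.sigmoid (T - t)) t :=
    ContDiffAt.comp (g := Real.sigmoid) t ((contDiff_sigmoid.of_le le_top).contDiffAt) (by fun_prop)
  unfold hmγ
  apply contDiffAt_const.sub
  apply contDiffAt_const.mul
  exact (contDiffAt_const.div contDiffAt_id ht).add (h2.div_const T)

/-- The radial test density. -/
noncomputable def hmφ {n : ℕ} (p α δ T L : ℝ) (u : EuclideanSpace ℝ (Fin n) → ℝ)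
    (z : EuclideanSpace ℝ (Fin n)) : ℝ :=
  ‖z‖ ^ (-p) * (hmγ α δ T (L - Real.log ‖z‖)) ^ (p - 1) * |u z| ^ p

lemma hmφ_contDiff {n : ℕ} (p α δ T L : ℝ) (hp : 1 < p) (u : EuclideanSpace ℝ (Fin n) → ℝ)
    (hu : ContDiff ℝ 1 u) (h0 : (0 : EuclideanSpace ℝ (Fin n)) ∉ tsupport u)
    (hL : ∀ z ∈ tsupport u, 1 ≤ L - Real.log ‖z‖)
    (hγ : ∀ t, 1 ≤ t → 0 < hmγ α δ T t) : ContDiff ℝ 1 (hmφ p α δ T L u) := by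
  rw [contDiff_iff_contDiffAt]
  intro z
  by_cases hz : z ∈ tsupport u
  · have hz0 : z ≠ 0 := by rintro rfl; exact h0 hz
    have hzn : ‖z‖ ≠ 0 := norm_ne_zero_iff.2 hz0
    have c1 : ContDiffAt ℝ 1 (fun z : EuclideanSpace ℝ (Fin n) => ‖z‖) z := contDiffAt_norm ℝ hz0
    have c2 : ContDiffAt ℝ 1 (fun z : EuclideanSpace ℝ (Fin n) => L - Real.log ‖z‖) z :=
      contDiffAt_const.sub (c1.log hzn)
    have c3 : ContDiffAt ℝ 1 (fun z : EuclideanSpace ℝ (Fin n) => hmγ α δ T (L - Real.log ‖z‖)) z :=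
      ContDiffAt.comp (g := hmγ α δ T) z (hmγ_contDiffAt α δ T _ (by linarith [hL z hz])) c2
    have c4 : ContDiffAt ℝ 1 (fun z => |u z| ^ p) z :=
      ((contDiff_norm_rpow hp).comp hu).contDiffAt
    exact ((c1.rpow_const_of_ne hzn).mul
      (c3.rpow_const_of_ne (hγ _ (hL z hz)).ne')).mul c4
  · have : hmφ p α δ T L u =ᶠ[nhds z] fun _ => 0 := by
      have := notMem_tsupport_iff_eventuallyEq.1 hz
      filter_upwards [this] with w hw
      simp [hmφ, hw, Real.zero_rpow (by linarith : p ≠ 0)]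
    exact contDiffAt_const.congr_of_eventuallyEq this

lemma hmφ_radial {n : ℕ} (p α δ T L : ℝ) (hp : 1 < p) (u : EuclideanSpace ℝ (Fin n) → ℝ)
    (hu : ContDiff ℝ 1 u) (z : EuclideanSpace ℝ (Fin n)) (hz : z ≠ 0)
    (t y g : ℝ) (ht : t = L - Real.log ‖z‖) (ht1 : 1 ≤ t) (hy : y = Real.sigmoid (T - t))
    (hg : g = hmγ α δ T t) (hgpos : 0 < g)
    (hφ : DifferentiableAt ℝ (hmφ p α δ T L u) z) :
    fderiv ℝ (hmφ p α δ T L u) z z = ‖z‖ ^ (-p) * (-p * g ^ (p - 1) * |u z| ^ p -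
      (p - 1) * g ^ (p - 2) * (δ * (1 / t ^ 2 + y * (1 - y) / T)) * |u z| ^ p +
      g ^ (p - 1) * (p * |u z| ^ (p - 2) * u z * fderiv ℝ u z z)) := by
  have hzn : 0 < ‖z‖ := norm_pos_iff.2 hz
  have hline : HasDerivAt (fun s : ℝ => s • z) z 1 := by
    simpa using (hasDerivAt_id (1:ℝ)).smul_const z
  have hφ1 : DifferentiableAt ℝ (hmφ p α δ T L u) ((1:ℝ) • z) := by rwa [one_smul]
  have hu1 : DifferentiableAt ℝ u ((1:ℝ) • z) := (hu.differentiable (by norm_num)) _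
  have hL := hφ1.hasFDerivAt.comp_hasDerivAt (1:ℝ) hline
  have hU := hu1.hasFDerivAt.comp_hasDerivAt (1:ℝ) hline
  have d1 : HasDerivAt (fun s : ℝ => s * ‖z‖) ‖z‖ 1 := by
    simpa using (hasDerivAt_id (1:ℝ)).mul_const ‖z‖
  have d2 := d1.rpow_const (p := -p) (Or.inl (by simpa using hzn.ne'))
  have d3 := (d1.log (by simpa using hzn.ne')).const_sub L
  have d4 : HasDerivAt (fun s : ℝ => hmγ α δ T (L - Real.log (s * ‖z‖)))
      (δ * (1 / t ^ 2 + y * (1 - y) / T) * (-(‖z‖ / (1 * ‖z‖)))) 1 := by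
    refine HasDerivAt.comp (1:ℝ) (h₂ := hmγ α δ T) ?_ d3
    rw [one_mul, ← ht, hy]
    exact hmγ_deriv α δ T t (by linarith)
  have d5 := d4.rpow_const (p := p - 1) (Or.inl (by rw [one_mul, ← ht, ← hg]; exact hgpos.ne'))
  have d6 := (hasDerivAt_abs_rpow (u ((1:ℝ) • z)) hp).comp (1:ℝ) hU
  have d7 := (d2.mul d5).mul d6
  have heq : (fun s : ℝ => hmφ p α δ T L u (s • z)) =ᶠ[nhds 1] fun s : ℝ =>
      ((s * ‖z‖) ^ (-p) * (hmγ α δ T (L - Real.log (s * ‖z‖))) ^ (p - 1)) * |u (s • z)| ^ p := by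
    filter_upwards [lt_mem_nhds (zero_lt_one : (0:ℝ) < 1)] with s hs
    simp only [hmφ, norm_smul, Real.norm_eq_abs, abs_of_pos hs]
  have d8 := (hL.congr_of_eventuallyEq (f₁ := fun s : ℝ =>
      ((s * ‖z‖) ^ (-p) * (hmγ α δ T (L - Real.log (s * ‖z‖))) ^ (p - 1)) * |u (s • z)| ^ p)
      heq.symm).unique d7
  rw [one_smul] at d8
  rw [d8]
  simp only [Function.comp, one_mul, one_smul, Pi.mul_apply]
  rw [← ht, ← hg]
  have e1 : ‖z‖ ^ (-p - 1) = ‖z‖ ^ (-p) / ‖z‖ := by rw [Real.rpow_sub hzn, Real.rpow_one]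
  rw [e1, show p - 1 - 1 = p - 2 by ring]
  field_simp
  ring

lemma hm_algebra (p α c G g' η A U N du v : ℝ) (nn : ℝ) (hp : 1 < p) (hnn : p - nn = p * α)
    (hG : 0 < G) (hN : 0 < N) (hA : 0 ≤ A) (hUv : U = |v|) (hdu : |du| ≤ A * N)
    (hy : p * (G * (U / N)) ^ (p - 1) * A ≤ (1 - c * η) * A ^ p + (p - 1) * (1 + η) * (G * (U / N)) ^ p)
    (hnum : α ^ p + η ≤ p * α * G ^ (p - 1) + (p - 1) * G ^ (p - 2) * g' -
        (p - 1) * (1 + η) * G ^ p) :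
    η * (c * A ^ p + U ^ p / N ^ p) +
      (nn * (N ^ (-p) * G ^ (p - 1) * U ^ p) +
      N ^ (-p) * (-p * G ^ (p - 1) * U ^ p - (p - 1) * G ^ (p - 2) * g' * U ^ p +
        G ^ (p - 1) * (p * U ^ (p - 2) * v * du))) ≤ A ^ p - α ^ p * (U ^ p / N ^ p) := by
  have hU : 0 ≤ U := by rw [hUv]; positivity
  have hNp : N ^ (-p) = (N ^ p)⁻¹ := Real.rpow_neg hN.le p
  have hNpos : 0 < N ^ p := by positivity
  have ha : 0 ≤ U ^ p / N ^ p := by positivity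
  have e1 : (G * (U / N)) ^ p = G ^ p * (U ^ p / N ^ p) := by
    rw [Real.mul_rpow hG.le (by positivity), Real.div_rpow hU hN.le]
  have e2 : (G * (U / N)) ^ (p - 1) = G ^ (p - 1) * (U ^ (p - 1) / N ^ (p - 1)) := by
    rw [Real.mul_rpow hG.le (by positivity), Real.div_rpow hU hN.le]
  have e3 : N ^ (p - 1) = N ^ p / N := by rw [Real.rpow_sub hN, Real.rpow_one]
  have e4 : U ^ (p - 2) * v * du ≤ U ^ (p - 1) * (A * N) := by
    rcases hU.eq_or_lt with h | h
    · have : v = 0 := by rw [← h] at hUv; exact abs_eq_zero.1 hUv.symm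
      rw [this, mul_zero, zero_mul]
      positivity
    · have : U ^ (p - 1) = U ^ (p - 2) * U := by
        rw [show p - 1 = (p - 2) + 1 by ring, Real.rpow_add h, Real.rpow_one]
      rw [this]
      have h1 : v * du ≤ U * (A * N) := by
        calc v * du ≤ |v * du| := le_abs_self _
          _ = U * |du| := by rw [abs_mul, hUv]
          _ ≤ _ := mul_le_mul_of_nonneg_left hdu hU
      have h2 := mul_le_mul_of_nonneg_left h1 (by positivity : 0 ≤ U ^ (p - 2))
      linarith
  have e5 : N ^ (-p) * (G ^ (p - 1) * (p * U ^ (p - 2) * v * du)) ≤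
      p * (G * (U / N)) ^ (p - 1) * A := by
    have h2 := mul_le_mul_of_nonneg_left e4
      (by positivity : 0 ≤ N ^ (-p) * G ^ (p - 1) * p)
    have h3 : N ^ (-p) * G ^ (p - 1) * p * (U ^ (p - 1) * (A * N)) =
        p * (G * (U / N)) ^ (p - 1) * A := by
      rw [e2, e3, hNp]; field_simp
    rw [h3] at h2
    linarith
  rw [e1] at hy
  have h6 := mul_le_mul_of_nonneg_right hnum ha
  have h7 : nn = p - p * α := by linarith
  have e8 : N ^ (-p) * U ^ p = U ^ p / N ^ p := by rw [hNp]; field_simp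
  have e9 : nn * (N ^ (-p) * G ^ (p - 1) * U ^ p) +
      N ^ (-p) * (-p * G ^ (p - 1) * U ^ p - (p - 1) * G ^ (p - 2) * g' * U ^ p +
        G ^ (p - 1) * (p * U ^ (p - 2) * v * du)) =
      (-(p * α * G ^ (p - 1)) - (p - 1) * G ^ (p - 2) * g') * (U ^ p / N ^ p) +
      N ^ (-p) * (G ^ (p - 1) * (p * U ^ (p - 2) * v * du)) := by
    rw [← e8, h7]; ring
  rw [e9]
  nlinarith

set_option maxHeartbeats 2000000 in
lemma hm_key (n : ℕ) (hn : 1 ≤ n) (p : ℝ) (hp : (n : ℝ) < p) : ∃ c > 0, ∀ D > 0,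
    ∀ u : EuclideanSpace ℝ (Fin n) → ℝ, ContDiff ℝ 1 u → HasCompactSupport u →
    (0 : EuclideanSpace ℝ (Fin n)) ∉ tsupport u → (∀ z ∈ tsupport u, ‖z‖ ≤ D) →
    ∀ x : EuclideanSpace ℝ (Fin n), x ≠ 0 → ‖x‖ ≤ D →
    c * (∫ z in closedBall x (‖x‖ / 2), (‖fderiv ℝ u z‖ ^ p + |u z| ^ p / ‖z‖ ^ p)) ≤
      (1 + Real.log (D / ‖x‖)) * ((∫ z, ‖fderiv ℝ u z‖ ^ p)
        - ((p - n) / p) ^ p * ∫ z, |u z| ^ p / ‖z‖ ^ p) ∧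
    Integrable (fun z => ‖fderiv ℝ u z‖ ^ p) ∧ Integrable (fun z => |u z| ^ p / ‖z‖ ^ p) := by
  have hn1 : (1 : ℝ) ≤ n := by exact_mod_cast hn
  have hp1 : 1 < p := by linarith
  have hp0 : 0 < p := by linarith
  set α := (p - n) / p with hαdef
  have hα : 0 < α := div_pos (by linarith) hp0
  have hα1 : α ≤ 1 := by rw [hαdef, div_le_one hp0]; linarith
  have hpα : p - n = p * α := by rw [hαdef]; field_simp
  obtain ⟨δ, κ, hδ, hκ, hκ1, hδα, hnum⟩ := hm_num2 p α hp1 hα hα1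
  obtain ⟨c, hc, hyoung⟩ := hm_young p hp1
  refine ⟨κ * (2 / 9) * min c 1, by positivity, ?_⟩
  intro D hD u hu hcs h0 hsupp x hx hxD
  have hxn : 0 < ‖x‖ := norm_pos_iff.2 hx
  set L := 1 + Real.log D with hLdef
  set T := L - Real.log ‖x‖ with hTdef
  have hTeq : 1 + Real.log (D / ‖x‖) = T := by
    rw [Real.log_div hD.ne' hxn.ne', hTdef, hLdef]; ring
  have hT : 1 ≤ T := by
    have := Real.log_le_log hxn hxD
    rw [hTdef, hLdef]; linarith
  rw [hTeq]
  have hz0 : ∀ z ∈ tsupport u, z ≠ 0 := by rintro z hz rfl; exact h0 hz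
  have hL : ∀ z ∈ tsupport u, 1 ≤ L - Real.log ‖z‖ := by
    intro z hz
    have := Real.log_le_log (norm_pos_iff.2 (hz0 z hz)) (hsupp z hz)
    rw [hLdef]; linarith
  have hy0 : ∀ t, 0 < Real.sigmoid t := Real.sigmoid_pos
  have hy1 : ∀ t, Real.sigmoid t < 1 := Real.sigmoid_lt_one
  have hor : ∀ t, t ≤ T ∨ Real.sigmoid (T - t) ≤ 1 / 2 := by
    intro t
    rcases le_total t T with h | h
    · exact Or.inl h
    · right
      have := Real.sigmoid_monotone (by linarith : T - t ≤ 0)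
      rw [Real.sigmoid_zero] at this
      linarith
  have hnum' : ∀ t : ℝ, 1 ≤ t → _ := fun t ht =>
    hnum t T (Real.sigmoid (T - t)) ht hT (hy0 _) (hy1 _) (hor t) (hmγ α δ T t) rfl
  have hγ : ∀ t, 1 ≤ t → 0 < hmγ α δ T t := fun t ht => by linarith [(hnum' t ht).1]
  set φ := hmφ p α δ T L u with hφdef
  have hφ : ContDiff ℝ 1 φ := hmφ_contDiff p α δ T L hp1 u hu h0 hL hγ
  have hφcs : HasCompactSupport φ := by
    apply hcs.mono
    intro z hz huz
    apply hz
    simp [hφdef, hmφ, huz, Real.zero_rpow hp0.ne']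
  obtain ⟨hdi, hd0⟩ := hm_div n φ hφ hφcs
  have hdc : Continuous (fderiv ℝ u) := hu.continuous_fderiv (by norm_num)
  have iA : Integrable (fun z => ‖fderiv ℝ u z‖ ^ p) := by
    apply Continuous.integrable_of_hasCompactSupport
    · exact hdc.norm.rpow_const (fun _ => Or.inr hp0.le)
    · apply (hcs.fderiv ℝ).mono
      intro z hz huz
      apply hz
      simp [huz, Real.zero_rpow hp0.ne']
  have iU : Integrable (fun z => |u z| ^ p / ‖z‖ ^ p) := by
    apply Continuous.integrable_of_hasCompactSupport
    · rw [continuous_iff_continuousAt]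
      intro z
      by_cases hz : z ∈ tsupport u
      · apply ContinuousAt.div
        · exact (hu.continuous.abs.rpow_const (fun _ => Or.inr hp0.le)).continuousAt
        · exact (continuous_norm.rpow_const (fun _ => Or.inr hp0.le)).continuousAt
        · have := norm_pos_iff.2 (hz0 z hz)
          positivity
      · have := notMem_tsupport_iff_eventuallyEq.1 hz
        have h2 : (fun z => |u z| ^ p / ‖z‖ ^ p) =ᶠ[nhds z] fun _ => 0 := by
          filter_upwards [this] with w hw
          simp [hw, Real.zero_rpow hp0.ne']
        exact continuousAt_const.congr h2.symm
    · apply hcs.mono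
      intro z hz huz
      apply hz
      simp [huz, Real.zero_rpow hp0.ne']
  refine ⟨?_, iA, iU⟩
  set B := closedBall x (‖x‖ / 2) with hB
  set c' := κ * (2 / 9) * min c 1 with hc'
  have hmin : 0 < min c 1 := by positivity
  have hptw : ∀ z, c' / T * B.indicator (fun z => ‖fderiv ℝ u z‖ ^ p + |u z| ^ p / ‖z‖ ^ p) z +
      (n * φ z + fderiv ℝ φ z z) ≤ ‖fderiv ℝ u z‖ ^ p - α ^ p * (|u z| ^ p / ‖z‖ ^ p) := by
    intro z
    by_cases hz : z ∈ tsupport u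
    · have hzne := hz0 z hz
      have hzn := norm_pos_iff.2 hzne
      have ht1 := hL z hz
      obtain ⟨q1, q2, q3⟩ := hnum' _ ht1
      have hr := hmφ_radial p α δ T L hp1 u hu z hzne _ _ _ rfl ht1 rfl rfl (hγ _ ht1)
        ((hφ.differentiable (by norm_num)) z)
      set t := L - Real.log ‖z‖ with htdef
      set y := Real.sigmoid (T - t) with hydef
      have hyy0 : 0 < y := hy0 _
      have hyy1 : y < 1 := hy1 _
      set η := κ * (y * (1 - y) / T) with hη
      have hη0 : 0 ≤ η := by
        have : 0 < 1 - y := by linarith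
        positivity
      have hη1 : η ≤ 1 := by
        have h1 : y * (1 - y) / T ≤ 1 := by
          rw [div_le_one (by linarith)]
          nlinarith
        have h2 : 0 ≤ y * (1 - y) / T := by
          have : 0 < 1 - y := by linarith
          positivity
        nlinarith
      have hyg := hyoung ‖fderiv ℝ u z‖ (hmγ α δ T t * (|u z| / ‖z‖)) η (norm_nonneg _)
        (mul_nonneg (hγ _ ht1).le (by positivity)) hη0 hη1
      have hdu : |fderiv ℝ u z z| ≤ ‖fderiv ℝ u z‖ * ‖z‖ := (fderiv ℝ u z).le_opNorm z
      have halg := hm_algebra p α c (hmγ α δ T t) _ η ‖fderiv ℝ u z‖ |u z| ‖z‖ (fderiv ℝ u z z) (u z)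
        n hp1 hpα (hγ _ ht1) hzn (norm_nonneg _) rfl hdu hyg q3
      rw [← hr] at halg
      refine le_trans ?_ halg
      apply add_le_add _ (le_of_eq rfl)
      by_cases hzB : z ∈ B
      · rw [indicator_of_mem hzB]
        rw [hB, mem_closedBall, dist_eq_norm] at hzB
        have n1 : ‖x‖ / 2 ≤ ‖z‖ := by
          have := norm_sub_norm_le x z
          rw [norm_sub_rev] at this
          linarith
        have n2 : ‖z‖ ≤ 2 * ‖x‖ := by
          have := norm_sub_norm_le z x
          linarith
        have ey : y = ‖z‖ / (‖z‖ + ‖x‖) := by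
          rw [hydef, Real.sigmoid_def, hTdef, htdef,
            show -(L - Real.log ‖x‖ - (L - Real.log ‖z‖)) = Real.log ‖x‖ - Real.log ‖z‖ by ring,
            Real.exp_sub, Real.exp_log hxn, Real.exp_log hzn]
          field_simp
        have y1 : 1 / 3 ≤ y := by
          rw [ey, div_le_div_iff₀ (by norm_num) (by positivity)]; linarith
        have y2 : y ≤ 2 / 3 := by
          rw [ey, div_le_div_iff₀ (by positivity) (by norm_num)]; linarith
        have y3 : 2 / 9 ≤ y * (1 - y) := by nlinarith
        have hη2 : κ * (2 / 9) / T ≤ η := by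
          have e7 : η = κ * (y * (1 - y)) / T := by rw [hη]; ring
          rw [e7]
          exact div_le_div_of_nonneg_right (mul_le_mul_of_nonneg_left y3 hκ.le) (by linarith)
        have a1 : 0 ≤ ‖fderiv ℝ u z‖ ^ p := by positivity
        have a2 : 0 ≤ |u z| ^ p / ‖z‖ ^ p := by positivity
        calc c' / T * (‖fderiv ℝ u z‖ ^ p + |u z| ^ p / ‖z‖ ^ p)
            = κ * (2 / 9) / T * (min c 1 * ‖fderiv ℝ u z‖ ^ p + min c 1 * (|u z| ^ p / ‖z‖ ^ p)) := by
              rw [hc']; ring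
          _ ≤ η * (c * ‖fderiv ℝ u z‖ ^ p + |u z| ^ p / ‖z‖ ^ p) := by
              apply mul_le_mul hη2 _ (by positivity) hη0
              have := mul_le_mul_of_nonneg_right (min_le_left c 1) a1
              have := mul_le_mul_of_nonneg_right (min_le_right c 1) a2
              linarith
      · rw [indicator_of_notMem hzB, mul_zero]
        positivity
    · have hev := notMem_tsupport_iff_eventuallyEq.1 hz
      have hu0 : u z = 0 := hev.eq_of_nhds
      have hf0 : fderiv ℝ u z = 0 := by
        rw [hev.fderiv_eq]; simp
      have hφev : φ =ᶠ[nhds z] fun _ => 0 := by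
        filter_upwards [hev] with w hw
        simp [hφdef, hmφ, hw, Real.zero_rpow hp0.ne']
      have hφ0 : φ z = 0 := hφev.eq_of_nhds
      have hφf : fderiv ℝ φ z = 0 := by
        rw [hφev.fderiv_eq]; simp
      by_cases hzB : z ∈ B <;> simp [hzB, hu0, hf0, hφ0, hφf, Real.zero_rpow hp0.ne']
  have hBm : MeasurableSet B := measurableSet_closedBall
  have iB : Integrable (fun z => c' / T *
      B.indicator (fun z => ‖fderiv ℝ u z‖ ^ p + |u z| ^ p / ‖z‖ ^ p) z) :=
    ((iA.add iU).indicator hBm).const_mul _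
  have hfin := integral_mono (iB.add hdi) (iA.sub (iU.const_mul (α ^ p))) hptw
  have e1 := integral_add iB hdi
  have e2 := integral_sub iA (iU.const_mul (α ^ p))
  simp only [Pi.add_apply, Pi.sub_apply] at hfin
  rw [e1, hd0, add_zero, e2, integral_const_mul, integral_const_mul, integral_indicator hBm,
    div_mul_eq_mul_div, div_le_iff₀ (by linarith)] at hfin
  linarith

lemma hm_cancel (n : ℕ) (p ω r X Q J : ℝ) (hω : 0 < ω) (hr : 0 < r)
    (h : r ^ n * ω * X ≤ Q * ((r ^ n * ω) ^ (1 - 1 / p) * J ^ (1 / p))) :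
    X ≤ Q * r ^ (-(n / p : ℝ)) * ω ^ (-(1 / p)) * J ^ (1 / p) := by
  have hV : 0 < r ^ n * ω := by positivity
  have e1 : (r ^ n * ω) ^ (1 - 1 / p) = (r ^ n * ω) * (r ^ (-(n / p : ℝ)) * ω ^ (-(1 / p))) := by
    rw [sub_eq_add_neg, Real.rpow_add hV, Real.rpow_one, Real.mul_rpow (by positivity) hω.le]
    congr 2
    rw [← Real.rpow_natCast, ← Real.rpow_mul hr.le]
    congr 1; ring
  rw [e1] at h
  apply le_of_mul_le_mul_left _ hV
  linarith

lemma hm_near (n : ℕ) (p : ℝ) (hp1 : 1 < p) (hp : (n : ℝ) < p)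
    (u : EuclideanSpace ℝ (Fin n) → ℝ) (hu : ContDiff ℝ 1 u)
    (x y : EuclideanSpace ℝ (Fin n)) (r : ℝ) (hr : 0 < r) (hxy : dist y x ≤ r) (J : ℝ)
    (hJ : ∫ z in closedBall x r, ‖fderiv ℝ u z‖ ^ p ≤ J) :
    |u x - u y| ≤ (3 * r / (1 - n / p)) * r ^ (-(n / p : ℝ)) *
      (volume.real (closedBall (0 : EuclideanSpace ℝ (Fin n)) 1)) ^ (-(1 / p)) * J ^ (1 / p) := by
  have hp0 : 0 < p := by linarith
  set W := closedBall x r with hWdef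
  set ω := volume.real (closedBall (0 : EuclideanSpace ℝ (Fin n)) 1) with hωdef
  have hω : 0 < ω := ENNReal.toReal_pos (measure_closedBall_pos _ _ one_pos).ne'
    measure_closedBall_lt_top.ne
  have hV : volume.real W = r ^ n * ω := by
    rw [hWdef, Measure.addHaar_real_closedBall' _ _ hr.le]
    simp [hωdef]
  have hW : IsCompact W := isCompact_closedBall _ _
  have hconv : Convex ℝ W := convex_closedBall _ _
  have hxW : x ∈ W := mem_closedBall_self hr.le
  have hyW : y ∈ W := hxy
  have m1 := hm_morrey n p hp1 hp W hW hconv x hxW r hr.le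
    (fun z hz => by rw [← dist_eq_norm]; exact hz) u hu
  have m2 := hm_morrey n p hp1 hp W hW hconv y hyW (2 * r) (by linarith)
    (fun z hz => by
      rw [← dist_eq_norm]
      have h1 : dist z x ≤ r := hz
      have := dist_triangle_right z y x
      linarith) u hu
  have hnp : 0 < 1 - (n : ℝ) / p := by
    rw [sub_pos, div_lt_one hp0]; exact hp
  have hcu := hu.continuous
  have i1 : ∀ w, IntegrableOn (fun z => |u z - u w|) W := fun w =>
    (by fun_prop : Continuous (fun z => |u z - u w|)).continuousOn.integrableOn_compact hW
  have h0 : volume.real W * |u x - u y| ≤ (∫ z in W, |u z - u x|) + ∫ z in W, |u z - u y| := by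
    rw [← integral_add (i1 x) (i1 y), ← smul_eq_mul, ← setIntegral_const]
    apply integral_mono _ ((i1 x).add (i1 y))
    · intro z
      have := abs_sub_le (u x) (u z) (u y)
      rw [abs_sub_comm (u x) (u z)] at this
      exact this
    · exact integrableOn_const hW.measure_lt_top.ne
  have hI0 : 0 ≤ ∫ z in W, ‖fderiv ℝ u z‖ ^ p := integral_nonneg fun _ => by positivity
  have hJ' := Real.rpow_le_rpow hI0 hJ (by positivity : 0 ≤ 1 / p)
  apply hm_cancel n p ω r _ _ J hω hr
  rw [← hV]
  calc _ ≤ _ := h0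
    _ ≤ (3 * r / (1 - n / p)) * (volume.real W ^ (1 - 1 / p) *
      (∫ z in W, ‖fderiv ℝ u z‖ ^ p) ^ (1 / p)) := by
        refine (add_le_add m1 m2).trans (le_of_eq ?_)
        ring
    _ ≤ _ := by
      apply mul_le_mul_of_nonneg_left _ (by positivity)
      exact mul_le_mul_of_nonneg_left hJ' (by positivity)

lemma hm_sup (n : ℕ) (p : ℝ) (hp1 : 1 < p) (hp : (n : ℝ) < p)
    (u : EuclideanSpace ℝ (Fin n) → ℝ) (hu : ContDiff ℝ 1 u)
    (x : EuclideanSpace ℝ (Fin n)) (r : ℝ) (hr : 0 < r) (hxr : r = ‖x‖ / 2) (J : ℝ)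
    (hJ : ∫ z in closedBall x r, ‖fderiv ℝ u z‖ ^ p ≤ J)
    (hJ2 : ∫ z in closedBall x r, |u z| ^ p / ‖z‖ ^ p ≤ J)
    (hi : IntegrableOn (fun z => |u z| ^ p / ‖z‖ ^ p) (closedBall x r)) :
    |u x| ≤ (r / (1 - n / p) + 3 * r) * r ^ (-(n / p : ℝ)) *
      (volume.real (closedBall (0 : EuclideanSpace ℝ (Fin n)) 1)) ^ (-(1 / p)) * J ^ (1 / p) := by
  have hp0 : 0 < p := by linarith
  set W := closedBall x r with hWdef
  set ω := volume.real (closedBall (0 : EuclideanSpace ℝ (Fin n)) 1) with hωdef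
  have hω : 0 < ω := ENNReal.toReal_pos (measure_closedBall_pos _ _ one_pos).ne'
    measure_closedBall_lt_top.ne
  have hV : volume.real W = r ^ n * ω := by
    rw [hWdef, Measure.addHaar_real_closedBall' _ _ hr.le]
    simp [hωdef]
  have hW : IsCompact W := isCompact_closedBall _ _
  have hconv : Convex ℝ W := convex_closedBall _ _
  have hxW : x ∈ W := mem_closedBall_self hr.le
  have m1 := hm_morrey n p hp1 hp W hW hconv x hxW r hr.le
    (fun z hz => by rw [← dist_eq_norm]; exact hz) u hu
  have hnp : 0 < 1 - (n : ℝ) / p := by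
    rw [sub_pos, div_lt_one hp0]; exact hp
  have hcu := hu.continuous
  have i1 : IntegrableOn (fun z => |u z - u x|) W :=
    (by fun_prop : Continuous (fun z => |u z - u x|)).continuousOn.integrableOn_compact hW
  have i2 : IntegrableOn (fun z => |u z|) W :=
    (by fun_prop : Continuous (fun z => |u z|)).continuousOn.integrableOn_compact hW
  have i3 : IntegrableOn (fun z => |u z| ^ p) W :=
    (hcu.abs.rpow_const (fun _ => Or.inr hp0.le)).continuousOn.integrableOn_compact hW
  have h0 : volume.real W * |u x| ≤ (∫ z in W, |u z - u x|) + ∫ z in W, |u z| := by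
    rw [← integral_add i1 i2, ← smul_eq_mul, ← setIntegral_const]
    apply integral_mono _ (i1.add i2)
    · intro z
      have := abs_sub_abs_le_abs_sub (u x) (u z)
      rw [abs_sub_comm (u x) (u z)] at this
      show |u x| ≤ |u z - u x| + |u z|
      linarith
    · exact integrableOn_const hW.measure_lt_top.ne
  have hfin : IsFiniteMeasure (volume.restrict W) :=
    ⟨by rw [Measure.restrict_apply_univ]; exact hW.measure_lt_top⟩
  have m2 := hm_holder (volume.restrict W) p hp1 (fun z => |u z|)
      hcu.abs.aestronglyMeasurable (fun _ => abs_nonneg _) i3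
  have hmr : (volume.restrict W).real univ = volume.real W := by
      simp [Measure.real]
  rw [hmr] at m2
  have hI0 : 0 ≤ ∫ z in W, ‖fderiv ℝ u z‖ ^ p := integral_nonneg fun _ => by positivity
  have hU0 : 0 ≤ ∫ z in W, |u z| ^ p := integral_nonneg fun _ => by positivity
  have hJ0 : 0 ≤ J := hI0.trans hJ
  have hJ' := Real.rpow_le_rpow hI0 hJ (by positivity : 0 ≤ 1 / p)
  have hU : ∫ z in W, |u z| ^ p ≤ (3 * r) ^ p * J := by
    calc ∫ z in W, |u z| ^ p ≤ ∫ z in W, (3 * r) ^ p * (|u z| ^ p / ‖z‖ ^ p) := by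
          apply setIntegral_mono_on i3 (hi.const_mul _) hW.measurableSet
          intro z hz
          have hz' : ‖z - x‖ ≤ r := by rw [← dist_eq_norm]; exact hz
          have n1 : r ≤ ‖z‖ := by
            have := norm_sub_norm_le x z
            rw [norm_sub_rev] at this
            linarith
          have n2 : ‖z‖ ≤ 3 * r := by
            have := norm_sub_norm_le z x
            linarith
          have hz0 : 0 < ‖z‖ := by linarith
          have h3 := Real.rpow_le_rpow hz0.le n2 hp0.le
          have h4 : 0 < ‖z‖ ^ p := by positivity
          rw [← mul_div_assoc, le_div_iff₀ h4, mul_comm]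
          exact mul_le_mul_of_nonneg_right h3 (by positivity)
      _ ≤ _ := by
          rw [integral_const_mul]
          exact mul_le_mul_of_nonneg_left hJ2 (by positivity)
  have hU' := Real.rpow_le_rpow hU0 hU (by positivity : 0 ≤ 1 / p)
  rw [Real.mul_rpow (by positivity) hJ0, ← Real.rpow_mul (by positivity),
    mul_one_div_cancel hp0.ne', Real.rpow_one] at hU'
  apply hm_cancel n p ω r _ _ J hω hr
  rw [← hV]
  have hVp : 0 ≤ volume.real W ^ (1 - 1 / p) := by positivity
  have s1 := mul_le_mul_of_nonneg_left (mul_le_mul_of_nonneg_left hJ' hVp)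
    (by positivity : 0 ≤ r / (1 - n / p))
  have s2 := mul_le_mul_of_nonneg_left hU' hVp
  linarith

lemma hm_mono (n : ℕ) (p : ℝ) (hp1 : 1 < p) (hp : (n : ℝ) < p) (D ρ r : ℝ) (hρ : 0 < ρ)
    (hρr : ρ ≤ r) (hrD : r ≤ D) (hρD : 2 * ρ ≤ D) (I : ℝ) (hI : 0 ≤ I) :
    ρ ^ (1 - n / p : ℝ) * ((1 + Real.log (D / (2 * ρ))) * I) ^ (1 / p) ≤
    (1 + 1 / (p - n)) ^ (1 / p) * (r ^ (1 - n / p : ℝ) * ((1 + Real.log (D / r)) * I) ^ (1 / p)) := by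
  have hp0 : 0 < p := by linarith
  have hr : 0 < r := by linarith
  have hD : 0 < D := by linarith
  have hq : 0 < p - n := by linarith
  have e : ∀ a : ℝ, 0 < a → a ^ (1 - n / p : ℝ) = (a ^ (p - n)) ^ (1 / p) := by
    intro a ha
    rw [← Real.rpow_mul ha.le]; congr 1; field_simp
  have hTr : 1 ≤ 1 + Real.log (D / r) := by
    have := Real.log_nonneg ((one_le_div hr).2 hrD)
    linarith
  have hTx : 1 ≤ 1 + Real.log (D / (2 * ρ)) := by
    have := Real.log_nonneg ((one_le_div (by positivity)).2 hρD)
    linarith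
  set Tr := 1 + Real.log (D / r) with hTrd
  set Tx := 1 + Real.log (D / (2 * ρ)) with hTxd
  rw [e ρ hρ, e r hr, ← Real.mul_rpow (by positivity) (by positivity),
    ← Real.mul_rpow (by positivity) (by positivity), ← Real.mul_rpow (by positivity) (by positivity)]
  apply Real.rpow_le_rpow (by positivity) _ (by positivity)
  have h1 : Tx ≤ Tr + Real.log (r / ρ) := by
    rw [hTxd, hTrd, Real.log_div hD.ne' hr.ne', Real.log_div hr.ne' hρ.ne',
      Real.log_div hD.ne' (by positivity)]
    have := Real.log_le_log hρ (by linarith : ρ ≤ 2 * ρ)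
    linarith
  have h2 : Real.log (r / ρ) ≤ (r / ρ) ^ (p - n) / (p - n) :=
    Real.log_le_rpow_div (by positivity) hq
  rw [Real.div_rpow hr.le hρ.le] at h2
  have h3 : ρ ^ (p - n) ≤ r ^ (p - n) := Real.rpow_le_rpow hρ.le hρr hq.le
  have hρq : 0 < ρ ^ (p - n) := by positivity
  have hrq : 0 < r ^ (p - n) := by positivity
  have h4 : ρ ^ (p - n) * Tx ≤ (1 + 1 / (p - n)) * (r ^ (p - n) * Tr) := by
    calc ρ ^ (p - n) * Tx ≤ ρ ^ (p - n) * (Tr + r ^ (p - n) / ρ ^ (p - n) / (p - n)) :=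
          mul_le_mul_of_nonneg_left (by linarith) hρq.le
      _ = ρ ^ (p - n) * Tr + r ^ (p - n) * (1 / (p - n)) := by field_simp
      _ ≤ r ^ (p - n) * Tr + r ^ (p - n) * (1 / (p - n)) * Tr := by
          apply add_le_add
          · exact mul_le_mul_of_nonneg_right h3 (by linarith)
          · exact le_mul_of_one_le_right (by positivity) hTr
      _ = _ := by ring
  have := mul_le_mul_of_nonneg_right h4 hI
  linarith

lemma hm_main (n : ℕ) (hn : 1 ≤ n) (p : ℝ) (hp : (n : ℝ) < p) : ∃ C > 0, ∀ D > 0,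
    ∀ u : EuclideanSpace ℝ (Fin n) → ℝ, ContDiff ℝ 1 u → HasCompactSupport u →
    (0 : EuclideanSpace ℝ (Fin n)) ∉ tsupport u → (∀ z ∈ tsupport u, ‖z‖ ≤ D) →
    ∀ x y : EuclideanSpace ℝ (Fin n), x ≠ y → ‖x‖ ≤ D → ‖y‖ ≤ D → dist x y ≤ D →
    0 ≤ ((∫ z, ‖fderiv ℝ u z‖ ^ p) - ((p - n) / p) ^ p * ∫ z, |u z| ^ p / ‖z‖ ^ p) ∧
    |u x - u y| ≤ C * dist x y ^ (1 - (n : ℝ) / p) * ((1 + Real.log (D / dist x y)) *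
      ((∫ z, ‖fderiv ℝ u z‖ ^ p)
        - ((p - n) / p) ^ p * ∫ z, |u z| ^ p / ‖z‖ ^ p)) ^ (1 / p) := by
  have hn1 : (1 : ℝ) ≤ n := by exact_mod_cast hn
  have hp1 : 1 < p := by linarith
  have hp0 : 0 < p := by linarith
  obtain ⟨c, hc, hkey⟩ := hm_key n hn p hp
  set ω := volume.real (closedBall (0 : EuclideanSpace ℝ (Fin n)) 1) with hωdef
  have hω : 0 < ω := ENNReal.toReal_pos (measure_closedBall_pos _ _ one_pos).ne'
    measure_closedBall_lt_top.ne
  have hβ : 0 < 1 - (n : ℝ) / p := by rw [sub_pos, div_lt_one hp0]; exact hp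
  have hq : 0 < p - n := by linarith
  set β := 1 - (n : ℝ) / p with hβdef
  set M := ω ^ (-(1 / p)) * (1 / c) ^ (1 / p) with hM
  have hMpos : 0 < M := by positivity
  set C1 := 3 / β * M with hC1
  set C2 := (1 / β + 3) * M * (1 + 1 / (p - n)) ^ (1 / p) with hC2
  have hC1pos : 0 < C1 := by positivity
  have hC2pos : 0 < C2 := by positivity
  refine ⟨C1 + 2 * C2, by positivity, ?_⟩
  intro D hD u hu hcs h0 hsupp x y hxy hx hy hd
  set I := ((∫ z, ‖fderiv ℝ u z‖ ^ p) - ((p - n) / p) ^ p * ∫ z, |u z| ^ p / ‖z‖ ^ p) with hI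
  set r := dist x y with hr
  have hrpos : 0 < r := dist_pos.2 hxy
  have hTge : ∀ s, 0 < s → s ≤ D → 1 ≤ 1 + Real.log (D / s) := by
    intro s hs hsD
    have := Real.log_nonneg ((one_le_div hs).2 hsD)
    linarith
  have hTr := hTge r hrpos hd
  have hsub : ∀ r' (w : EuclideanSpace ℝ (Fin n)), w ≠ 0 → ‖w‖ ≤ D → r' ≤ ‖w‖ / 2 →
      (∫ z in closedBall w r', ‖fderiv ℝ u z‖ ^ p ≤ 1 / c * ((1 + Real.log (D / ‖w‖)) * I)) ∧
      (∫ z in closedBall w r', |u z| ^ p / ‖z‖ ^ p ≤ 1 / c * ((1 + Real.log (D / ‖w‖)) * I)) ∧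
      Integrable (fun z => |u z| ^ p / ‖z‖ ^ p) := by
    intro r' w hw hwD hr'
    obtain ⟨k1, k2, k3⟩ := hkey D hD u hu hcs h0 hsupp w hw hwD
    have hk : ∫ z in closedBall w (‖w‖ / 2), (‖fderiv ℝ u z‖ ^ p + |u z| ^ p / ‖z‖ ^ p) ≤
        1 / c * ((1 + Real.log (D / ‖w‖)) * I) := by
      rw [one_div, ← div_eq_inv_mul, le_div_iff₀ hc]
      linarith
    refine ⟨le_trans ?_ hk, le_trans ?_ hk, k3⟩
    · calc _ ≤ ∫ z in closedBall w (‖w‖ / 2), ‖fderiv ℝ u z‖ ^ p :=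
          setIntegral_mono_set k2.integrableOn (Filter.Eventually.of_forall fun z => by positivity)
            (closedBall_subset_closedBall hr').eventuallyLE
        _ ≤ _ := by
          apply integral_mono k2.integrableOn (k2.add k3).integrableOn
          intro z
          have : 0 ≤ |u z| ^ p / ‖z‖ ^ p := by positivity
          simpa using this
    · calc _ ≤ ∫ z in closedBall w (‖w‖ / 2), |u z| ^ p / ‖z‖ ^ p :=
          setIntegral_mono_set k3.integrableOn (Filter.Eventually.of_forall fun z => by positivity)
            (closedBall_subset_closedBall hr').eventuallyLE
        _ ≤ _ := by
          apply integral_mono k3.integrableOn (k2.add k3).integrableOn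
          intro z
          have : 0 ≤ ‖fderiv ℝ u z‖ ^ p := by positivity
          simpa using this
  have hI0aux : ∀ w : EuclideanSpace ℝ (Fin n), w ≠ 0 → ‖w‖ ≤ D → 0 ≤ I := by
    intro w hw hwD
    have k1 := (hsub (‖w‖ / 2) w hw hwD le_rfl).1
    have k2 : 0 ≤ ∫ z in closedBall w (‖w‖ / 2), ‖fderiv ℝ u z‖ ^ p :=
      integral_nonneg fun _ => by positivity
    have hT := hTge ‖w‖ (norm_pos_iff.2 hw) hwD
    by_contra hneg
    push Not at hneg
    have : 1 / c * ((1 + Real.log (D / ‖w‖)) * I) < 0 :=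
      mul_neg_of_pos_of_neg (by positivity) (mul_neg_of_pos_of_neg (by linarith) hneg)
    linarith
  have hI0 : 0 ≤ I := by
    by_cases h : x = 0
    · exact hI0aux y (by rw [h] at hxy; exact hxy.symm) hy
    · exact hI0aux x h hx
  refine ⟨hI0, ?_⟩
  have hrβ : ∀ s : ℝ, 0 < s → s * s ^ (-(n / p : ℝ)) = s ^ β := by
    intro s hs
    rw [hβdef, sub_eq_add_neg, Real.rpow_add hs, Real.rpow_one]
  have hMJ : ∀ J : ℝ, 0 ≤ J → ω ^ (-(1 / p)) * (1 / c * J) ^ (1 / p) = M * J ^ (1 / p) := by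
    intro J hJ
    rw [Real.mul_rpow (by positivity) hJ, hM]; ring
  set R := r ^ β * ((1 + Real.log (D / r)) * I) ^ (1 / p) with hR
  have hR0 : 0 ≤ R := by positivity
  have goal_eq : (C1 + 2 * C2) * r ^ β * ((1 + Real.log (D / r)) * I) ^ (1 / p) =
      (C1 + 2 * C2) * R := by rw [hR]; ring
  rw [goal_eq]
  -- near case
  have near : ∀ a b : EuclideanSpace ℝ (Fin n), ‖a‖ ≤ D → dist b a = r → r ≤ ‖a‖ / 2 →
      |u a - u b| ≤ C1 * R := by
    intro a b ha hab hra
    have han : 0 < ‖a‖ := by linarith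
    have hTa := hTge ‖a‖ han ha
    have hb := hm_near n p hp1 hp u hu a b r hrpos hab.le _ (hsub r a (norm_pos_iff.1 han) ha hra).1
    have e : 3 * r / β * r ^ (-(n / p : ℝ)) * ω ^ (-(1 / p)) *
        (1 / c * ((1 + Real.log (D / ‖a‖)) * I)) ^ (1 / p) =
        C1 * (r ^ β * ((1 + Real.log (D / ‖a‖)) * I) ^ (1 / p)) := by
      rw [mul_assoc _ (ω ^ (-(1 / p))), hMJ _ (by positivity), ← hrβ r hrpos, hC1]
      ring
    rw [← hβdef, ← hωdef, e] at hb
    refine hb.trans (mul_le_mul_of_nonneg_left ?_ hC1pos.le)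
    apply mul_le_mul_of_nonneg_left _ (by positivity)
    apply Real.rpow_le_rpow (by positivity) _ (by positivity)
    apply mul_le_mul_of_nonneg_right _ hI0
    have : Real.log (D / ‖a‖) ≤ Real.log (D / r) := by
      apply Real.log_le_log (by positivity)
      exact div_le_div_of_nonneg_left hD.le hrpos (by linarith)
    linarith
  have far : ∀ a : EuclideanSpace ℝ (Fin n), ‖a‖ ≤ D → ‖a‖ / 2 ≤ r → |u a| ≤ C2 * R := by
    intro a ha har
    by_cases ha0 : a = 0
    · have : u a = 0 := by rw [ha0]; exact image_eq_zero_of_notMem_tsupport h0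
      rw [this, abs_zero]
      positivity
    have han : 0 < ‖a‖ := norm_pos_iff.2 ha0
    have hTa := hTge ‖a‖ han ha
    obtain ⟨k1, k2, k3⟩ := hsub (‖a‖ / 2) a ha0 ha le_rfl
    have hb := hm_sup n p hp1 hp u hu a (‖a‖ / 2) (by positivity) rfl _ k1 k2 k3.integrableOn
    have hmon := hm_mono n p hp1 hp D (‖a‖ / 2) r (by positivity) har hd (by linarith) I hI0
    rw [← hβdef, ← hωdef] at hb
    rw [← hβdef, show 2 * (‖a‖ / 2) = ‖a‖ by ring] at hmon
    set ρ := ‖a‖ / 2 with hρ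
    have e : (ρ / β + 3 * ρ) * ρ ^ (-(n / p : ℝ)) * ω ^ (-(1 / p)) *
        (1 / c * ((1 + Real.log (D / ‖a‖)) * I)) ^ (1 / p) =
        (1 / β + 3) * M * (ρ ^ β * ((1 + Real.log (D / ‖a‖)) * I) ^ (1 / p)) := by
      rw [mul_assoc _ (ω ^ (-(1 / p))), hMJ _ (by positivity), ← hrβ ρ (by positivity)]
      ring
    rw [e] at hb
    refine hb.trans ((mul_le_mul_of_nonneg_left hmon (by positivity)).trans (le_of_eq ?_))
    rw [hC2, hR]; ring
  by_cases c1 : r ≤ ‖x‖ / 2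
  · have := near x y hx (by rw [dist_comm]) c1
    nlinarith
  by_cases c2 : r ≤ ‖y‖ / 2
  · have := near y x hy rfl c2
    rw [abs_sub_comm]
    nlinarith
  push Not at c1 c2
  have f1 := far x hx c1.le
  have f2 := far y hy c2.le
  have := abs_sub (u x) (u y)
  nlinarith

/-- optimal Hardy–Morrey inequality, distance to the origin. -/
theorem hardy_morrey_origin (n : ℕ) (hn : 1 ≤ n) (p : ℝ) (hp : (n : ℝ) < p) :
    ∃ B C : ℝ, 1 ≤ B ∧ 0 < C ∧
      ∀ Ω : Set (EuclideanSpace ℝ (Fin n)), IsOpen Ω → IsConnected Ω →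
        Bornology.IsBounded Ω → (0 : EuclideanSpace ℝ (Fin n)) ∈ Ω →
        ∀ u : EuclideanSpace ℝ (Fin n) → ℝ, ContDiff ℝ (⊤ : ℕ∞) u →
          HasCompactSupport u → tsupport u ⊆ Ω \ {0} →
          ∀ x ∈ Ω, ∀ y ∈ Ω, x ≠ y →
            |u x - u y| * ((1 - Real.log (dist x y / (B * Metric.diam Ω)))⁻¹) ^ (1 / p) ≤
              C * dist x y ^ (1 - (n : ℝ) / p) *
                ((∫ z in Ω, ‖fderiv ℝ u z‖ ^ p)
                  - ((p - n) / p) ^ p * ∫ z in Ω, |u z| ^ p / ‖z‖ ^ p) ^ (1 / p) := by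
  obtain ⟨C, hC, hmain⟩ := hm_main n hn p hp
  refine ⟨1, C, le_rfl, hC, ?_⟩
  intro Ω hΩ _ hbd h0 u hu hcs hsupp x hx y hy hxy
  have hn1 : (1 : ℝ) ≤ n := by exact_mod_cast hn
  have hp0 : 0 < p := by linarith
  have hr : 0 < dist x y := dist_pos.2 hxy
  have hnorm : ∀ z ∈ Ω, ‖z‖ ≤ diam Ω := by
    intro z hz
    have := dist_le_diam_of_mem hbd hz h0
    rwa [dist_zero_right] at this
  have hrD := dist_le_diam_of_mem hbd hx hy
  have hD : 0 < diam Ω := by linarith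
  have hout : ∀ z ∉ Ω, z ∉ tsupport u := fun z hz h => hz (hsupp h).1
  have e1 : ∫ z in Ω, ‖fderiv ℝ u z‖ ^ p = ∫ z, ‖fderiv ℝ u z‖ ^ p := by
    apply setIntegral_eq_integral_of_forall_compl_eq_zero
    intro z hz
    have hev := notMem_tsupport_iff_eventuallyEq.1 (hout z hz)
    have : fderiv ℝ u z = 0 := by rw [hev.fderiv_eq]; simp
    rw [this, norm_zero, Real.zero_rpow hp0.ne']
  have e2 : ∫ z in Ω, |u z| ^ p / ‖z‖ ^ p = ∫ z, |u z| ^ p / ‖z‖ ^ p := by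
    apply setIntegral_eq_integral_of_forall_compl_eq_zero
    intro z hz
    rw [image_eq_zero_of_notMem_tsupport (hout z hz), abs_zero, Real.zero_rpow hp0.ne', zero_div]
  obtain ⟨hI, hfin⟩ := hmain (diam Ω) hD u (hu.of_le (by exact_mod_cast le_top)) hcs
    (fun h => (hsupp h).2 rfl) (fun z hz => hnorm z (hsupp hz).1) x y hxy (hnorm x hx) (hnorm y hy) hrD
  rw [e1, e2, one_mul]
  set I := ((∫ z, ‖fderiv ℝ u z‖ ^ p) - ((p - n) / p) ^ p * ∫ z, |u z| ^ p / ‖z‖ ^ p) with hIdef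
  have eT : 1 - Real.log (dist x y / diam Ω) = 1 + Real.log (diam Ω / dist x y) := by
    rw [Real.log_div hr.ne' hD.ne', Real.log_div hD.ne' hr.ne']; ring
  rw [eT]
  have hT : 1 ≤ 1 + Real.log (diam Ω / dist x y) := by
    have := Real.log_nonneg ((one_le_div hr).2 hrD)
    linarith
  set T := 1 + Real.log (diam Ω / dist x y) with hTdef
  have hTp : 0 < T ^ (1 / p) := by positivity
  rw [Real.mul_rpow (by linarith) hI] at hfin
  rw [Real.inv_rpow (by linarith), ← div_eq_mul_inv, div_le_iff₀ hTp]
  linarith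
end

section
/- Let n ≥ 2, p > n and 1 ≤ q < p. There exist constants Θ = Θ(n,p,q) ≥ 0 and C = C(n,p,q) > 0 such that for every bounded domain Ω ⊂ ℝⁿ containing the origin, every u ∈ C_c^∞(Ω \ {0}), every open ball B_r ⊂ ℝⁿ of radius r ∈ (0, diam(Ω)), and every D ≥ e^Θ · diam(Ω), one has r^{n/p} · X^{1/p}(r/D) · ( (1/(ω_n rⁿ)) ∫_{B_r} |u(x)|^q / |x|^q dx )^{1/q} ≤ C · ( ∫_Ω |∇u|^p dx − ((p−n)/p)^p ∫_Ω |u|^p/|x|^p dx )^{1/p}, where u is extended by zero outside Ω. -/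
open MeasureTheory Metric Set

lemma hl_abs_rpow_split {p : ℝ} (hp : 2 < p) (a : ℝ) : |a| ^ p = |a| ^ (p - 2) * a ^ 2 := by
  rcases eq_or_ne a 0 with rfl | ha
  · simp [Real.zero_rpow (by linarith : p ≠ 0)]
  · have h : 0 < |a| := abs_pos.mpr ha
    rw [← sq_abs, ← Real.rpow_natCast, ← Real.rpow_add h]
    congr 1; push_cast; ring

lemma hl_tangent {p : ℝ} (hp : 2 < p) (x b : ℝ) :
    |x| ^ p + p / 2 * |x| ^ (p - 2) * (b ^ 2 - x ^ 2) ≤ |b| ^ p := by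
  rcases eq_or_ne x 0 with rfl | hx
  · rw [abs_zero, Real.zero_rpow (by linarith), Real.zero_rpow (by linarith)]
    simp only [mul_zero, zero_mul, add_zero]
    positivity
  · have h : 0 < |x| := abs_pos.mpr hx
    have hx2 : 0 < x ^ 2 := by positivity
    have hB := one_add_mul_self_le_rpow_one_add (s := b ^ 2 / x ^ 2 - 1) (p := p / 2)
      (by have : 0 ≤ b ^ 2 / x ^ 2 := by positivity
          linarith) (by linarith)
    have e1 : (1 + (b ^ 2 / x ^ 2 - 1)) ^ (p / 2) = |b| ^ p / |x| ^ p := by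
      rw [add_sub_cancel, ← div_pow, ← sq_abs, abs_div, ← Real.rpow_natCast, ← Real.rpow_mul (by positivity),
        Real.div_rpow (by positivity) (by positivity)]
      congr 2 <;> · push_cast; ring
    rw [e1, le_div_iff₀ (by positivity)] at hB
    refine le_trans (le_of_eq ?_) hB
    rw [hl_abs_rpow_split hp x]
    field_simp

lemma hl_pt {p H : ℝ} (hp : 2 < p) (hH : 0 < H) (φ a b : ℝ) :
    |a| ^ (p - 2) * ((H ^ (p - 1) - 2 * H ^ (p - 2) / p * φ) * (p * a * b - p * H * a ^ 2)
      - 2 * H ^ (p - 2) / p * φ ^ 2 * a ^ 2) ≤ |b| ^ p - H ^ p * |a| ^ p := by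
  have h := hl_tangent hp (H * a) b
  rw [abs_mul, abs_of_pos hH, Real.mul_rpow hH.le (abs_nonneg a),
    Real.mul_rpow hH.le (abs_nonneg a)] at h
  have e : H ^ (p - 1) = H ^ (p - 2) * H := by
    nth_rw 3 [← Real.rpow_one H]
    rw [← Real.rpow_add hH]; congr 1; ring
  rw [e]
  have hA : 0 ≤ H ^ (p - 2) := by positivity
  have hB : 0 ≤ |a| ^ (p - 2) := by positivity
  have : 0 ≤ |a| ^ (p - 2) * H ^ (p - 2) * (p / 2 * (b - H * a + 2 / p * φ * a) ^ 2) := by positivity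
  have e2 : p / 2 * (H ^ (p - 2) * |a| ^ (p - 2)) * (b ^ 2 - (H * a) ^ 2) =
     |a| ^ (p - 2) * ((H ^ (p - 2) * H - 2 * H ^ (p - 2) / p * φ) * (p * a * b - p * H * a ^ 2)
      - 2 * H ^ (p - 2) / p * φ ^ 2 * a ^ 2) +
      |a| ^ (p - 2) * H ^ (p - 2) * (p / 2 * (b - H * a + 2 / p * φ * a) ^ 2) := by
    field_simp
    ring
  linarith

lemma hl_1d_gen {n : ℕ} (hn : 2 ≤ n) {p H : ℝ} (hp : (n : ℝ) < p) (hH : H = (p - n) / p)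
    {f f' φ : ℝ → ℝ} (hf : ∀ t, HasDerivAt f (f' t) t) (hf' : Continuous f')
    {a b : ℝ} (ha : 0 < a) (hab : a ≤ b)
    (hφ : ∀ t ∈ Icc a b, HasDerivAt φ (φ t ^ 2 / t) t) :
    (H ^ (p - 1) - 2 * H ^ (p - 2) / p * φ b) * (|f b| ^ p * b ^ ((n : ℝ) - p)) -
      (H ^ (p - 1) - 2 * H ^ (p - 2) / p * φ a) * (|f a| ^ p * a ^ ((n : ℝ) - p)) ≤
    ∫ t in a..b, t ^ (n - 1) * (|f' t| ^ p - H ^ p * (|f t| ^ p / t ^ p)) := by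
  have hn' : (2 : ℝ) ≤ n := by exact_mod_cast hn
  have hp2 : 2 < p := by linarith
  have hH0 : 0 < H := by rw [hH]; apply div_pos <;> linarith
  have hfc : Continuous f := continuous_iff_continuousAt.2 fun t => (hf t).continuousAt
  have hd : ∀ t ∈ Icc a b, HasDerivAt (fun t => (H ^ (p - 1) - 2 * H ^ (p - 2) / p * φ t) *
      (|f t| ^ p * t ^ ((n : ℝ) - p)))
      ((- (2 * H ^ (p - 2) / p * (φ t ^ 2 / t))) * (|f t| ^ p * t ^ ((n : ℝ) - p)) +
       (H ^ (p - 1) - 2 * H ^ (p - 2) / p * φ t) *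
        ((p * |f t| ^ (p - 2) * f t * f' t) * t ^ ((n : ℝ) - p) +
          |f t| ^ p * (((n : ℝ) - p) * t ^ ((n : ℝ) - p - 1)))) t := by
    intro t ht
    have ht0 : 0 < t := ha.trans_le ht.1
    have h1 : HasDerivAt (fun t => |f t| ^ p) (p * |f t| ^ (p - 2) * f t * f' t) t :=
      (hasDerivAt_abs_rpow (f t) (by linarith : 1 < p)).comp t (hf t)
    have h2 := Real.hasDerivAt_rpow_const (x := t) (p := (n : ℝ) - p) (Or.inl ht0.ne')
    have h3 := ((hφ t ht).const_mul (2 * H ^ (p - 2) / p)).const_sub (H ^ (p - 1))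
    exact h3.mul (h1.mul h2)
  refine intervalIntegral.sub_le_integral_of_hasDeriv_right_of_le hab
    (g := fun t => (H ^ (p - 1) - 2 * H ^ (p - 2) / p * φ t) *
      (|f t| ^ p * t ^ ((n : ℝ) - p)))
    (fun t ht => (hd t ht).continuousAt.continuousWithinAt)
    (fun t ht => (hd t (Ioo_subset_Icc_self ht)).hasDerivWithinAt) ?_ ?_
  · apply ContinuousOn.integrableOn_Icc
    have hp0 : 0 ≤ p := by linarith
    intro t ht
    have ht0 : 0 < t := ha.trans_le ht.1
    apply ContinuousAt.continuousWithinAt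
    have h1 : ContinuousAt (fun t : ℝ => t ^ p) t := Real.continuousAt_rpow_const _ _ (Or.inl ht0.ne')
    have h2 : Continuous (fun t : ℝ => |f t| ^ p) := hfc.abs.rpow_const (fun _ => Or.inr hp0)
    have h3 : Continuous (fun t : ℝ => |f' t| ^ p) := hf'.abs.rpow_const (fun _ => Or.inr hp0)
    exact (continuousAt_id.pow _).mul (h3.continuousAt.sub
      (continuousAt_const.mul (h2.continuousAt.div h1 (Real.rpow_pos_of_pos ht0 _).ne')))
  · intro t ht
    have ht0 : 0 < t := ha.trans ht.1
    have h := hl_pt hp2 hH0 (φ t) (f t) (t * f' t)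
    have hT : 0 < t ^ ((n : ℝ) - p - 1) := Real.rpow_pos_of_pos ht0 _
    have e1 : t ^ ((n : ℝ) - p) = t ^ ((n : ℝ) - p - 1) * t := by
      nth_rw 3 [← Real.rpow_one t]
      rw [← Real.rpow_add ht0]; congr 1; ring
    have e2 : t ^ (n - 1) = t ^ ((n : ℝ) - p - 1) * t ^ p := by
      rw [← Real.rpow_natCast, ← Real.rpow_add ht0]; congr 1
      rw [Nat.cast_sub (by omega)]; push_cast; ring
    have hP : 0 < t ^ p := Real.rpow_pos_of_pos ht0 _
    have h' := mul_le_mul_of_nonneg_left h hT.le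
    rw [abs_mul, abs_of_pos ht0, Real.mul_rpow ht0.le (abs_nonneg _)] at h'
    have hpH : (n : ℝ) - p = - (p * H) := by rw [hH]; field_simp; ring
    refine (le_of_eq ?_).trans (h'.trans (le_of_eq ?_))
    · rw [e1, hl_abs_rpow_split hp2 (f t)]
      rw [show ((n:ℝ) - p) * t ^ ((n : ℝ) - p - 1) = - (p * H) * t ^ ((n : ℝ) - p - 1) by rw [← hpH]]
      field_simp
      ring
    · rw [e2]
      field_simp

lemma hl_1d {n : ℕ} (hn : 2 ≤ n) {p H : ℝ} (hp : (n : ℝ) < p) (hH : H = (p - n) / p)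
    {f f' : ℝ → ℝ} (hf : ∀ t, HasDerivAt f (f' t) t) (hf' : Continuous f')
    {δ R s : ℝ} (hδ : 0 < δ) (hδs : δ ≤ s) (hsR : s ≤ R) (hfδ : f δ = 0) (hfR : f R = 0)
    (hz1 : ∀ t, t ≤ δ → 0 < t → f' t = 0 ∧ f t = 0) (hz2 : ∀ t, R < t → f' t = 0 ∧ f t = 0) :
    2 * H ^ (p - 2) / p * (1 + Real.log (R / s))⁻¹ * (|f s| ^ p * s ^ ((n : ℝ) - p)) ≤
    ∫ t in Ioi 0, t ^ (n - 1) * (|f' t| ^ p - H ^ p * (|f t| ^ p / t ^ p)) := by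
  have hn' : (2 : ℝ) ≤ n := by exact_mod_cast hn
  have hp0 : p ≠ 0 := by linarith
  have hs : 0 < s := hδ.trans_le hδs
  have hR : 0 < R := hs.trans_le hsR
  have A := hl_1d_gen hn hp hH hf hf' hδ hδs (φ := fun _ => 0)
    (fun t _ => by simpa using hasDerivAt_const t (0:ℝ))
  have B := hl_1d_gen hn hp hH hf hf' hs hsR (φ := fun t => (1 + Real.log (R / t))⁻¹)
    (fun t ht => by
      have ht0 : 0 < t := hs.trans_le ht.1
      have hL : 0 ≤ Real.log (R / t) := Real.log_nonneg (by rw [le_div_iff₀ ht0]; linarith [ht.2])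
      have h1 : HasDerivAt (fun t : ℝ => R / t) (-R / t ^ 2) t := by
        simpa [div_eq_mul_inv] using (hasDerivAt_inv ht0.ne').const_mul R
      have h2 := ((h1.log (by positivity)).const_add 1).inv (by positivity)
      refine h2.congr_deriv ?_
      have hL1 : 1 + Real.log (R / t) ≠ 0 := by positivity
      show _ = ((1 + Real.log (R / t))⁻¹) ^ 2 / t
      generalize 1 + Real.log (R / t) = L at hL1
      field_simp)
  have hint : ∀ a b : ℝ, 0 < a → a ≤ b → IntervalIntegrable
      (fun t => t ^ (n - 1) * (|f' t| ^ p - H ^ p * (|f t| ^ p / t ^ p))) volume a b := by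
    intro a b ha hab
    apply ContinuousOn.intervalIntegrable
    rw [uIcc_of_le hab]
    have hfc : Continuous f := continuous_iff_continuousAt.2 fun t => (hf t).continuousAt
    have hp0 : 0 ≤ p := by linarith
    intro t ht
    have ht0 : 0 < t := ha.trans_le ht.1
    apply ContinuousAt.continuousWithinAt
    have h1 : ContinuousAt (fun t : ℝ => t ^ p) t := Real.continuousAt_rpow_const _ _ (Or.inl ht0.ne')
    have h2 : Continuous (fun t : ℝ => |f t| ^ p) := hfc.abs.rpow_const (fun _ => Or.inr hp0)
    have h3 : Continuous (fun t : ℝ => |f' t| ^ p) := hf'.abs.rpow_const (fun _ => Or.inr hp0)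
    exact (continuousAt_id.pow _).mul (h3.continuousAt.sub
      (continuousAt_const.mul (h2.continuousAt.div h1 (Real.rpow_pos_of_pos ht0 _).ne')))
  have hadd := intervalIntegral.integral_add_adjacent_intervals
    (hint δ s hδ hδs) (hint s R hs hsR)
  have hset : ∫ t in Ioi 0, t ^ (n - 1) * (|f' t| ^ p - H ^ p * (|f t| ^ p / t ^ p)) =
      ∫ t in δ..R, t ^ (n - 1) * (|f' t| ^ p - H ^ p * (|f t| ^ p / t ^ p)) := by
    rw [intervalIntegral.integral_of_le (hδs.trans hsR)]
    apply setIntegral_eq_of_subset_of_forall_sdiff_eq_zero measurableSet_Ioi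
    · intro t ht; exact hδ.trans ht.1
    · intro t ht
      have : f' t = 0 ∧ f t = 0 := by
        by_cases h : t ≤ δ
        · exact hz1 t h ht.1
        · apply hz2 t
          by_contra h2
          exact ht.2 ⟨not_le.1 h, not_lt.1 h2⟩
      rw [this.1, this.2, abs_zero, Real.zero_rpow hp0]
      simp
  rw [hset, ← hadd]
  rw [hfδ, abs_zero, Real.zero_rpow hp0] at A
  rw [hfR, abs_zero, Real.zero_rpow hp0] at B
  linarith

lemma hl_polar {E : Type*} [NormedAddCommGroup E] [NormedSpace ℝ E] [FiniteDimensional ℝ E]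
    [Nontrivial E] [MeasureSpace E] [BorelSpace E] [(volume : Measure E).IsAddHaarMeasure]
    {n : ℕ} (hfr : Module.finrank ℝ E = n) (F G : E → ℝ)
    (hF : Integrable F) (hG : Integrable G)
    (h : ∀ σ : E, ‖σ‖ = 1 →
      ∫ t in Ioi (0:ℝ), t ^ (n - 1) * F (t • σ) ≤ ∫ t in Ioi (0:ℝ), t ^ (n - 1) * G (t • σ)) :
    ∫ x, F x ≤ ∫ x, G x := by
  have key : ∀ F : E → ℝ, Integrable F →
      Integrable (fun z : sphere (0:E) 1 × Ioi (0:ℝ) => F (z.2.1 • z.1.1))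
        ((volume : Measure E).toSphere.prod (.volumeIoiPow (n - 1))) ∧
      ∫ x, F x = ∫ z : sphere (0:E) 1 × Ioi (0:ℝ), F (z.2.1 • z.1.1)
        ∂((volume : Measure E).toSphere.prod (.volumeIoiPow (n - 1))) := by
    intro F hF
    have mp := (volume : Measure E).measurePreserving_homeomorphUnitSphereProd
    rw [hfr] at mp
    have hh : ∀ x : ({0}ᶜ : Set E), F (((homeomorphUnitSphereProd E x).2.1) • (homeomorphUnitSphereProd E x).1.1) = F x := by
      intro x
      have : ‖x.1‖ ≠ 0 := norm_ne_zero_iff.2 x.2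
      simp [smul_smul, this]
    constructor
    · have := mp.integrable_comp_emb (g := fun z : sphere (0:E) 1 × Ioi (0:ℝ) => F (z.2.1 • z.1.1))
        (Homeomorph.measurableEmbedding _)
      rw [← this]
      have e : (fun z : sphere (0:E) 1 × Ioi (0:ℝ) => F (z.2.1 • z.1.1)) ∘ (homeomorphUnitSphereProd E) = F ∘ Subtype.val := by
        funext x; exact hh x
      rw [e, ← integrableOn_iff_comap_subtypeVal (measurableSet_singleton _).compl]
      exact hF.integrableOn
    · rw [← mp.integral_comp (Homeomorph.measurableEmbedding _)]
      simp_rw [hh]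
      rw [integral_subtype_comap (measurableSet_singleton _).compl fun x ↦ F x,
        restrict_compl_singleton]
  obtain ⟨f1, f2⟩ := key F hF
  obtain ⟨g1, g2⟩ := key G hG
  have rad : ∀ g : ℝ → ℝ, ∫ x : Ioi (0 : ℝ), g x ∂.volumeIoiPow (n - 1) =
      ∫ t in Ioi (0:ℝ), t ^ (n - 1) * g t := by
    intro g
    simp only [Measure.volumeIoiPow, ENNReal.ofReal]
    rw [integral_withDensity_eq_integral_smul,
        integral_subtype_comap measurableSet_Ioi fun a ↦ Real.toNNReal (a ^ (n - 1)) • g a,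
        setIntegral_congr_fun measurableSet_Ioi fun x hx ↦ ?_]
    · rw [NNReal.smul_def, Real.coe_toNNReal _ (pow_nonneg hx.out.le _)]; rfl
    · exact (measurable_subtype_coe.pow_const _).real_toNNReal
  rw [f2, g2, integral_prod _ f1, integral_prod _ g1]
  apply integral_mono f1.integral_prod_left g1.integral_prod_left
  intro σ
  have hσ : ‖(σ : E)‖ = 1 := by simp
  have := h σ hσ
  rw [← rad (fun t => F (t • σ.1)), ← rad (fun t => G (t • σ.1))] at this
  exact this

lemma hl_weight {δ : ℝ} (hδ : 0 < δ) : ∃ K : ℝ, 0 < K ∧ ∀ r R ρ : ℝ, 0 < r → r ≤ R →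
    ∃ W : ℝ → ℝ, IntegrableOn W (Ioi 0) ∧ (∀ s, 0 < s → 0 ≤ W s) ∧
      ∫ s in Ioi 0, W s ≤ K * (1 + Real.log (R / r)) ∧
      ∀ s, 0 < s → s ≤ R → |s - ρ| < r →
        s⁻¹ * (min 1 (s / r)) ^ (2 * δ) * (1 + Real.log (R / s)) ≤ W s := by
  refine ⟨(1 + 1 / δ) / δ + 2, by positivity, ?_⟩
  intro r R ρ hr hrR
  have hR : 0 < R := hr.trans_le hrR
  have hlog : 0 ≤ Real.log (R / r) := Real.log_nonneg (by rw [le_div_iff₀ hr]; linarith)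
  set L := 1 + Real.log (R / r) with hL
  have hL1 : 1 ≤ L := by linarith
  set c₁ := (1 + 1 / δ) * L * r ^ (-δ) with hc₁
  have hc₁0 : 0 ≤ c₁ := by positivity
  have hi1 : IntegrableOn (fun s : ℝ => s ^ (δ - 1)) (Ioc 0 r) := by
    have := (intervalIntegral.intervalIntegrable_rpow' (a := 0) (b := r) (by linarith : -1 < δ - 1))
    rwa [intervalIntegrable_iff_integrableOn_Ioc_of_le hr.le] at this
  have hI1 : Integrable (indicator (Ioc 0 r) (fun s : ℝ => s ^ (δ - 1))) :=
    (integrable_indicator_iff measurableSet_Ioc).2 hi1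
  have hI2 : Integrable (indicator (Ioo (ρ - r) (ρ + r)) (fun _ : ℝ => L / r)) :=
    (integrable_indicator_iff measurableSet_Ioo).2 (by simp)
  have hW1 : Integrable (fun s => c₁ * indicator (Ioc 0 r) (fun s : ℝ => s ^ (δ - 1)) s) :=
    hI1.const_mul _
  have n1 : ∀ s : ℝ, 0 ≤ indicator (Ioc 0 r) (fun s : ℝ => s ^ (δ - 1)) s := by
    intro s
    apply indicator_nonneg
    intro x hx
    have := hx.1
    positivity
  have n2 : ∀ s : ℝ, 0 ≤ indicator (Ioo (ρ - r) (ρ + r)) (fun _ : ℝ => L / r) s := by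
    intro s
    apply indicator_nonneg
    intro x hx
    positivity
  refine ⟨fun s => c₁ * indicator (Ioc 0 r) (fun s : ℝ => s ^ (δ - 1)) s +
    indicator (Ioo (ρ - r) (ρ + r)) (fun _ => L / r) s, (hW1.add hI2).integrableOn, ?_, ?_, ?_⟩
  · intro s hs
    have := n1 s
    have := n2 s
    positivity
  · refine (setIntegral_le_integral (hW1.add hI2) (Filter.Eventually.of_forall fun s => ?_)).trans ?_
    · have := n1 s
      have := n2 s
      show 0 ≤ c₁ * _ + _
      positivity
    · rw [integral_add' hW1 hI2, integral_const_mul, integral_indicator measurableSet_Ioc,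
        integral_indicator measurableSet_Ioo, ← intervalIntegral.integral_of_le hr.le,
        integral_rpow (Or.inl (by linarith))]
      simp only [sub_add_cancel, Real.zero_rpow hδ.ne', sub_zero, integral_const,
        MeasurableSet.univ, measureReal_restrict_apply, univ_inter, smul_eq_mul, Real.volume_real_Ioo]
      rw [show ρ + r - (ρ - r) = 2 * r by ring, max_eq_left (by positivity), hc₁,
        Real.rpow_neg hr.le]
      have : 0 < r ^ δ := by positivity
      apply le_of_eq
      field_simp
  · intro s hs hsR hsρ
    have hmem : s ∈ Ioo (ρ - r) (ρ + r) := by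
      rw [abs_lt] at hsρ; constructor <;> linarith
    by_cases hsr : s ≤ r
    · have hq : 1 ≤ r / s := by rw [le_div_iff₀ hs]; linarith
      have hlog2 : Real.log (R / s) = Real.log (R / r) + Real.log (r / s) := by
        rw [← Real.log_mul (by positivity) (by positivity)]; congr 1; field_simp
      have hl3 := Real.log_le_rpow_div (by positivity : 0 ≤ r / s) hδ
      have hl4 : 1 ≤ (r / s) ^ δ := Real.one_le_rpow hq hδ.le
      have hb : 1 + Real.log (R / s) ≤ (1 + 1 / δ) * L * (r / s) ^ δ := by
        have a1 : L ≤ L * (r / s) ^ δ := le_mul_of_one_le_right (by linarith) hl4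
        have a2 : (r / s) ^ δ / δ ≤ L * ((r / s) ^ δ / δ) :=
          le_mul_of_one_le_left (by positivity) hL1
        calc 1 + Real.log (R / s) = L + Real.log (r / s) := by rw [hlog2, hL]; ring
          _ ≤ L * (r / s) ^ δ + L * ((r / s) ^ δ / δ) := by linarith
          _ = _ := by ring
      have hm : min 1 (s / r) = s / r := min_eq_right (by rw [div_le_one hr]; exact hsr)
      have hi : indicator (Ioc 0 r) (fun s : ℝ => s ^ (δ - 1)) s = s ^ (δ - 1) :=
        indicator_of_mem (show s ∈ Ioc 0 r from ⟨hs, hsr⟩) _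
      rw [hm]
      refine le_trans ?_ (le_add_of_nonneg_right (n2 s))
      rw [hi]
      refine (mul_le_mul_of_nonneg_left hb (by positivity)).trans (le_of_eq ?_)
      rw [hc₁, Real.div_rpow hs.le hr.le, Real.div_rpow hr.le hs.le, Real.rpow_neg hr.le,
        Real.rpow_sub hs, Real.rpow_one, show (2 * δ) = δ + δ by ring, Real.rpow_add hs, Real.rpow_add hr]
      have : 0 < r ^ δ := by positivity
      have : 0 < s ^ δ := by positivity
      field_simp
    · push Not at hsr
      have hm : min 1 (s / r) = 1 := min_eq_left (by rw [le_div_iff₀ hr]; linarith)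
      rw [hm, Real.one_rpow, mul_one]
      refine le_trans ?_ (le_add_of_nonneg_left (mul_nonneg hc₁0 (n1 s)))
      rw [indicator_of_mem hmem]
      have h1 : Real.log (R / s) ≤ Real.log (R / r) :=
        Real.log_le_log (by positivity) (by gcongr)
      rw [div_eq_inv_mul L r]
      have h0 : 0 ≤ Real.log (R / s) := Real.log_nonneg (by rw [le_div_iff₀ hs]; linarith)
      have : s⁻¹ ≤ r⁻¹ := by gcongr
      apply mul_le_mul this (by linarith) (by positivity) (by positivity)

section
variable {n : ℕ} {u : EuclideanSpace ℝ (Fin n) → ℝ}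

lemma hl_cont_quot (hu : Continuous u) (h0 : (0 : EuclideanSpace ℝ (Fin n)) ∉ tsupport u)
    {a : ℝ} (ha : 0 < a) : Continuous (fun x => |u x| ^ a / ‖x‖ ^ a) := by
  rw [continuous_iff_continuousAt]
  intro x
  by_cases hx : x = 0
  · subst hx
    have : (fun x => |u x| ^ a / ‖x‖ ^ a) =ᶠ[nhds 0] fun _ => 0 := by
      filter_upwards [notMem_tsupport_iff_eventuallyEq.1 h0] with y hy
      rw [hy]; simp [Real.zero_rpow ha.ne']
    exact continuousAt_const.congr this.symm
  · have hx' : ‖x‖ ≠ 0 := norm_ne_zero_iff.2 hx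
    have h1 : Continuous (fun x => |u x| ^ a) := hu.abs.rpow_const (fun _ => Or.inr ha.le)
    have h2 : Continuous (fun x : EuclideanSpace ℝ (Fin n) => ‖x‖ ^ a) :=
      continuous_norm.rpow_const (fun _ => Or.inr ha.le)
    exact h1.continuousAt.div h2.continuousAt (by positivity)

lemma hl_supp_quot (hu : HasCompactSupport u) {a : ℝ} (ha : 0 < a) :
    HasCompactSupport (fun x => |u x| ^ a / ‖x‖ ^ a) := by
  apply HasCompactSupport.intro hu
  intro x hx
  rw [image_eq_zero_of_notMem_tsupport hx]; simp [Real.zero_rpow ha.ne']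

lemma hl_mainA (hn : 2 ≤ n) {p H : ℝ} (hp : (n : ℝ) < p) (hH : H = (p - n) / p)
    {δ : ℝ} (hδ : 0 < δ) : ∃ K : ℝ, 0 < K ∧ ∀ r R ρ : ℝ, 0 < r → r ≤ R →
    ∀ u : EuclideanSpace ℝ (Fin n) → ℝ, ContDiff ℝ (⊤ : ℕ∞) u →
      HasCompactSupport u → (0 : EuclideanSpace ℝ (Fin n)) ∉ tsupport u →
      tsupport u ⊆ ball 0 R →
      Integrable (fun x => (if |‖x‖ - ρ| < r then (min 1 (‖x‖ / r)) ^ (2 * δ) else 0) *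
        (|u x| ^ p / ‖x‖ ^ p)) ∧
      ∫ x, (if |‖x‖ - ρ| < r then (min 1 (‖x‖ / r)) ^ (2 * δ) else 0) *
        (|u x| ^ p / ‖x‖ ^ p) ≤ K * (1 + Real.log (R / r)) *
        ∫ x, (‖fderiv ℝ u x‖ ^ p - H ^ p * (|u x| ^ p / ‖x‖ ^ p)) := by
  obtain ⟨K, hK, hKW⟩ := hl_weight hδ
  have hn' : (2 : ℝ) ≤ n := by exact_mod_cast hn
  have hp0 : 0 < p := by linarith
  have hH0 : 0 < H := by rw [hH]; apply div_pos <;> linarith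
  set κ := 2 * H ^ (p - 2) / p with hκ
  have hκ0 : 0 < κ := by positivity
  refine ⟨K / κ, by positivity, ?_⟩
  intro r R ρ hr hrR u hu hc h0 hsub
  have hR : 0 < R := hr.trans_le hrR
  have hlog : 0 ≤ Real.log (R / r) := Real.log_nonneg (by rw [le_div_iff₀ hr]; linarith)
  obtain ⟨W, hWi, hW0, hWK, hW⟩ := hKW r R ρ hr hrR
  have hquot := hl_cont_quot hu.continuous h0 hp0
  have hquots := hl_supp_quot hc hp0
  have hfd : Continuous (fderiv ℝ u) := hu.continuous_fderiv (by simp)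
  have hfdp : Continuous (fun x => ‖fderiv ℝ u x‖ ^ p) := hfd.norm.rpow_const (fun _ => Or.inr hp0.le)
  have hfz : ∀ x ∉ tsupport u, fderiv ℝ u x = 0 := fun x hx => fderiv_of_notMem_tsupport ℝ hx
  have hfps : HasCompactSupport (fun x => ‖fderiv ℝ u x‖ ^ p) := by
    apply HasCompactSupport.intro hc
    intro x hx
    rw [hfz x hx, norm_zero, Real.zero_rpow hp0.ne']
  have hF : Integrable (fun x => (if |‖x‖ - ρ| < r then (min 1 (‖x‖ / r)) ^ (2 * δ) else 0) *
        (|u x| ^ p / ‖x‖ ^ p)) := by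
    refine (hquot.integrable_of_hasCompactSupport hquots).bdd_mul (c := 1) ?_ ?_
    · apply Measurable.aestronglyMeasurable
      apply Measurable.ite
      · exact measurableSet_lt (by fun_prop) (by fun_prop)
      · fun_prop
      · fun_prop
    · refine Filter.Eventually.of_forall fun x => ?_
      have hm0 : 0 ≤ min 1 (‖x‖ / r) := le_min zero_le_one (by positivity)
      split_ifs
      · rw [Real.norm_of_nonneg (by positivity)]
        exact Real.rpow_le_one hm0 (min_le_left _ _) (by positivity)
      · simp
  have hΦ : Integrable (fun x => ‖fderiv ℝ u x‖ ^ p - H ^ p * (|u x| ^ p / ‖x‖ ^ p)) :=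
    (hfdp.integrable_of_hasCompactSupport hfps).sub
      ((hquot.integrable_of_hasCompactSupport hquots).const_mul _)
  refine ⟨hF, ?_⟩
  rw [← integral_const_mul]
  have : Nontrivial (Fin n) := Fin.nontrivial_iff_two_le.2 hn
  refine hl_polar (n := n) (by simp) _ _ hF (hΦ.const_mul _) ?_
  intro σ hσ
  -- inner radius
  obtain ⟨d, hd, hdb⟩ : ∃ d > 0, ball (0 : EuclideanSpace ℝ (Fin n)) d ⊆ (tsupport u)ᶜ :=
    Metric.isOpen_iff.1 (isClosed_tsupport u).isOpen_compl 0 h0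
  set f : ℝ → ℝ := fun t => u (t • σ) with hf
  set f' : ℝ → ℝ := fun t => fderiv ℝ u (t • σ) σ with hf'
  have hder : ∀ t, HasDerivAt f (f' t) t := by
    intro t
    have h1 : HasFDerivAt u (fderiv ℝ u (t • σ)) (t • σ) :=
      (hu.differentiable (by simp) _).hasFDerivAt
    have h2 : HasDerivAt (fun t : ℝ => t • σ) σ t := by
      simpa using (hasDerivAt_id t).smul_const σ
    exact h1.comp_hasDerivAt t h2
  have hsm : Continuous (fun t : ℝ => t • σ) := by fun_prop
  have hf'c : Continuous f' := (hfd.comp hsm).clm_apply continuous_const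
  have hnorm : ∀ t : ℝ, ‖t • σ‖ = |t| := by intro t; rw [norm_smul, hσ, mul_one, Real.norm_eq_abs]
  have hzout : ∀ t : ℝ, R ≤ |t| → t • σ ∉ tsupport u := by
    intro t ht hmem
    have := hsub hmem
    rw [mem_ball_zero_iff, hnorm] at this
    linarith
  have hzin : ∀ t : ℝ, |t| < d → t • σ ∉ tsupport u := by
    intro t ht
    exact hdb (by rw [mem_ball_zero_iff, hnorm]; exact ht)
  have hz : ∀ t : ℝ, t • σ ∉ tsupport u → f' t = 0 ∧ f t = 0 := by
    intro t ht
    constructor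
    · simp only [hf', hfz _ ht]; simp
    · exact image_eq_zero_of_notMem_tsupport (f := u) ht
  set B := ∫ t in Ioi (0:ℝ), t ^ (n - 1) *
    (‖fderiv ℝ u (t • σ)‖ ^ p - H ^ p * (|u (t • σ)| ^ p / ‖t • σ‖ ^ p)) with hB
  have hcs : ∀ g : ℝ → ℝ, Continuous g → (∀ t : ℝ, t • σ ∉ tsupport u → g t = 0) →
      IntegrableOn (fun t => t ^ (n - 1) * g t) (Ioi 0) := by
    intro g hg hgz
    apply Integrable.integrableOn
    apply Continuous.integrable_of_hasCompactSupport (by fun_prop)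
    apply HasCompactSupport.intro (K := Icc (-R) R) isCompact_Icc
    intro t ht
    rw [hgz t (hzout t _), mul_zero]
    by_contra h
    push Not at h
    rw [abs_lt] at h
    exact ht ⟨h.1.le, h.2.le⟩
  have hqσ : Continuous (fun t : ℝ => |f t| ^ p / |t| ^ p) := by
    have := hquot.comp hsm
    refine this.congr fun t => ?_
    simp only [Function.comp, hnorm, hf]
  have key : ∀ s, 0 < s → s ≤ R → κ * (1 + Real.log (R / s))⁻¹ * (|f s| ^ p * s ^ ((n : ℝ) - p)) ≤ B := by
    intro s hs hsR
    set d' := min (d / 2) s with hd'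
    have hd'0 : 0 < d' := lt_min (by positivity) hs
    have hd'd : d' < d := (min_le_left _ _).trans_lt (by linarith)
    have hneg : ∀ t : ℝ, t ≤ d' → 0 < t → f' t = 0 ∧ f t = 0 := by
      intro t ht ht0
      exact hz t (hzin t (by rw [abs_of_pos ht0]; linarith))
    have h1 := hl_1d hn hp hH hder hf'c hd'0 (min_le_right _ _) hsR
      (hneg d' le_rfl hd'0).2 (hz R (hzout R (le_abs_self R))).2
      hneg
      (fun t ht => hz t (hzout t (ht.le.trans (le_abs_self t))))
    refine h1.trans ?_
    rw [hB]
    have habs : ∀ t ∈ Ioi (0:ℝ), t ^ (n - 1) * (|f' t| ^ p - H ^ p * (|f t| ^ p / t ^ p)) =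
        t ^ (n - 1) * (|f' t| ^ p - H ^ p * (|f t| ^ p / |t| ^ p)) := by
      intro t ht
      rw [abs_of_pos (show 0 < t from ht)]
    rw [setIntegral_congr_fun measurableSet_Ioi habs]
    simp only [hnorm]
    apply setIntegral_mono_on _ _ measurableSet_Ioi
    · intro t ht
      have ht0 : (0:ℝ) < t := ht
      have : |f' t| ≤ ‖fderiv ℝ u (t • σ)‖ := by
        have := (fderiv ℝ u (t • σ)).le_opNorm σ
        rwa [hσ, mul_one, Real.norm_eq_abs] at this
      have hle : |f' t| ^ p ≤ ‖fderiv ℝ u (t • σ)‖ ^ p :=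
        Real.rpow_le_rpow (abs_nonneg _) this hp0.le
      apply mul_le_mul_of_nonneg_left _ (by positivity)
      simp only [hf]
      linarith
    · apply hcs
      · exact (hf'c.abs.rpow_const (fun _ => Or.inr hp0.le)).sub (continuous_const.mul hqσ)
      · intro t ht
        rw [(hz t ht).1, (hz t ht).2]; simp [Real.zero_rpow hp0.ne']
    · apply hcs
      · exact (hfdp.comp hsm).sub (continuous_const.mul hqσ)
      · intro t ht
        rw [hfz _ ht, image_eq_zero_of_notMem_tsupport ht]; simp [Real.zero_rpow hp0.ne']
  have hB0 : 0 ≤ B := by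
    have := key R hR le_rfl
    rw [(hz R (hzout R (le_abs_self R))).2] at this
    simpa [Real.zero_rpow hp0.ne'] using this
  calc ∫ t in Ioi (0:ℝ), t ^ (n - 1) * ((if |‖t • σ‖ - ρ| < r then (min 1 (‖t • σ‖ / r)) ^ (2 * δ) else 0) *
        (|u (t • σ)| ^ p / ‖t • σ‖ ^ p)) ≤ ∫ t in Ioi (0:ℝ), B / κ * W t := by
        apply integral_mono_of_nonneg
        · refine (ae_restrict_mem measurableSet_Ioi).mono fun t ht => ?_
          have ht0 : (0:ℝ) < t := ht
          have hm0 : 0 ≤ min 1 (‖t • σ‖ / r) := le_min zero_le_one (by positivity)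
          show 0 ≤ t ^ (n - 1) * (_ * _)
          split_ifs <;> positivity
        · exact hWi.const_mul _
        · refine (ae_restrict_mem measurableSet_Ioi).mono fun t ht => ?_
          have ht0 : (0:ℝ) < t := ht
          have hR0 : 0 ≤ B / κ * W t := mul_nonneg (by positivity) (hW0 t ht0)
          simp only [hnorm, abs_of_pos ht0]
          split_ifs with hρ
          · by_cases htR : t ≤ R
            · have h1 := hW t ht0 htR hρ
              have h2 := key t ht0 htR
              have hlog2 : 0 ≤ Real.log (R / t) := Real.log_nonneg (by rw [le_div_iff₀ ht0]; linarith)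
              have hL : 0 < 1 + Real.log (R / t) := by linarith
              have h3 : |f t| ^ p * t ^ ((n : ℝ) - p) ≤ B / κ * (1 + Real.log (R / t)) := by
                rw [mul_assoc, mul_comm, ← le_div_iff₀ hκ0, inv_mul_le_iff₀ hL] at h2
                linarith
              have e2 : t ^ (n - 1) / t ^ p = t⁻¹ * t ^ ((n : ℝ) - p) := by
                rw [← Real.rpow_natCast, ← Real.rpow_neg_one t, ← Real.rpow_add ht0, ← Real.rpow_sub ht0]
                congr 1
                rw [Nat.cast_sub (by omega)]; push_cast; ring
              have hm0 : 0 ≤ min 1 (t / r) := le_min zero_le_one (by positivity)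
              calc t ^ (n - 1) * ((min 1 (t / r)) ^ (2 * δ) * (|u (t • σ)| ^ p / t ^ p))
                  = (t ^ (n - 1) / t ^ p) * (min 1 (t / r)) ^ (2 * δ) * |f t| ^ p := by
                    simp only [hf]; ring
                _ = t⁻¹ * (min 1 (t / r)) ^ (2 * δ) * (|f t| ^ p * t ^ ((n : ℝ) - p)) := by
                    rw [e2]; ring
                _ ≤ t⁻¹ * (min 1 (t / r)) ^ (2 * δ) * (B / κ * (1 + Real.log (R / t))) := by
                    gcongr
                _ = B / κ * (t⁻¹ * (min 1 (t / r)) ^ (2 * δ) * (1 + Real.log (R / t))) := by ring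
                _ ≤ B / κ * W t := by gcongr
            · have := (hz t (hzout t ((not_le.1 htR).le.trans (le_abs_self t)))).2
              simp only [hf] at this
              rw [this, abs_zero, Real.zero_rpow hp0.ne']
              simpa using hR0
          · simpa using hR0
    _ = B / κ * ∫ t in Ioi (0:ℝ), W t := integral_const_mul _ _
    _ ≤ B / κ * (K * (1 + Real.log (R / r))) := by gcongr
    _ = K / κ * (1 + Real.log (R / r)) * B := by ring
    _ = _ := by
        rw [hB, ← integral_const_mul]
        congr 1
        funext t
        ring

end

lemma hl_B {n : ℕ} (hn : 2 ≤ n) (c : EuclideanSpace ℝ (Fin n)) {r : ℝ} (hr : 0 < r) :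
    IntegrableOn (fun x => (min 1 (‖x‖ / r))⁻¹) (ball c r) ∧
    ∫ x in ball c r, (min 1 (‖x‖ / r))⁻¹ ≤ (1 + n / (n - 1)) *
      ((volume (Metric.ball (0 : EuclideanSpace ℝ (Fin n)) 1)).toReal * r ^ n) := by
  have : Nontrivial (Fin n) := Fin.nontrivial_iff_two_le.2 hn
  have hn' : (2 : ℝ) ≤ n := by exact_mod_cast hn
  set g : ℝ → ℝ := indicator (Ioo 0 r) (fun y => r / y) with hg
  have hgn : ∀ y, 0 ≤ g y := by
    intro y
    apply indicator_nonneg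
    intro x hx
    have := hx.1
    positivity
  have hfr : Module.finrank ℝ (EuclideanSpace ℝ (Fin n)) = n := by simp
  have hrad : (fun y : ℝ => y ^ (n - 1) * g y) = indicator (Ioo 0 r) (fun y => r * y ^ (n - 2)) := by
    funext y
    by_cases hy : y ∈ Ioo 0 r
    · rw [hg, indicator_of_mem hy, indicator_of_mem hy]
      have := hy.1
      rw [show n - 1 = (n - 2) + 1 by omega, pow_succ]
      field_simp
    · rw [hg, indicator_of_notMem hy, indicator_of_notMem hy, mul_zero]
  have hradi : Integrable (indicator (Ioo 0 r) (fun y : ℝ => r * y ^ (n - 2))) := by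
    rw [integrable_indicator_iff measurableSet_Ioo]
    have : Continuous (fun y : ℝ => r * y ^ (n - 2)) := by fun_prop
    exact (this.continuousOn.integrableOn_Icc (a := 0) (b := r)).mono_set Ioo_subset_Icc_self
  have hgi : Integrable (fun x : EuclideanSpace ℝ (Fin n) => g ‖x‖) := by
    rw [integrable_fun_norm_addHaar, hfr]
    simp only [smul_eq_mul]
    rw [hrad]
    exact hradi.integrableOn
  have hgint : ∫ x : EuclideanSpace ℝ (Fin n), g ‖x‖ = n / (n - 1) *
      ((volume (Metric.ball (0 : EuclideanSpace ℝ (Fin n)) 1)).toReal * r ^ n) := by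
    rw [integral_fun_norm_addHaar, hfr]
    simp only [smul_eq_mul, nsmul_eq_mul]
    rw [hrad, setIntegral_indicator measurableSet_Ioo, inter_eq_right.2 (fun x hx => hx.1),
      ← integral_Ioc_eq_integral_Ioo, ← intervalIntegral.integral_of_le hr.le,
      intervalIntegral.integral_const_mul, integral_pow, Measure.real]
    have e1 : ((n - 2 : ℕ) : ℝ) + 1 = n - 1 := by rw [Nat.cast_sub hn]; push_cast; ring
    have e2 : r ^ n = r * r ^ (n - 2 + 1) := by
      rw [← pow_succ']; congr 1; omega
    rw [e1, e2]
    have : (n : ℝ) - 1 ≠ 0 := by linarith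
    simp
    field_simp
  have hle : ∀ᵐ x : EuclideanSpace ℝ (Fin n), (min 1 (‖x‖ / r))⁻¹ ≤ 1 + g ‖x‖ := by
    have hne : ∀ᵐ x : EuclideanSpace ℝ (Fin n), x ≠ 0 := by
      simp [ae_iff]
    filter_upwards [hne] with x hx
    have hx' : 0 < ‖x‖ := norm_pos_iff.2 hx
    by_cases h : ‖x‖ < r
    · rw [min_eq_right (by rw [div_le_one hr]; exact h.le), hg, indicator_of_mem (show ‖x‖ ∈ Ioo 0 r from ⟨hx', h⟩), inv_div]
      linarith
    · rw [min_eq_left (by rw [le_div_iff₀ hr]; linarith), inv_one]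
      linarith [hgn ‖x‖]
  have h1g : IntegrableOn (fun x : EuclideanSpace ℝ (Fin n) => 1 + g ‖x‖) (ball c r) := by
    apply Integrable.add
    · exact integrableOn_const (measure_ball_lt_top.ne)
    · exact hgi.integrableOn
  have hm0 : ∀ x : EuclideanSpace ℝ (Fin n), 0 ≤ (min 1 (‖x‖ / r))⁻¹ := fun x =>
    inv_nonneg.2 (le_min zero_le_one (by positivity))
  have hI : IntegrableOn (fun x => (min 1 (‖x‖ / r))⁻¹) (ball c r) := by
    refine Integrable.mono' h1g ?_ ?_
    · apply Measurable.aestronglyMeasurable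
      fun_prop
    · refine ae_restrict_of_ae (hle.mono fun x hx => ?_)
      rwa [Real.norm_of_nonneg (hm0 x)]
  refine ⟨hI, ?_⟩
  calc ∫ x in ball c r, (min 1 (‖x‖ / r))⁻¹ ≤ ∫ x in ball c r, (1 + g ‖x‖) :=
        integral_mono_ae hI h1g (ae_restrict_of_ae hle)
    _ = (∫ x in ball c r, (1:ℝ)) + ∫ x in ball c r, g ‖x‖ :=
        integral_add (integrableOn_const (measure_ball_lt_top.ne)) hgi.integrableOn
    _ ≤ (volume (Metric.ball (0 : EuclideanSpace ℝ (Fin n)) 1)).toReal * r ^ n +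
        ∫ x : EuclideanSpace ℝ (Fin n), g ‖x‖ := by
        apply add_le_add
        · rw [setIntegral_const, smul_eq_mul, mul_one, Measure.real,
            Measure.addHaar_ball _ _ hr.le, hfr, ENNReal.toReal_mul,
            ENNReal.toReal_ofReal (by positivity), mul_comm]
        · exact setIntegral_le_integral hgi (Filter.Eventually.of_forall fun x => hgn _)
    _ = _ := by rw [hgint]; ring

lemma hl_holder {n : ℕ} (hn : 2 ≤ n) {p q : ℝ} (hp : (n : ℝ) < p) (hq1 : 1 ≤ q) (hqp : q < p)
    {δ : ℝ} (hδ : 2 * δ = (p - q) / q)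
    (u : EuclideanSpace ℝ (Fin n) → ℝ) (hu : Continuous u)
    (h0 : (0 : EuclideanSpace ℝ (Fin n)) ∉ tsupport u)
    (c : EuclideanSpace ℝ (Fin n)) {r : ℝ} (hr : 0 < r)
    (hint : Integrable (fun x => (if |‖x‖ - ‖c‖| < r then (min 1 (‖x‖ / r)) ^ (2 * δ) else 0) *
        (|u x| ^ p / ‖x‖ ^ p))) :
    ∫ x in ball c r, |u x| ^ q / ‖x‖ ^ q ≤
      (∫ x, (if |‖x‖ - ‖c‖| < r then (min 1 (‖x‖ / r)) ^ (2 * δ) else 0) *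
        (|u x| ^ p / ‖x‖ ^ p)) ^ (q / p) *
      (∫ x in ball c r, (min 1 (‖x‖ / r))⁻¹) ^ ((p - q) / p) := by
  have hq0 : 0 < q := by linarith
  have hp0 : 0 < p := by linarith
  have hpq : 0 < p - q := by linarith
  set m : EuclideanSpace ℝ (Fin n) → ℝ := fun x => min 1 (‖x‖ / r) with hm
  have hm0 : ∀ x, 0 ≤ m x := fun x => le_min zero_le_one (by positivity)
  have hmm : Measurable m := by fun_prop
  have hconj : (p / q).HolderConjugate (p / (p - q)) := by
    rw [Real.holderConjugate_iff]
    refine ⟨by rw [lt_div_iff₀ hq0]; linarith, by field_simp; ring⟩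
  set f1 : EuclideanSpace ℝ (Fin n) → ℝ := fun x => |u x| ^ q / ‖x‖ ^ q * m x ^ ((p - q) / p) with hf1
  set f2 : EuclideanSpace ℝ (Fin n) → ℝ := fun x => (m x)⁻¹ ^ ((p - q) / p) with hf2
  have hf10 : ∀ x, 0 ≤ f1 x := fun x => by have := hm0 x; positivity
  have hf20 : ∀ x, 0 ≤ f2 x := fun x => by have := hm0 x; positivity
  have hp1 : ∀ x, f1 x ^ (p / q) = m x ^ (2 * δ) * (|u x| ^ p / ‖x‖ ^ p) := by
    intro x
    have := hm0 x
    rw [hf1]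
    simp only
    rw [Real.mul_rpow (by positivity) (by positivity), Real.div_rpow (by positivity) (by positivity),
      ← Real.rpow_mul (by positivity), ← Real.rpow_mul (by positivity), ← Real.rpow_mul (by positivity),
      mul_div_cancel₀ _ hq0.ne', hδ, mul_comm]
    congr 2
    field_simp
  have hp2 : ∀ x, f2 x ^ (p / (p - q)) = (m x)⁻¹ := by
    intro x
    have := hm0 x
    rw [hf2]
    simp only
    rw [← Real.rpow_mul (by positivity), div_mul_div_cancel₀ (by positivity), div_self (by positivity), Real.rpow_one]
  have hprod : ∀ x, f1 x * f2 x = |u x| ^ q / ‖x‖ ^ q := by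
    intro x
    by_cases hx : x = 0
    · subst hx
      simp only [hf1]
      rw [image_eq_zero_of_notMem_tsupport h0]
      simp [Real.zero_rpow hq0.ne']
    · have hmx : 0 < m x := lt_min zero_lt_one (by have := norm_pos_iff.2 hx; positivity)
      simp only [hf1, hf2]
      rw [Real.inv_rpow hmx.le]
      have : 0 < m x ^ ((p - q) / p) := by positivity
      field_simp
  have hif : ∀ x ∈ ball c r, (if |‖x‖ - ‖c‖| < r then (min 1 (‖x‖ / r)) ^ (2 * δ) else 0) *
        (|u x| ^ p / ‖x‖ ^ p) = f1 x ^ (p / q) := by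
    intro x hx
    rw [if_pos, hp1]
    rw [mem_ball, dist_eq_norm] at hx
    exact (abs_norm_sub_norm_le x c).trans_lt hx
  have hI1 : IntegrableOn (fun x => f1 x ^ (p / q)) (ball c r) :=
    hint.integrableOn.congr_fun hif measurableSet_ball
  have hI2 : IntegrableOn (fun x => f2 x ^ (p / (p - q))) (ball c r) := by
    simp_rw [hp2]; exact (hl_B hn c hr).1
  have hmem1 : MemLp f1 (ENNReal.ofReal (p / q)) (volume.restrict (ball c r)) := by
    rw [← integrable_norm_rpow_iff]
    · rw [ENNReal.toReal_ofReal (by positivity)]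
      simp_rw [Real.norm_of_nonneg (hf10 _)]
      exact hI1
    · apply Measurable.aestronglyMeasurable
      have := hu.measurable
      fun_prop
    · simp; positivity
    · simp
  have hmem2 : MemLp f2 (ENNReal.ofReal (p / (p - q))) (volume.restrict (ball c r)) := by
    rw [← integrable_norm_rpow_iff]
    · rw [ENNReal.toReal_ofReal (by positivity)]
      simp_rw [Real.norm_of_nonneg (hf20 _)]
      exact hI2
    · apply Measurable.aestronglyMeasurable
      fun_prop
    · simp; positivity
    · simp
  have H := integral_mul_le_Lp_mul_Lq_of_nonneg hconj (Filter.Eventually.of_forall hf10)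
    (Filter.Eventually.of_forall hf20) hmem1 hmem2
  simp_rw [hprod, hp2, one_div_div] at H
  refine H.trans ?_
  have hle : ∫ x in ball c r, f1 x ^ (p / q) ≤
      ∫ x, (if |‖x‖ - ‖c‖| < r then (min 1 (‖x‖ / r)) ^ (2 * δ) else 0) *
        (|u x| ^ p / ‖x‖ ^ p) := by
    rw [← setIntegral_congr_fun measurableSet_ball hif]
    apply setIntegral_le_integral hint
    refine Filter.Eventually.of_forall fun x => ?_
    have := hm0 x
    simp only [hm] at this
    show (0:ℝ) ≤ _ * _
    split_ifs <;> positivity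
  have h1 : 0 ≤ ∫ x in ball c r, f1 x ^ (p / q) :=
    integral_nonneg fun x => Real.rpow_nonneg (hf10 x) _
  have h2 : 0 ≤ ∫ x in ball c r, (m x)⁻¹ := integral_nonneg fun x => inv_nonneg.2 (hm0 x)
  gcongr

/-- local logarithmic improvement of the Hardy inequality, `p > n`. -/
theorem hardy_local_improvement (n : ℕ) (hn : 2 ≤ n) (p q : ℝ)
    (hp : (n : ℝ) < p) (hq1 : 1 ≤ q) (hqp : q < p) :
    ∃ Θ C : ℝ, 0 ≤ Θ ∧ 0 < C ∧
      ∀ Ω : Set (EuclideanSpace ℝ (Fin n)), IsOpen Ω → IsConnected Ω →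
        Bornology.IsBounded Ω → (0 : EuclideanSpace ℝ (Fin n)) ∈ Ω →
        ∀ u : EuclideanSpace ℝ (Fin n) → ℝ, ContDiff ℝ (⊤ : ℕ∞) u →
          HasCompactSupport u → tsupport u ⊆ Ω \ {0} →
          ∀ (c : EuclideanSpace ℝ (Fin n)) (r : ℝ), 0 < r → r < Metric.diam Ω →
          ∀ D : ℝ, Real.exp Θ * Metric.diam Ω ≤ D →
            r ^ ((n : ℝ) / p) * ((1 - Real.log (r / D))⁻¹) ^ (1 / p) *
              ((1 / ((volume (Metric.ball (0 : EuclideanSpace ℝ (Fin n)) 1)).toReal * r ^ (n : ℕ))) *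
                ∫ x in Metric.ball c r, |u x| ^ q / ‖x‖ ^ q) ^ (1 / q) ≤
              C * ((∫ x in Ω, ‖fderiv ℝ u x‖ ^ p)
                - ((p - n) / p) ^ p * ∫ x in Ω, |u x| ^ p / ‖x‖ ^ p) ^ (1 / p) := by
  have hn' : (2 : ℝ) ≤ n := by exact_mod_cast hn
  have hq0 : 0 < q := by linarith
  have hp0 : 0 < p := by linarith
  have hpq : 0 < p - q := by linarith
  set δ := (p - q) / q / 2 with hδ
  have hδ0 : 0 < δ := by positivity
  obtain ⟨K, hK, hmain⟩ := hl_mainA hn hp rfl hδ0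
  set V := (volume (Metric.ball (0 : EuclideanSpace ℝ (Fin n)) 1)).toReal with hV
  have hV0 : 0 < V := ENNReal.toReal_pos (measure_ball_pos _ _ one_pos).ne' measure_ball_lt_top.ne
  set K2 : ℝ := 1 + n / (n - 1) with hK2
  have hK20 : 0 < K2 := by
    have : (0:ℝ) < n - 1 := by linarith
    positivity
  refine ⟨0, (K / V) ^ (1 / p) * K2 ^ (1 / q - 1 / p), le_rfl, by positivity, ?_⟩
  intro Ω hΩ _ hbdd h0 u hu hc hsub c r hr hrR D hD
  rw [Real.exp_zero, one_mul] at hD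
  set R := Metric.diam Ω with hRdef
  have hR : 0 < R := hr.trans hrR
  have hD0 : 0 < D := hR.trans_le hD
  have h0u : (0 : EuclideanSpace ℝ (Fin n)) ∉ tsupport u := fun h => (hsub h).2 rfl
  have hball : tsupport u ⊆ ball 0 R := by
    intro x hx
    have hxΩ := (hsub hx).1
    have hx0 : x ≠ 0 := fun h => (hsub hx).2 h
    have hxn : 0 < ‖x‖ := norm_pos_iff.2 hx0
    obtain ⟨e, he, heb⟩ := Metric.isOpen_iff.1 hΩ x hxΩ
    have hy : (1 + e / (2 * ‖x‖)) • x ∈ Ω := by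
      apply heb
      rw [mem_ball, dist_eq_norm, add_smul, one_smul, add_sub_cancel_left, norm_smul,
        Real.norm_of_nonneg (by positivity)]
      have : e / (2 * ‖x‖) * ‖x‖ = e / 2 := by field_simp
      linarith
    have := Metric.dist_le_diam_of_mem hbdd hy h0
    rw [dist_zero_right, norm_smul, Real.norm_of_nonneg (by positivity)] at this
    have e2 : (1 + e / (2 * ‖x‖)) * ‖x‖ = ‖x‖ + e / 2 := by field_simp
    rw [mem_ball_zero_iff]
    linarith
  obtain ⟨hint, hA⟩ := hmain r R ‖c‖ hr hrR.le u hu hc h0u hball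
  have hH := hl_holder hn hp hq1 hqp (δ := δ) (by rw [hδ]; ring) u hu.continuous h0u c hr hint
  have hB := (hl_B hn c hr).2
  rw [← hV, ← hK2] at hB
  -- rewrite the deficit
  have hz : ∀ x ∉ Ω, u x = 0 ∧ fderiv ℝ u x = 0 := by
    intro x hx
    have : x ∉ tsupport u := fun h => hx (hsub h).1
    exact ⟨image_eq_zero_of_notMem_tsupport this, fderiv_of_notMem_tsupport ℝ this⟩
  have i1 : ∫ x in Ω, ‖fderiv ℝ u x‖ ^ p = ∫ x, ‖fderiv ℝ u x‖ ^ p := by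
    apply setIntegral_eq_integral_of_forall_compl_eq_zero
    intro x hx
    rw [(hz x hx).2, norm_zero, Real.zero_rpow hp0.ne']
  have i2 : ∫ x in Ω, |u x| ^ p / ‖x‖ ^ p = ∫ x, |u x| ^ p / ‖x‖ ^ p := by
    apply setIntegral_eq_integral_of_forall_compl_eq_zero
    intro x hx
    rw [(hz x hx).1, abs_zero, Real.zero_rpow hp0.ne', zero_div]
  have j1 : Integrable (fun x => ‖fderiv ℝ u x‖ ^ p) := by
    apply Continuous.integrable_of_hasCompactSupport
    · exact (hu.continuous_fderiv (by simp)).norm.rpow_const (fun _ => Or.inr hp0.le)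
    · apply HasCompactSupport.intro hc
      intro x hx
      rw [fderiv_of_notMem_tsupport ℝ hx, norm_zero, Real.zero_rpow hp0.ne']
  have j2 : Integrable (fun x => |u x| ^ p / ‖x‖ ^ p) :=
    (hl_cont_quot hu.continuous h0u hp0).integrable_of_hasCompactSupport (hl_supp_quot hc hp0)
  rw [i1, i2]
  rw [integral_sub j1 (j2.const_mul _), integral_const_mul] at hA
  set I := (∫ x, ‖fderiv ℝ u x‖ ^ p) - ((p - n) / p) ^ p * ∫ x, |u x| ^ p / ‖x‖ ^ p with hI
  set A := ∫ x, (if |‖x‖ - ‖c‖| < r then (min 1 (‖x‖ / r)) ^ (2 * δ) else 0) *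
        (|u x| ^ p / ‖x‖ ^ p) with hAdef
  set B := ∫ x in ball c r, (min 1 (‖x‖ / r))⁻¹ with hBdef
  set N := ∫ x in Metric.ball c r, |u x| ^ q / ‖x‖ ^ q with hN
  have hA0 : 0 ≤ A := by
    apply integral_nonneg
    intro x
    have : 0 ≤ min 1 (‖x‖ / r) := le_min zero_le_one (by positivity)
    show (0:ℝ) ≤ _ * _
    split_ifs <;> positivity
  have hB0 : 0 ≤ B := integral_nonneg fun x =>
    inv_nonneg.2 (le_min zero_le_one (by positivity))
  have hN0 : 0 ≤ N := integral_nonneg fun x => by positivity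
  have hlog : 0 ≤ Real.log (R / r) := Real.log_nonneg (by rw [le_div_iff₀ hr]; linarith)
  set L := 1 + Real.log (R / r) with hL
  have hL1 : 1 ≤ L := by linarith
  have hLD : L ≤ 1 - Real.log (r / D) := by
    rw [hL, Real.log_div hR.ne' hr.ne', Real.log_div hr.ne' hD0.ne']
    have := Real.log_le_log hR hD
    linarith
  have hI0 : 0 ≤ I := by
    have : 0 ≤ K * L * I := hA0.trans hA
    exact nonneg_of_mul_nonneg_right this (by positivity)
  have hX : ((1 - Real.log (r / D))⁻¹) ^ (1 / p) ≤ (L⁻¹) ^ (1 / p) := by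
    gcongr
    exact inv_nonneg.2 (by linarith)
  have hVr : 0 < V * r ^ n := by positivity
  have hN1 : N ≤ (K * L * I) ^ (q / p) * (K2 * (V * r ^ n)) ^ ((p - q) / p) := by
    refine hH.trans ?_
    gcongr
  have hN2 : (1 / (V * r ^ n) * N) ^ (1 / q) ≤
      (K * L * I) ^ (1 / p) * K2 ^ (1 / q - 1 / p) * (V * r ^ n) ^ (- (1 / p)) := by
    have : 1 / (V * r ^ n) * N ≤
        1 / (V * r ^ n) * ((K * L * I) ^ (q / p) * (K2 * (V * r ^ n)) ^ ((p - q) / p)) := by gcongr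
    refine (Real.rpow_le_rpow (by positivity) this (by positivity)).trans (le_of_eq ?_)
    have hKLI : 0 ≤ K * L * I := by positivity
    generalize K * L * I = Y at hKLI
    generalize V * r ^ n = Z at hVr
    rw [Real.mul_rpow (by positivity) (by positivity), Real.mul_rpow (by positivity) (by positivity),
      ← Real.rpow_mul hKLI, ← Real.rpow_mul (by positivity), Real.mul_rpow hK20.le hVr.le,
      one_div Z, ← Real.rpow_neg_one Z, ← Real.rpow_mul hVr.le]
    have e1 : q / p * (1 / q) = 1 / p := by field_simp
    have e2 : (p - q) / p * (1 / q) = 1 / q - 1 / p := by field_simp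
    have e3 : -(1 / p) = -1 * (1 / q) + (1 / q - 1 / p) := by ring
    rw [e1, e2, e3, Real.rpow_add hVr]
    ring
  have hr1 : (V * r ^ n) ^ (-(1 / p)) = V⁻¹ ^ (1 / p) * (r ^ ((n : ℝ) / p))⁻¹ := by
    rw [Real.mul_rpow hV0.le (by positivity), Real.inv_rpow hV0.le, ← Real.rpow_neg hV0.le,
      ← Real.rpow_natCast, ← Real.rpow_mul hr.le, ← Real.rpow_neg hr.le]
    congr 2
    ring
  have hrp : 0 < r ^ ((n : ℝ) / p) := by positivity
  calc r ^ ((n : ℝ) / p) * ((1 - Real.log (r / D))⁻¹) ^ (1 / p) * (1 / (V * r ^ n) * N) ^ (1 / q)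
      ≤ r ^ ((n : ℝ) / p) * (L⁻¹) ^ (1 / p) *
        ((K * L * I) ^ (1 / p) * K2 ^ (1 / q - 1 / p) * (V * r ^ n) ^ (- (1 / p))) := by
        gcongr
    _ = (K / V) ^ (1 / p) * K2 ^ (1 / q - 1 / p) * I ^ (1 / p) := by
        rw [hr1, Real.mul_rpow (by positivity) hI0, Real.mul_rpow hK.le (by positivity),
          Real.inv_rpow (by positivity), div_eq_mul_inv K V, Real.mul_rpow hK.le (by positivity)]
        have : 0 < L ^ (1 / p) := by positivity
        field_simp
end
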